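/- arXiv:1603.09218 — 3 statements merged into one kernel-verified Lean document; each statement's English description precedes it below -/
import Mathlib

section
/- The family of elements e(Y₁+Y₂)^{a₁}(Y₁Y₂)^{a₂}(t⁻²Y₁X₁+Y₂X₂)^{ε}(X₁+X₂)^{b₁}(X₁X₂)^{b₂}e, with ε ∈ {0,1}, a₁, b₁ ∈ ℕ₀ and a₂, b₂ ∈ ℤ (negative exponents interpreted via the inverse generators), is linearly independent over ℂ in H_{t,q}. -/
noncomputable section

/-- Generators of the double affine Hecke algebra of type GL₂:
`T, T⁻¹, X₁, X₁⁻¹, X₂, X₂⁻¹, Y₁, Y₁⁻¹, Y₂, Y₂⁻¹`. -/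
inductive DGen : Type
  | T | Ti | X1 | X1i | X2 | X2i | Y1 | Y1i | Y2 | Y2i

abbrev FD : Type := FreeAlgebra ℂ DGen

def gD : DGen → FD := FreeAlgebra.ι ℂ

/-- The defining relations of the double affine Hecke algebra `H_{t,q}` of type GL₂. -/
inductive DRel (q t : ℂ) : FD → FD → Prop
  | TTi : DRel q t (gD .T * gD .Ti) 1
  | TiT : DRel q t (gD .Ti * gD .T) 1
  | X1X1i : DRel q t (gD .X1 * gD .X1i) 1
  | X1iX1 : DRel q t (gD .X1i * gD .X1) 1
  | X2X2i : DRel q t (gD .X2 * gD .X2i) 1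
  | X2iX2 : DRel q t (gD .X2i * gD .X2) 1
  | Y1Y1i : DRel q t (gD .Y1 * gD .Y1i) 1
  | Y1iY1 : DRel q t (gD .Y1i * gD .Y1) 1
  | Y2Y2i : DRel q t (gD .Y2 * gD .Y2i) 1
  | Y2iY2 : DRel q t (gD .Y2i * gD .Y2) 1
  | TX1T : DRel q t (gD .T * gD .X1 * gD .T) (gD .X2)
  | TiY1Ti : DRel q t (gD .Ti * gD .Y1 * gD .Ti) (gD .Y2)
  | Xcomm : DRel q t (gD .X1 * gD .X2) (gD .X2 * gD .X1)
  | Ycomm : DRel q t (gD .Y1 * gD .Y2) (gD .Y2 * gD .Y1)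
  | YXX : DRel q t (gD .Y1 * (gD .X1 * gD .X2)) ((q ^ 2) • (gD .X1 * gD .X2 * gD .Y1))
  | X1iY2 : DRel q t (gD .X1i * gD .Y2) (gD .Y2 * gD .X1i * gD .Ti * gD .Ti)
  | hecke : DRel q t ((gD .T + algebraMap ℂ FD t⁻¹) * (gD .T - algebraMap ℂ FD t)) 0

/-- The double affine Hecke algebra `H_{t,q}` of type GL₂. -/
abbrev DAHA (q t : ℂ) : Type := RingQuot (DRel q t)

variable (q t : ℂ)

def T : DAHA q t := RingQuot.mkAlgHom ℂ (DRel q t) (gD .T)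
def Ti : DAHA q t := RingQuot.mkAlgHom ℂ (DRel q t) (gD .Ti)
def X1 : DAHA q t := RingQuot.mkAlgHom ℂ (DRel q t) (gD .X1)
def X1i : DAHA q t := RingQuot.mkAlgHom ℂ (DRel q t) (gD .X1i)
def X2 : DAHA q t := RingQuot.mkAlgHom ℂ (DRel q t) (gD .X2)
def X2i : DAHA q t := RingQuot.mkAlgHom ℂ (DRel q t) (gD .X2i)
def Y1 : DAHA q t := RingQuot.mkAlgHom ℂ (DRel q t) (gD .Y1)
def Y1i : DAHA q t := RingQuot.mkAlgHom ℂ (DRel q t) (gD .Y1i)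
def Y2 : DAHA q t := RingQuot.mkAlgHom ℂ (DRel q t) (gD .Y2)
def Y2i : DAHA q t := RingQuot.mkAlgHom ℂ (DRel q t) (gD .Y2i)

/-- Integer powers of an element `x` with designated inverse `xi`:
negative exponents are interpreted via the inverse generator. -/
def zp {M : Type*} [Monoid M] (x xi : M) : ℤ → M
  | Int.ofNat n => x ^ n
  | Int.negSucc n => xi ^ (n + 1)

/-- The symmetrizing idempotent `e = (1 + tT)/(1 + t²)` of the DAHA. -/
def eSym (q t : ℂ) : DAHA q t := ((1 + t ^ 2)⁻¹ : ℂ) • (1 + t • T q t)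

/-- The family `e(Y₁+Y₂)^{a₁}(Y₁Y₂)^{a₂}(t⁻²Y₁X₁+Y₂X₂)^{ε}(X₁+X₂)^{b₁}(X₁X₂)^{b₂}e`,
indexed by `a₁, b₁ ∈ ℕ`, `a₂, b₂ ∈ ℤ`, `ε ∈ {0,1}`. -/
def pbwSph (q t : ℂ) : ℕ × ℤ × Fin 2 × ℕ × ℤ → DAHA q t :=
  fun x => eSym q t *
    ((Y1 q t + Y2 q t) ^ x.1 * zp (Y1 q t * Y2 q t) (Y1i q t * Y2i q t) x.2.1 *
      ((t⁻¹ ^ 2) • (Y1 q t * X1 q t) + Y2 q t * X2 q t) ^ (x.2.2.1 : ℕ) *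
      (X1 q t + X2 q t) ^ x.2.2.2.1 * zp (X1 q t * X2 q t) (X1i q t * X2i q t) x.2.2.2.2) *
    eSym q t


namespace Pf

set_option linter.unusedVariables false
set_option linter.unusedSimpArgs false

abbrev V : Type := ℤ → ℤ → Bool → ℂ

def xa (q x y : ℂ) (i j : ℤ) : Bool → ℂ
  | false => (q ^ 2) ^ i * x
  | true => (q ^ 2) ^ j * y

def xb (q x y : ℂ) (i j : ℤ) : Bool → ℂ
  | false => (q ^ 2) ^ j * y
  | true => (q ^ 2) ^ i * x

def cc (q t x y : ℂ) (i j : ℤ) (b : Bool) : ℂ :=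
  (t * xa q x y i j b - t⁻¹ * xb q x y i j b) / (xa q x y i j b - xb q x y i j b)

def oT (q t x y : ℂ) : Module.End ℂ V where
  toFun F := fun i j b => t * F i j b + cc q t x y i j b * (F i j (!b) - F i j b)
  map_add' F G := by ext i j b; simp; ring
  map_smul' a F := by ext i j b; simp; ring

def oTi (q t x y : ℂ) : Module.End ℂ V where
  toFun F := fun i j b => t⁻¹ * F i j b + cc q t x y i j b * (F i j (!b) - F i j b)
  map_add' F G := by ext i j b; simp; ring
  map_smul' a F := by ext i j b; simp; ring

def oM (m : ℤ → ℤ → Bool → ℂ) : Module.End ℂ V where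
  toFun F := fun i j b => m i j b * F i j b
  map_add' F G := by ext i j b; simp; ring
  map_smul' a F := by ext i j b; simp; ring

def pv (F : V) (i j : ℤ) : Bool → ℂ
  | false => F i (j + 1) true
  | true => F (i + 1) j false

def pvi (F : V) (i j : ℤ) : Bool → ℂ
  | false => F (i - 1) j true
  | true => F i (j - 1) false

def oP : Module.End ℂ V where
  toFun F := pv F
  map_add' F G := by ext i j b; cases b <;> simp [pv]
  map_smul' a F := by ext i j b; cases b <;> simp [pv]

def oPi : Module.End ℂ V where
  toFun F := pvi F
  map_add' F G := by ext i j b; cases b <;> simp [pvi]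
  map_smul' a F := by ext i j b; cases b <;> simp [pvi]

def oX1 (q x y : ℂ) := oM (xa q x y)
def oX2 (q x y : ℂ) := oM (xb q x y)
def oX1i (q x y : ℂ) := oM (fun i j b => (xa q x y i j b)⁻¹)
def oX2i (q x y : ℂ) := oM (fun i j b => (xb q x y i j b)⁻¹)

def Gen (q t x y : ℂ) : Prop :=
  x ≠ 0 ∧ y ≠ 0 ∧ (∀ n : ℤ, (q ^ 2) ^ n * x ≠ y) ∧ (∀ n : ℤ, t * ((q ^ 2) ^ n * x) ≠ t⁻¹ * y) ∧
    (∀ n : ℤ, t * ((q ^ 2) ^ n * y) ≠ t⁻¹ * x)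

lemma sub_ne {q t x y : ℂ} (hq : q ≠ 0) (h : Gen q t x y) (i j : ℤ) :
    (q ^ 2) ^ i * x - (q ^ 2) ^ j * y ≠ 0 := by
  have hq2 : q ^ 2 ≠ 0 := pow_ne_zero 2 hq
  intro h0
  apply h.2.2.1 (i - j)
  rw [zpow_sub₀ hq2]
  have := zpow_ne_zero j hq2
  field_simp
  linear_combination h0

lemma Gen.symm {q t x y : ℂ} (hq : q ≠ 0) (h : Gen q t x y) : Gen q t y x := by
  refine ⟨h.2.1, h.1, ?_, h.2.2.2.2, h.2.2.2.1⟩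
  intro n hn
  have := sub_ne hq h 0 n
  apply this; rw [hn]; simp

lemma c_add {q t x y : ℂ} (hq : q ≠ 0) (h : Gen q t x y) (i j : ℤ) :
    cc q t x y i j true = t + t⁻¹ - cc q t x y i j false := by
  have h1 := sub_ne hq h i j
  have h2 : (q ^ 2) ^ j * y - (q ^ 2) ^ i * x ≠ 0 := by
    intro h0; apply h1; linear_combination -h0
  simp only [cc, xa, xb]
  rw [eq_sub_iff_add_eq, div_add_div _ _ h2 h1, div_eq_iff (mul_ne_zero h2 h1)]
  ring

lemma c_mul {q t x y : ℂ} (hq : q ≠ 0) (h : Gen q t x y) (i j : ℤ) :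
    cc q t x y i j false * ((q ^ 2) ^ i * x - (q ^ 2) ^ j * y) =
      t * ((q ^ 2) ^ i * x) - t⁻¹ * ((q ^ 2) ^ j * y) := by
  simp only [cc, xa, xb]
  rw [div_mul_cancel₀ _ (sub_ne hq h i j)]

lemma c_shift {q t x y : ℂ} (hq : q ≠ 0) (i j k : ℤ) (b : Bool) :
    cc q t x y (i + k) (j + k) b = cc q t x y i j b := by
  have hq2 : q ^ 2 ≠ 0 := pow_ne_zero 2 hq
  have hk := zpow_ne_zero k hq2
  cases b <;> simp only [cc, xa, xb, zpow_add₀ hq2]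
  · symm; rw [← mul_div_mul_left _ _ hk]; congr 1 <;> ring
  · symm; rw [← mul_div_mul_left _ _ hk]; congr 1 <;> ring


lemma rTi {q t x y : ℂ} (hq : q ≠ 0) (ht : t ≠ 0) (h : Gen q t x y) :
    oTi q t x y = oT q t x y - (t - t⁻¹) • 1 := by
  ext F i j b
  simp [oT, oTi]; ring

lemma rTTi {q t x y : ℂ} (hq : q ≠ 0) (ht : t ≠ 0) (h : Gen q t x y) :
    oT q t x y * oTi q t x y = 1 := by
  have e1 : t * t⁻¹ = 1 := mul_inv_cancel₀ ht
  ext F i j b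
  cases b <;> simp only [oT, oTi, Module.End.mul_apply, LinearMap.coe_mk, AddHom.coe_mk,
    Module.End.one_apply, Bool.not_false, Bool.not_true, c_add hq h] <;> linear_combination F i j _ * e1

lemma rTiT {q t x y : ℂ} (hq : q ≠ 0) (ht : t ≠ 0) (h : Gen q t x y) :
    oTi q t x y * oT q t x y = 1 := by
  have e1 : t * t⁻¹ = 1 := mul_inv_cancel₀ ht
  ext F i j b
  cases b <;> simp only [oT, oTi, Module.End.mul_apply, LinearMap.coe_mk, AddHom.coe_mk,
    Module.End.one_apply, Bool.not_false, Bool.not_true, c_add hq h] <;> linear_combination F i j _ * e1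

lemma rTX {q t x y : ℂ} (hq : q ≠ 0) (ht : t ≠ 0) (h : Gen q t x y) :
    oT q t x y * oX1 q x y = oX2 q x y * oTi q t x y := by
  ext F i j b
  have := c_mul hq h i j
  cases b <;> simp only [oT, oTi, oX1, oX2, oM, Module.End.mul_apply, LinearMap.coe_mk, AddHom.coe_mk,
    Module.End.one_apply, Bool.not_false, Bool.not_true, c_add hq h, xa, xb]
  · linear_combination -F i j _ * this
  · linear_combination -F i j _ * this

lemma rTX1T {q t x y : ℂ} (hq : q ≠ 0) (ht : t ≠ 0) (h : Gen q t x y) :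
    oT q t x y * oX1 q x y * oT q t x y = oX2 q x y := by
  rw [rTX hq ht h, mul_assoc, rTiT hq ht h, mul_one]

lemma rX11 {q t x y : ℂ} (hq : q ≠ 0) (ht : t ≠ 0) (h : Gen q t x y) :
    oX1 q x y * oX1i q x y = 1 := by
  have hq2 : q ^ 2 ≠ 0 := pow_ne_zero 2 hq
  ext F i j b
  have := h.1; have := h.2.1; have := zpow_ne_zero i hq2; have := zpow_ne_zero j hq2
  cases b <;> simp only [oX1, oX1i, oM, Module.End.mul_apply, LinearMap.coe_mk, AddHom.coe_mk,
    Module.End.one_apply, xa, xb] <;> field_simp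
lemma rX22 {q t x y : ℂ} (hq : q ≠ 0) (ht : t ≠ 0) (h : Gen q t x y) :
    oX2 q x y * oX2i q x y = 1 := by
  have hq2 : q ^ 2 ≠ 0 := pow_ne_zero 2 hq
  ext F i j b
  have := h.1; have := h.2.1; have := zpow_ne_zero i hq2; have := zpow_ne_zero j hq2
  cases b <;> simp only [oX2, oX2i, oM, Module.End.mul_apply, LinearMap.coe_mk, AddHom.coe_mk,
    Module.End.one_apply, xa, xb] <;> field_simp

lemma rMM {q t x y : ℂ} (hq : q ≠ 0) (ht : t ≠ 0) (h : Gen q t x y) (m n : ℤ → ℤ → Bool → ℂ) : oM m * oM n = oM n * oM m := by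
  ext F i j b
  simp only [oM, Module.End.mul_apply, LinearMap.coe_mk, AddHom.coe_mk]; ring

lemma rPPi {q t x y : ℂ} (hq : q ≠ 0) (ht : t ≠ 0) (h : Gen q t x y) :
    oP * oPi = 1 := by
  ext F i j b
  cases b <;> simp [oP, oPi, pv, pvi]
lemma rPiP {q t x y : ℂ} (hq : q ≠ 0) (ht : t ≠ 0) (h : Gen q t x y) :
    oPi * oP = 1 := by
  ext F i j b
  cases b <;> simp [oP, oPi, pv, pvi]

lemma rPX2 {q t x y : ℂ} (hq : q ≠ 0) (ht : t ≠ 0) (h : Gen q t x y) :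
    oP * oX2 q x y = oX1 q x y * oP := by
  ext F i j b
  cases b <;> simp [oP, oX1, oX2, oM, pv, xa, xb]

lemma rPX1 {q t x y : ℂ} (hq : q ≠ 0) (ht : t ≠ 0) (h : Gen q t x y) :
    oP * oX1 q x y = q ^ 2 • (oX2 q x y * oP) := by
  have hq2 : q ^ 2 ≠ 0 := pow_ne_zero 2 hq
  ext F i j b
  cases b <;> simp [oP, oX1, oX2, oM, pv, xa, xb, zpow_add₀ hq2] <;> ring

lemma rPPT {q t x y : ℂ} (hq : q ≠ 0) (ht : t ≠ 0) (h : Gen q t x y) :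
    oP * oP * oT q t x y = oT q t x y * (oP * oP) := by
  ext F i j b
  cases b <;> simp [oP, oT, pv, c_shift hq]



def gens (q t x y : ℂ) : DGen → Module.End ℂ V
  | .T => oT q t x y
  | .Ti => oTi q t x y
  | .X1 => oX1 q x y
  | .X1i => oX1i q x y
  | .X2 => oX2 q x y
  | .X2i => oX2i q x y
  | .Y1 => oT q t x y * oP
  | .Y1i => oPi * oTi q t x y
  | .Y2 => oP * oTi q t x y
  | .Y2i => oT q t x y * oPi

lemma rep_exists {q t x y : ℂ} (hq : q ≠ 0) (ht : t ≠ 0) (h : Gen q t x y) :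
    ∃ ρ : DAHA q t →ₐ[ℂ] Module.End ℂ V, ∀ g,
      ρ (RingQuot.mkAlgHom ℂ (DRel q t) (gD g)) = gens q t x y g := by
  have TTi := rTTi hq ht h
  have TiT := rTiT hq ht h
  have PPi := rPPi hq ht h
  have PiP := rPiP hq ht h
  have X11 := rX11 hq ht h
  have X22 := rX22 hq ht h
  have PPT := rPPT hq ht h
  have PX1 := rPX1 hq ht h
  have PX2 := rPX2 hq ht h
  have TXT := rTX1T hq ht h
  have Ti_def := rTi hq ht h
  have MM := rMM hq ht h
  have X11' : oX1i q x y * oX1 q x y = 1 := by rw [← X11]; exact MM _ _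
  have X22' : oX2i q x y * oX2 q x y = 1 := by rw [← X22]; exact MM _ _
  have XX : oX1 q x y * oX2 q x y = oX2 q x y * oX1 q x y := MM _ _
  have hlift : ∀ g, FreeAlgebra.lift ℂ (gens q t x y) (gD g) = gens q t x y g := fun g => by
    simp [gD]
  have key : ∀ ⦃a b : FD⦄, DRel q t a b →
      FreeAlgebra.lift ℂ (gens q t x y) a = FreeAlgebra.lift ℂ (gens q t x y) b := by
    generalize hA : oT q t x y = A at *
    generalize hB : oTi q t x y = B at *
    generalize hC : oX1 q x y = C at *
    generalize hD : oX2 q x y = D at *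
    generalize hCi : oX1i q x y = Ci at *
    generalize hDi : oX2i q x y = Di at *
    generalize hP : oP = P at *
    generalize hPi : oPi = Q at *
    intro a b r
    cases r <;> simp only [map_mul, map_add, map_sub, map_smul, map_one, map_zero, hlift, gens,
      AlgHom.commutes, hA, hB, hC, hD, hCi, hDi, hP, hPi]
    case TTi => exact TTi
    case TiT => exact TiT
    case X1X1i => exact X11
    case X1iX1 => exact X11'
    case X2X2i => exact X22
    case X2iX2 => exact X22'
    case Y1Y1i => rw [show A * P * (Q * B) = A * (P * Q) * B by noncomm_ring, PPi, mul_one, TTi]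
    case Y1iY1 => rw [show Q * B * (A * P) = Q * (B * A) * P by noncomm_ring, TiT, mul_one, PiP]
    case Y2Y2i => rw [show P * B * (A * Q) = P * (B * A) * Q by noncomm_ring, TiT, mul_one, PPi]
    case Y2iY2 => rw [show A * Q * (P * B) = A * (Q * P) * B by noncomm_ring, PiP, mul_one, TTi]
    case TX1T => exact TXT
    case TiY1Ti => rw [show B * (A * P) * B = (B * A) * P * B by noncomm_ring, TiT, one_mul]
    case Xcomm => exact XX
    case Ycomm =>
      rw [show A * P * (P * B) = A * (P * P) * B by noncomm_ring, ← PPT, mul_assoc, TTi,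
        show P * B * (A * P) = P * (B * A) * P by noncomm_ring, TiT, mul_one, mul_one]
    case YXX =>
      have e1 : P * (C * D) = q ^ 2 • (C * D * P) := by
        rw [← mul_assoc, PX1, smul_mul_assoc, mul_assoc, PX2, ← mul_assoc, XX]
      have e2 : A * (C * D) = C * D * A := by
        have e3 : A * C = D * B := by rw [← TXT, mul_assoc, TTi, mul_one]
        have e4 : B * D = C * A := by rw [← TXT, ← mul_assoc, ← mul_assoc, TiT, one_mul]
        rw [← mul_assoc, e3, mul_assoc, e4, ← mul_assoc, XX]
      rw [mul_assoc, e1, mul_smul_comm, ← mul_assoc, e2, mul_assoc (C * D)]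
    case X1iY2 =>
      have e1 : Ci * P = P * Di := by
        calc Ci * P = Ci * (P * (D * Di)) := by rw [X22, mul_one]
          _ = Ci * (P * D) * Di := by noncomm_ring
          _ = (Ci * C) * P * Di := by rw [PX2]; noncomm_ring
          _ = P * Di := by rw [X11', one_mul]
      have e2 : B * Ci * B = Di := by
        calc B * Ci * B = B * Ci * B * (D * Di) := by rw [X22, mul_one]
          _ = B * Ci * (B * A) * C * A * Di := by rw [← TXT]; noncomm_ring
          _ = B * (Ci * C) * A * Di := by rw [TiT]; noncomm_ring
          _ = Di := by rw [X11', mul_one, TiT, one_mul]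
      rw [← mul_assoc, e1, ← e2]; noncomm_ring
    case hecke =>
      rw [Ti_def] at TTi
      simp only [Algebra.algebraMap_eq_smul_one]
      have e0 : A * A = 1 + (t - t⁻¹) • A := by
        rw [mul_sub, mul_smul_comm, mul_one] at TTi
        rw [← TTi]; abel
      rw [add_mul, mul_sub, mul_sub, e0, mul_smul_comm, mul_one, smul_mul_assoc, one_mul,
        smul_mul_assoc, one_mul, smul_smul, inv_mul_cancel₀ ht]
      module
  exact ⟨RingQuot.liftAlgHom ℂ ⟨_, key⟩, fun g => by
    rw [RingQuot.liftAlgHom_mkAlgHom_apply, hlift]⟩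


def sy (g : ℤ → ℤ → ℂ) : V := fun i j _ => g i j

def Dop (q t x y : ℂ) (g : ℤ → ℤ → ℂ) : ℤ → ℤ → ℂ := fun i j =>
  cc q t x y i j false * g (i + 1) j + cc q t x y i j true * g i (j + 1)

def Bop (q t x y : ℂ) (g : ℤ → ℤ → ℂ) : ℤ → ℤ → ℂ := fun i j =>
  q ^ 2 * (cc q t x y i j false * ((q ^ 2) ^ i * x) * g (i + 1) j +
    cc q t x y i j true * ((q ^ 2) ^ j * y) * g i (j + 1))

def oE (q t x y : ℂ) : Module.End ℂ V := ((1 + t ^ 2)⁻¹ : ℂ) • (1 + t • oT q t x y)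

lemma lT {q t x y : ℂ} (g : ℤ → ℤ → ℂ) : oT q t x y (sy g) = t • sy g := by
  ext i j b; simp [oT, sy]

lemma lE {q t x y : ℂ} (ht2 : t ^ 2 ≠ -1) (g : ℤ → ℤ → ℂ) : oE q t x y (sy g) = sy g := by
  have h1 : 1 + t ^ 2 ≠ 0 := fun h => ht2 (by linear_combination h)
  simp only [oE, LinearMap.smul_apply, LinearMap.add_apply, Module.End.one_apply, lT]
  ext i j b
  simp only [Pi.smul_apply, Pi.add_apply, smul_eq_mul]
  field_simp

lemma lD {q t x y : ℂ} (hq : q ≠ 0) (ht : t ≠ 0) (h : Gen q t x y) (g : ℤ → ℤ → ℂ) :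
    (oT q t x y * oP + oP * oTi q t x y) (sy g) = sy (Dop q t x y g) := by
  ext i j b
  cases b <;> simp [oT, oTi, oP, pv, sy, Dop, c_add hq h] <;> ring

lemma lZ {q t x y : ℂ} (hq : q ≠ 0) (ht : t ≠ 0) (h : Gen q t x y) (g : ℤ → ℤ → ℂ) :
    (oT q t x y * oP * (oP * oTi q t x y)) (sy g) = sy (fun i j => g (i + 1) (j + 1)) := by
  rw [show oT q t x y * oP * (oP * oTi q t x y) = oT q t x y * (oP * oP) * oTi q t x y by
    noncomm_ring, ← rPPT hq ht h, mul_assoc, rTTi hq ht h, mul_one]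
  ext i j b
  cases b <;> simp [oP, pv, sy]

lemma lZi {q t x y : ℂ} (hq : q ≠ 0) (ht : t ≠ 0) (h : Gen q t x y) (g : ℤ → ℤ → ℂ) :
    (oPi * oTi q t x y * (oT q t x y * oPi)) (sy g) = sy (fun i j => g (i - 1) (j - 1)) := by
  rw [show oPi * oTi q t x y * (oT q t x y * oPi) = oPi * (oTi q t x y * oT q t x y) * oPi by
    noncomm_ring, rTiT hq ht h, mul_one]
  ext i j b
  cases b <;> simp [oPi, pvi, sy]

lemma lZp {q t x y : ℂ} (hq : q ≠ 0) (ht : t ≠ 0) (h : Gen q t x y) (a : ℤ) (g : ℤ → ℤ → ℂ) :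
    zp (oT q t x y * oP * (oP * oTi q t x y)) (oPi * oTi q t x y * (oT q t x y * oPi)) a (sy g) =
      sy (fun i j => g (i + a) (j + a)) := by
  have h1 : ∀ (n : ℕ) (g : ℤ → ℤ → ℂ), ((oT q t x y * oP * (oP * oTi q t x y)) ^ n) (sy g) =
      sy (fun i j => g (i + n) (j + n)) := by
    intro n
    induction n with
    | zero => intro g; simp
    | succ n ih =>
      intro g
      rw [pow_succ, Module.End.mul_apply, lZ hq ht h, ih]
      congr 1; ext i j; push_cast; congr 1 <;> ring
  have h2 : ∀ (n : ℕ) (g : ℤ → ℤ → ℂ), ((oPi * oTi q t x y * (oT q t x y * oPi)) ^ n) (sy g) =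
      sy (fun i j => g (i - n) (j - n)) := by
    intro n
    induction n with
    | zero => intro g; simp
    | succ n ih =>
      intro g
      rw [pow_succ, Module.End.mul_apply, lZi hq ht h, ih]
      congr 1; ext i j; push_cast; congr 1 <;> ring
  cases a with
  | ofNat n => exact h1 n g
  | negSucc n =>
    simp only [zp, h2]
    congr 1

lemma cD {q t x y : ℂ} (hq : q ≠ 0) (ht : t ≠ 0) (h : Gen q t x y) :
    Commute (oE q t x y) (oT q t x y * oP + oP * oTi q t x y) := by
  have TTi := rTTi hq ht h
  have TiT := rTiT hq ht h
  have Ti_def := rTi hq ht h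
  have key : Commute (oT q t x y) (oT q t x y * oP + oP * oTi q t x y) := by
    generalize oT q t x y = A at *
    generalize oTi q t x y = B at *
    generalize oP = P at *
    have e0 : A * A = 1 + (t - t⁻¹) • A := by
      rw [Ti_def, mul_sub, mul_smul_comm, mul_one] at TTi
      rw [← TTi]; abel
    show A * (A * P + P * B) = (A * P + P * B) * A
    rw [mul_add, add_mul, mul_assoc P, TiT, ← mul_assoc, e0, Ti_def]
    simp only [mul_sub, add_mul, one_mul, mul_one, smul_mul_assoc, mul_smul_comm, mul_assoc]
    abel
  unfold oE
  exact ((Commute.one_left _).add_left (key.smul_left _)).smul_left _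

lemma cZ {q t x y : ℂ} (hq : q ≠ 0) (ht : t ≠ 0) (h : Gen q t x y) (a : ℤ) :
    Commute (oE q t x y)
      (zp (oT q t x y * oP * (oP * oTi q t x y)) (oPi * oTi q t x y * (oT q t x y * oPi)) a) := by
  have TTi := rTTi hq ht h
  have TiT := rTiT hq ht h
  have PPi := rPPi hq ht h
  have PiP := rPiP hq ht h
  have PPT := rPPT hq ht h
  have k1 : Commute (oT q t x y) (oT q t x y * oP * (oP * oTi q t x y)) := by
    rw [show oT q t x y * oP * (oP * oTi q t x y) = oT q t x y * (oP * oP) * oTi q t x y by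
      noncomm_ring, ← PPT, mul_assoc, TTi, mul_one]
    exact PPT.symm
  have k2 : Commute (oT q t x y) (oPi * oTi q t x y * (oT q t x y * oPi)) := by
    rw [show oPi * oTi q t x y * (oT q t x y * oPi) = oPi * (oTi q t x y * oT q t x y) * oPi by
      noncomm_ring, TiT, mul_one]
    generalize oT q t x y = A at *
    generalize oP = P at *
    generalize oPi = Q at *
    show A * (Q * Q) = Q * Q * A
    have e1 : Q * Q * (P * P) = 1 := by
      rw [show Q * Q * (P * P) = Q * (Q * P) * P by noncomm_ring, PiP, mul_one, PiP]
    have e2 : P * P * (Q * Q) = 1 := by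
      rw [show P * P * (Q * Q) = P * (P * Q) * Q by noncomm_ring, PPi, mul_one, PPi]
    calc A * (Q * Q) = Q * Q * (P * P) * A * (Q * Q) := by rw [e1, one_mul]
      _ = Q * Q * (P * P * A) * (Q * Q) := by noncomm_ring
      _ = Q * Q * A * (P * P * (Q * Q)) := by rw [PPT]; noncomm_ring
      _ = Q * Q * A := by rw [e2, mul_one]
  unfold oE
  cases a with
  | ofNat n => exact ((Commute.one_left _).add_left ((k1.pow_right _).smul_left _)).smul_left _
  | negSucc n => exact ((Commute.one_left _).add_left ((k2.pow_right _).smul_left _)).smul_left _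

lemma lA {q t x y : ℂ} (hq : q ≠ 0) (ht : t ≠ 0) (h : Gen q t x y) (ht2 : t ^ 2 ≠ -1)
    (g : ℤ → ℤ → ℂ) :
    oE q t x y (((t⁻¹ ^ 2) • (oT q t x y * oP * oX1 q x y) + oP * oTi q t x y * oX2 q x y) (sy g)) =
      sy (Bop q t x y g) := by
  have h1 : 1 + t ^ 2 ≠ 0 := fun h => ht2 (by linear_combination h)
  have e4 : oTi q t x y * oX2 q x y = oX1 q x y * oT q t x y := by
    rw [← rTX1T hq ht h, ← mul_assoc, ← mul_assoc, rTiT hq ht h, one_mul]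
  rw [mul_assoc oP, e4, ← mul_assoc, mul_assoc (oT q t x y), rPX1 hq ht h]
  ext i j b
  have hc : cc q t x y i j true = (t ^ 2 + 1) / t - cc q t x y i j false := by
    rw [c_add hq h]; field_simp
  cases b <;> simp [oE, oT, oTi, oP, pv, sy, Bop, oX1, oX2, oM, xa, xb, hc] <;> 
    field_simp <;> ring

lemma lX (q x y : ℂ) (n : ℕ) (r : ℂ) (g : ℤ → ℤ → ℂ)  (hg : ∀ i j, ¬ (i = 0 ∧ j = 0) → g i j = 0) :
    ((oX1 q x y + oX2 q x y) ^ n) (r • sy g) = (r * (x + y) ^ n) • sy g := by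
  induction n generalizing r with
  | zero => simp
  | succ n ih =>
    rw [pow_succ, Module.End.mul_apply, show (oX1 q x y + oX2 q x y) (r • sy g) =
      (r * (x + y)) • sy g from ?_, ih]
    · congr 1; ring
    · ext i j b
      by_cases hij : i = 0 ∧ j = 0
      · obtain ⟨rfl, rfl⟩ := hij
        cases b <;> simp [oX1, oX2, oM, xa, xb, sy] <;> ring
      · simp [oX1, oX2, oM, sy, hg i j hij]

lemma lXX (q x y : ℂ) (a : ℤ) (g : ℤ → ℤ → ℂ)  (hg : ∀ i j, ¬ (i = 0 ∧ j = 0) → g i j = 0) :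
    zp (oX1 q x y * oX2 q x y) (oX1i q x y * oX2i q x y) a (sy g) = ((x * y) ^ a) • sy g := by
  have h1 : ∀ (n : ℕ) (r : ℂ), ((oX1 q x y * oX2 q x y) ^ n) (r • sy g) =
      (r * (x * y) ^ n) • sy g := by
    intro n
    induction n with
    | zero => intro r; simp
    | succ n ih =>
      intro r
      rw [pow_succ, Module.End.mul_apply, show (oX1 q x y * oX2 q x y) (r • sy g) =
        (r * (x * y)) • sy g from ?_, ih]
      · congr 1; ring
      · ext i j b
        by_cases hij : i = 0 ∧ j = 0
        · obtain ⟨rfl, rfl⟩ := hij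
          cases b <;> simp [oX1, oX2, oM, xa, xb, sy] <;> ring
        · simp [oX1, oX2, oM, sy, hg i j hij]
  have h2 : ∀ (n : ℕ) (r : ℂ), ((oX1i q x y * oX2i q x y) ^ n) (r • sy g) =
      (r * ((x * y)⁻¹) ^ n) • sy g := by
    intro n
    induction n with
    | zero => intro r; simp
    | succ n ih =>
      intro r
      rw [pow_succ, Module.End.mul_apply, show (oX1i q x y * oX2i q x y) (r • sy g) =
        (r * (x * y)⁻¹) • sy g from ?_, ih]
      · congr 1; ring
      · ext i j b
        by_cases hij : i = 0 ∧ j = 0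
        · obtain ⟨rfl, rfl⟩ := hij
          cases b <;> simp [oX1i, oX2i, oM, xa, xb, sy] <;> ring
        · simp [oX1i, oX2i, oM, sy, hg i j hij]
  cases a with
  | ofNat n =>
    have := h1 n 1
    simp only [one_smul, one_mul] at this
    exact this.trans (by simp)
  | negSucc n =>
    have := h2 (n + 1) 1
    simp only [one_smul, one_mul] at this
    simp only [zp, this, zpow_negSucc, inv_pow]

def dl : ℤ → ℤ → ℂ := fun i j => if i = 0 ∧ j = 0 then 1 else 0

lemma zp_map {M N : Type*} [Monoid M] [Monoid N] (f : M →* N) (a b : M) (n : ℤ) :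
    f (zp a b n) = zp (f a) (f b) n := by
  cases n <;> simp [zp]

lemma rho_pbw {q t x y : ℂ} (hq : q ≠ 0) (ht : t ≠ 0) (h : Gen q t x y) (ht2 : t ^ 2 ≠ -1)
    (ρ : DAHA q t →ₐ[ℂ] Module.End ℂ V)
    (hρ : ∀ g, ρ (RingQuot.mkAlgHom ℂ (DRel q t) (gD g)) = gens q t x y g)
    (u : ℕ × ℤ × Fin 2 × ℕ × ℤ) :
    ρ (pbwSph q t u) (sy dl) = ((x + y) ^ u.2.2.2.1 * (x * y) ^ u.2.2.2.2) •
      sy ((Dop q t x y)^[u.1] (fun i j => ((Bop q t x y)^[(u.2.2.1 : ℕ)] dl) (i + u.2.1) (j + u.2.1))) := by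
  obtain ⟨a1, a2, ε, b1, b2⟩ := u
  have hE : ρ (eSym q t) = oE q t x y := by
    simp [eSym, oE, T, hρ, gens]
  have hz : ∀ a b n, ρ (zp a b n) = zp (ρ a) (ρ b) n := fun a b n => zp_map (ρ.toRingHom.toMonoidHom) a b n
  have hdl : ∀ i j, ¬ (i = 0 ∧ j = 0) → dl i j = 0 := fun i j hij => if_neg hij
  have hDpow : ∀ (n : ℕ) (g : ℤ → ℤ → ℂ), ((oT q t x y * oP + oP * oTi q t x y) ^ n) (sy g) =
      sy ((Dop q t x y)^[n] g) := by
    intro n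
    induction n with
    | zero => intro g; simp
    | succ n ih => intro g; rw [pow_succ, Module.End.mul_apply, lD hq ht h, ih]; rfl
  simp only [pbwSph, map_mul, map_pow, map_add, map_smul, hE, hz]
  simp only [T, Ti, X1, X2, X1i, X2i, Y1, Y2, Y1i, Y2i, hρ, gens]
  have c1 := (cD hq ht h).pow_right a1
  have c2 := cZ hq ht h a2
  have c3 := c1.mul_right c2
  rw [Module.End.mul_apply _ (oE q t x y), lE ht2]
  have e1 : ∀ E S Z A X W : Module.End ℂ V, Commute E (S * Z) →
      E * (S * Z * A * X * W) = S * (Z * (E * (A * (X * W)))) := by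
    intro E S Z A X W hc
    calc E * (S * Z * A * X * W) = (E * (S * Z)) * (A * X * W) := by noncomm_ring
      _ = S * (Z * (E * (A * (X * W)))) := by rw [hc.eq]; noncomm_ring
  rw [e1 _ _ _ _ _ _ c3]
  simp only [Module.End.mul_apply _ _ (sy dl), Module.End.mul_apply _ _ (_ • sy dl)]
  rw [lXX q x y b2 dl hdl, lX q x y b1 _ dl hdl]
  simp only [map_smul]
  have e2 : oE q t x y ((((t⁻¹ ^ 2) • (oT q t x y * oP * oX1 q x y) +
      oP * oTi q t x y * oX2 q x y) ^ (ε : ℕ)) (sy dl)) =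
      sy ((Bop q t x y)^[(ε : ℕ)] dl) := by
    fin_cases ε
    · simp [lE ht2]
    · simpa using lA hq ht h ht2 dl
  rw [e2, lZp hq ht h, hDpow, mul_comm]

lemma D_tri (q t x y : ℂ) (g : ℤ → ℤ → ℂ) (M : ℤ) (hg : ∀ i j, i - j < M → g i j = 0) (n : ℕ) :
    (∀ i j, i - j < M - n → (Dop q t x y)^[n] g i j = 0) ∧
    (∀ i j, i - j = M - n → (Dop q t x y)^[n] g i j =
      (∏ k ∈ Finset.range n, cc q t x y (i + k) j false) * g (i + n) j) := by
  induction n with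
  | zero =>
    refine ⟨fun i j hij => hg i j (by simpa using hij), fun i j hij => by simp⟩
  | succ n ih =>
    constructor
    · intro i j hij
      push_cast at hij
      rw [Function.iterate_succ_apply', Dop, ih.1 _ _ (by lia), ih.1 _ _ (by lia)]; simp
    · intro i j hij
      push_cast at hij
      rw [Function.iterate_succ_apply', Dop, ih.2 (i + 1) j (by lia), ih.1 i (j + 1) (by lia),
        Finset.prod_range_succ']
      push_cast
      simp only [show ∀ k : ℤ, i + 1 + k = i + (k + 1) by intro k; ring, add_zero, mul_zero]
      ring

def Cn (q t x y : ℂ) (N : ℕ) (A : ℤ) : ℂ :=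
  ∏ k ∈ Finset.range N, cc q t x y (-N - A + k) (-A) false

lemma Cn_ne {q t x y : ℂ} (hq : q ≠ 0) (h : Gen q t x y) (N : ℕ) (A : ℤ) :
    Cn q t x y N A ≠ 0 := by
  have hq2 : q ^ 2 ≠ 0 := pow_ne_zero 2 hq
  refine Finset.prod_ne_zero_iff.2 fun k _ => ?_
  generalize (-(N : ℤ) - A + k) = i
  generalize -A = j
  refine div_ne_zero ?_ (sub_ne hq h i j)
  simp only [xa, xb]
  intro h0
  apply h.2.2.2.1 (i - j)
  rw [zpow_sub₀ hq2]
  have := zpow_ne_zero j hq2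
  rw [div_eq_mul_inv]
  have e : (q ^ 2) ^ j * ((q ^ 2) ^ j)⁻¹ = 1 := mul_inv_cancel₀ this
  linear_combination ((q ^ 2) ^ j)⁻¹ * h0 + t⁻¹ * y * e

lemma val_eq {q t x y : ℂ} (hq : q ≠ 0) (N : ℕ) (A : ℤ) (a1 : ℕ) (a2 : ℤ) (ε : Fin 2)
    (hN : a1 + (ε : ℕ) ≤ N) :
    (Dop q t x y)^[a1] (fun i j => ((Bop q t x y)^[(ε : ℕ)] dl) (i + a2) (j + a2)) (-N - A) (-A) =
      if a1 + (ε : ℕ) = N ∧ a2 = A then Cn q t x y N A * x ^ (ε : ℕ) else 0 := by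
  have hq2 : q ^ 2 ≠ 0 := pow_ne_zero 2 hq
  have hdl : ∀ i j, ¬ (i = 0 ∧ j = 0) → dl i j = 0 := fun i j hij => if_neg hij
  fin_cases ε
  · simp only [Fin.zero_eta, Fin.val_zero, add_zero, Function.iterate_zero, id] at hN ⊢
    have h := D_tri q t x y (fun i j => dl (i + a2) (j + a2)) 0
      (fun i j hij => hdl _ _ (by lia)) a1
    rcases hN.lt_or_eq with hlt | rfl
    · rw [h.1 _ _ (by lia), if_neg (by lia)]
    · rw [h.2 _ _ (by lia)]
      by_cases ha : a2 = A
      · subst ha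
        rw [if_pos ⟨rfl, rfl⟩, show -(a1 : ℤ) - a2 + a1 + a2 = 0 by ring]
        simp [dl, Cn]
      · rw [if_neg (by tauto), hdl _ _ (by lia), mul_zero]
  · simp only [Fin.mk_one, Fin.val_one, Function.iterate_one] at hN ⊢
    have h := D_tri q t x y (fun i j => Bop q t x y dl (i + a2) (j + a2)) (-1)
      (fun i j hij => by
        simp only [Bop]; rw [hdl _ _ (by lia), hdl _ _ (by lia)]; simp) a1
    rcases hN.lt_or_eq with hlt | rfl
    · rw [h.1 _ _ (by lia), if_neg (by lia)]
    · rw [h.2 _ _ (by push_cast; lia)]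
      by_cases ha : a2 = A
      · subst ha
        rw [if_pos ⟨rfl, rfl⟩, Cn, Finset.prod_range_succ, Bop,
          hdl (-((a1 + 1 : ℕ) : ℤ) - a2 + a1 + a2) _ (by push_cast; lia)]
        rw [c_shift hq]
        rw [show -((a1 + 1 : ℕ) : ℤ) - a2 + a1 + a2 = -1 by push_cast; ring]
        simp [dl]
        field_simp
      · rw [if_neg (by tauto)]
        simp only [Bop]
        rw [hdl _ _ (by push_cast; lia), hdl _ _ (by push_cast; lia)]; simp

def badset (q t p : ℂ) : Set ℂ :=
  ⋃ n : ℤ, ({z | (q ^ 2) ^ n * z ^ 2 = p} ∪ {z | t * ((q ^ 2) ^ n * z ^ 2) = t⁻¹ * p} ∪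
    {z | t * ((q ^ 2) ^ n * p) = t⁻¹ * z ^ 2})

lemma sq_ctb (a b : ℂ) (ha : a ≠ 0) : {z : ℂ | a * z ^ 2 = b}.Countable := by
  obtain ⟨r, hr⟩ := IsAlgClosed.exists_pow_nat_eq (b / a) (n := 2) (by norm_num)
  refine Set.Countable.mono (s₂ := {r, -r}) ?_ (Set.toFinite _).countable
  intro z hz
  have : z ^ 2 = r ^ 2 := by
    rw [hr, eq_div_iff ha, ← show a * z ^ 2 = b from hz]; ring
  simpa using sq_eq_sq_iff_eq_or_eq_neg.1 this

lemma bad_ctb {q t : ℂ} (hq : q ≠ 0) (ht : t ≠ 0) (p : ℂ) : (badset q t p).Countable := by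
  have hq2 : q ^ 2 ≠ 0 := pow_ne_zero 2 hq
  refine Set.countable_iUnion fun n => ?_
  have hn := zpow_ne_zero n hq2
  refine ((sq_ctb _ _ hn).union ?_).union ?_
  · simp only [← mul_assoc]; exact sq_ctb _ _ (mul_ne_zero ht hn)
  · refine (sq_ctb t⁻¹ (t * ((q ^ 2) ^ n * p)) (inv_ne_zero ht)).mono ?_
    intro z hz; exact Eq.symm hz

lemma gen_of {q t p z : ℂ} (hz : z ≠ 0) (hp : p ≠ 0) (h : z ∉ badset q t p) : Gen q t z (p / z) := by
  simp only [badset, Set.mem_iUnion, Set.mem_union, Set.mem_ofPred_eq, not_exists, not_or] at h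
  refine ⟨hz, div_ne_zero hp hz, fun n h0 => (h n).1.1 ?_, fun n h0 => (h n).1.2 ?_,
    fun n h0 => (h n).2 ?_⟩
  · rw [eq_div_iff hz] at h0; rw [← h0]; ring
  · rw [← mul_div_assoc, eq_div_iff hz] at h0; rw [← h0]; ring
  · rw [← mul_div_assoc, ← mul_div_assoc, div_eq_iff hz] at h0; rw [h0]; ring

lemma indep {I : Type*} (F : Finset I) (l : I → ℂ) (b1 : I → ℕ) (b2 : I → ℤ)
    (hinj : ∀ u ∈ F, ∀ v ∈ F, b1 u = b1 v → b2 u = b2 v → u = v)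
    {q t : ℂ} (hq : q ≠ 0) (ht : t ≠ 0)
    (h : ∀ x y, Gen q t x y → ∑ u ∈ F, l u * ((x + y) ^ b1 u * (x * y) ^ b2 u) = 0) :
    ∀ u ∈ F, l u = 0 := by
  classical
  have h1 : ∀ p : ℂ, p ≠ 0 → ∀ k, ∑ u ∈ F with b1 u = k, l u * p ^ b2 u = 0 := by
    intro p hp k
    let R : Polynomial ℂ := ∑ u ∈ F, Polynomial.monomial (b1 u) (l u * p ^ b2 u)
    have hR : R = 0 := by
      apply Polynomial.eq_zero_of_infinite_isRoot
      have hc : ((fun z => z + p / z) '' badset q t p).Countable := (bad_ctb hq ht p).image _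
      intro hfin
      have : (Set.univ : Set ℂ).Countable := by
        refine (hc.union hfin.countable).mono ?_
        intro s _
        obtain ⟨z, hz⟩ : ∃ z : ℂ, z ^ 2 - s * z + p = 0 := by
          obtain ⟨r, hr⟩ := IsAlgClosed.exists_pow_nat_eq (s ^ 2 - 4 * p) (n := 2) (by norm_num)
          exact ⟨(s + r) / 2, by linear_combination hr / 4⟩
        have hz0 : z ≠ 0 := by
          rintro rfl; apply hp; simpa using hz
        have hs : s = z + p / z := by
          field_simp; linear_combination -hz
        by_cases hb : z ∈ badset q t p
        · left; exact ⟨z, hb, hs.symm⟩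
        · right
          have := h _ _ (gen_of hz0 hp hb)
          rw [← hs, mul_div_cancel₀ _ hz0] at this
          simp only [Set.mem_ofPred_eq, Polynomial.IsRoot, R, Polynomial.eval_finsetSum,
            Polynomial.eval_monomial]
          rw [← this]
          exact Finset.sum_congr rfl fun u _ => by ring
      exact not_countable_complex this
    have := congrArg (fun P => Polynomial.coeff P k) hR
    simp only [R, Polynomial.finsetSum_coeff, Polynomial.coeff_monomial, Polynomial.coeff_zero] at this
    rw [Finset.sum_filter]; exact this
  intro u hu
  set k := b1 u with hk
  obtain ⟨M, hM⟩ : ∃ M : ℕ, ∀ v ∈ F, 0 ≤ b2 v + M := by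
    refine ⟨∑ v ∈ F, (b2 v).natAbs, fun v hv => ?_⟩
    have := Finset.single_le_sum (f := fun v => (b2 v).natAbs) (fun _ _ => Nat.zero_le _) hv
    lia
  let R : Polynomial ℂ := ∑ v ∈ F with b1 v = k, Polynomial.monomial (b2 v + M).toNat (l v)
  have hR : R = 0 := by
    apply Polynomial.eq_zero_of_infinite_isRoot
    refine Set.Infinite.mono (s := {0}ᶜ) ?_ (Set.finite_singleton (0:ℂ)).infinite_compl
    intro p hp
    have hp : p ≠ 0 := hp
    have := h1 p hp k
    simp only [Set.mem_ofPred_eq, Polynomial.IsRoot, R, Polynomial.eval_finsetSum,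
            Polynomial.eval_monomial]
    rw [← zero_mul (p ^ M), ← this, Finset.sum_mul]
    refine Finset.sum_congr rfl fun v hv => ?_
    have h0 := hM v (Finset.mem_filter.1 hv).1
    rw [← zpow_natCast p (b2 v + M).toNat, Int.toNat_of_nonneg h0, zpow_add₀ hp, zpow_natCast]
    ring
  have := congrArg (fun P => Polynomial.coeff P (b2 u + M).toNat) hR
  simp only [R, Polynomial.finsetSum_coeff, Polynomial.coeff_monomial, Polynomial.coeff_zero] at this
  rw [Finset.sum_eq_single u] at this
  · simpa using this
  · intro v hv hne
    rw [Finset.mem_filter] at hv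
    rw [if_neg]
    intro he
    apply hne
    have h1 := hM v hv.1
    have h2 := hM u hu
    exact hinj v hv.1 u hu hv.2 (by lia)
  · intro hn; exact absurd (Finset.mem_filter.2 ⟨hu, hk.symm⟩) hn

lemma main_rel {q t : ℂ} (hq : q ≠ 0) (ht : t ≠ 0) (ht2 : t ^ 2 ≠ -1)
    (l : (ℕ × ℤ × Fin 2 × ℕ × ℤ) →₀ ℂ) (hl : Finsupp.linearCombination ℂ (pbwSph q t) l = 0)
    (N : ℕ) (hN : ∀ u ∈ l.support, u.1 + (u.2.2.1 : ℕ) ≤ N) (A : ℤ) (x y : ℂ) (h : Gen q t x y) :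
    ∑ u ∈ l.support with u.1 + (u.2.2.1 : ℕ) = N ∧ u.2.1 = A,
      l u * (x ^ (u.2.2.1 : ℕ) * ((x + y) ^ u.2.2.2.1 * (x * y) ^ u.2.2.2.2)) = 0 := by
  obtain ⟨ρ, hρ⟩ := rep_exists hq ht h
  have h1 := congrArg (fun a => ρ a (sy dl) (-N - A) (-A) false) hl
  simp only [Finsupp.linearCombination_apply, Finsupp.sum, map_sum, map_smul, map_zero,
    LinearMap.sum_apply, LinearMap.smul_apply, rho_pbw hq ht h ht2 ρ hρ, Finset.sum_apply,
    Pi.smul_apply, smul_eq_mul, LinearMap.zero_apply, Pi.zero_apply, sy] at h1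
  rw [Finset.sum_filter]
  apply (mul_eq_zero.1 (?_ : Cn q t x y N A * _ = 0)).resolve_left (Cn_ne hq h N A)
  refine Eq.trans ?_ h1
  rw [Finset.mul_sum]
  refine Finset.sum_congr rfl fun u hu => ?_
  rw [val_eq hq N A _ _ _ (hN u hu)]
  split_ifs
  · ring
  · simp

lemma fin_part {q t : ℂ} (hq : q ≠ 0) (ht : t ≠ 0) (ht2 : t ^ 2 ≠ -1)
    (l : (ℕ × ℤ × Fin 2 × ℕ × ℤ) →₀ ℂ) (hl : Finsupp.linearCombination ℂ (pbwSph q t) l = 0) :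
    l = 0 := by
  classical
  by_contra hne
  obtain ⟨u0, hu0, hmax⟩ := Finset.exists_max_image l.support
    (fun u => u.1 + (u.2.2.1 : ℕ)) (Finsupp.support_nonempty_iff.2 hne)
  set N := u0.1 + (u0.2.2.1 : ℕ) with hNdef
  set A := u0.2.1 with hA
  have hm := main_rel hq ht ht2 l hl N hmax A
  let F (e : Fin 2) : Finset (ℕ × ℤ × Fin 2 × ℕ × ℤ) :=
    {u ∈ l.support | (u.1 + (u.2.2.1 : ℕ) = N ∧ u.2.1 = A) ∧ u.2.2.1 = e}
  let S (e : Fin 2) (x y : ℂ) : ℂ := ∑ u ∈ F e, l u * ((x + y) ^ u.2.2.2.1 * (x * y) ^ u.2.2.2.2)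
  have hS : ∀ x y, Gen q t x y → S 0 x y + x * S 1 x y = 0 := by
    intro x y h
    rw [← hm x y h]
    simp only [S, F, Finset.mul_sum, Finset.sum_filter, ← Finset.sum_add_distrib]
    refine Finset.sum_congr rfl fun u _ => ?_
    obtain ⟨a1, a2, ε, b1, b2⟩ := u
    by_cases hc : a1 + (ε : ℕ) = N ∧ a2 = A
    · fin_cases ε <;> simp_all
      ring
    · simp [hc]
  have hsym : ∀ e x y, S e x y = S e y x := by
    intro e x y; simp only [S, add_comm, mul_comm x y]
  have hS1 : ∀ x y, Gen q t x y → S 1 x y = 0 := by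
    intro x y h
    have e1 := hS x y h
    have e2 := hS y x (h.symm hq)
    rw [hsym 0, hsym 1 y x] at e2
    rw [hsym 0 x y] at e1
    rw [hsym 0 x y] at e2
    have hxy : x - y ≠ 0 := by simpa using sub_ne hq h 0 0
    apply (mul_eq_zero.1 (?_ : (x - y) * S 1 x y = 0)).resolve_left hxy
    linear_combination e1 - e2
  have hS0 : ∀ x y, Gen q t x y → S 0 x y = 0 := by
    intro x y h
    have := hS x y h
    rwa [hS1 x y h, mul_zero, add_zero] at this
  have hSe : ∀ e x y, Gen q t x y → S e x y = 0 := by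
    intro e; fin_cases e
    · exact hS0
    · exact hS1
  have := indep (F u0.2.2.1) l (fun u => u.2.2.2.1) (fun u => u.2.2.2.2) ?_ hq ht (hSe _) u0
    (Finset.mem_filter.2 ⟨hu0, ⟨rfl, rfl⟩, rfl⟩)
  · exact (Finsupp.mem_support_iff.1 hu0) this
  · intro u hu v hv h1 h2
    simp only [F, Finset.mem_filter] at hu hv
    obtain ⟨_, ⟨p1, p2⟩, p3⟩ := hu
    obtain ⟨_, ⟨r1, r2⟩, r3⟩ := hv
    rw [p3] at p1
    rw [r3] at r1
    exact Prod.ext (by lia) (Prod.ext (p2.trans r2.symm) (Prod.ext (p3.trans r3.symm)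
      (Prod.ext h1 h2)))

end Pf

/-- The family of elements
`e(Y₁+Y₂)^{a₁}(Y₁Y₂)^{a₂}(t⁻²Y₁X₁+Y₂X₂)^{ε}(X₁+X₂)^{b₁}(X₁X₂)^{b₂}e`, with
`ε ∈ {0,1}`, `a₁, b₁ ∈ ℕ₀` and `a₂, b₂ ∈ ℤ` (negative exponents interpreted via the
inverse generators), is linearly independent over ℂ in `H_{t,q}`. -/
theorem stmt7 (q t : ℂ) (hq : q ≠ 0) (ht : t ≠ 0) (ht2 : t ^ 2 ≠ -1) :
    LinearIndependent ℂ (pbwSph q t) := by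
  exact linearIndependent_iff.2 fun l hl => Pf.fin_part hq ht ht2 l hl
end
end

section
/- Let 𝒜⁺ be the subalgebra of 𝒜 generated by P₁, P₂, Q₁, Q₂, R. The family of monomials Q₁^{a₁}Q₂^{a₂}R^{ε}P₁^{b₁}P₂^{b₂} with ε ∈ {0,1} and a₁, a₂, b₁, b₂ ∈ ℕ₀ is a ℂ-vector-space basis of 𝒜⁺; consequently, with the ℤ²-grading determined by deg P₁ = (0,1), deg P₂ = (0,2), deg Q₁ = (1,0), deg Q₂ = (2,0), deg R = (1,1), the dimension of the degree-(M,N) graded piece of 𝒜⁺ equals the number of tuples (a₁, a₂, b₁, b₂, ε) ∈ ℕ₀⁴ × {0,1} with a₁ + 2a₂ + ε = M and b₁ + 2b₂ + ε = N. -/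
noncomputable section

/-- Generators of the algebra `𝒜`: `P₁, P₂, P₂⁻¹, Q₁, Q₂, Q₂⁻¹, R`. -/
inductive AGen : Type
  | P1 | P2 | P2i | Q1 | Q2 | Q2i | R

abbrev FA : Type := FreeAlgebra ℂ AGen

def gA : AGen → FA := FreeAlgebra.ι ℂ

/-- The defining relations of the algebra `𝒜`. -/
inductive ARel (q t : ℂ) : FA → FA → Prop
  | P2P2i : ARel q t (gA .P2 * gA .P2i) 1
  | P2iP2 : ARel q t (gA .P2i * gA .P2) 1
  | Q2Q2i : ARel q t (gA .Q2 * gA .Q2i) 1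
  | Q2iQ2 : ARel q t (gA .Q2i * gA .Q2) 1
  | P2P1 : ARel q t (gA .P2 * gA .P1) (gA .P1 * gA .P2)
  | Q2Q1 : ARel q t (gA .Q2 * gA .Q1) (gA .Q1 * gA .Q2)
  | P2Q2 : ARel q t (gA .P2 * gA .Q2) ((q⁻¹ ^ 4) • (gA .Q2 * gA .P2))
  | P2Q1 : ARel q t (gA .P2 * gA .Q1) ((q⁻¹ ^ 2) • (gA .Q1 * gA .P2))
  | P1Q2 : ARel q t (gA .P1 * gA .Q2) ((q⁻¹ ^ 2) • (gA .Q2 * gA .P1))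
  | P1Q1 : ARel q t (gA .P1 * gA .Q1)
      (gA .Q1 * gA .P1 + (q⁻¹ ^ 2 - 1) • gA .R)
  | P2R : ARel q t (gA .P2 * gA .R) ((q⁻¹ ^ 2) • (gA .R * gA .P2))
  | RQ2 : ARel q t (gA .R * gA .Q2) ((q⁻¹ ^ 2) • (gA .Q2 * gA .R))
  | P1R : ARel q t (gA .P1 * gA .R)
      ((q⁻¹ ^ 2) • (gA .R * gA .P1) + (1 - q⁻¹ ^ 2) • (gA .Q1 * gA .P2))
  | RQ1 : ARel q t (gA .R * gA .Q1)
      ((q⁻¹ ^ 2) • (gA .Q1 * gA .R) + (1 - q⁻¹ ^ 2) • (gA .Q2 * gA .P1))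
  | RR : ARel q t (gA .R * gA .R)
      (((1 + t ^ 2) * (q⁻¹ ^ 2 + t⁻¹ ^ 2)) • (gA .Q2 * gA .P2)
        - (q⁻¹ ^ 2) • (gA .Q2 * gA .P1 * gA .P1)
        - (q⁻¹ ^ 2) • (gA .Q1 * gA .Q1 * gA .P2)
        + (q⁻¹ ^ 2) • (gA .Q1 * gA .R * gA .P1))

/-- The algebra `𝒜`. -/
abbrev AlgA (q t : ℂ) : Type := RingQuot (ARel q t)

variable (q t : ℂ)

def P1 : AlgA q t := RingQuot.mkAlgHom ℂ (ARel q t) (gA .P1)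
def P2 : AlgA q t := RingQuot.mkAlgHom ℂ (ARel q t) (gA .P2)
def P2i : AlgA q t := RingQuot.mkAlgHom ℂ (ARel q t) (gA .P2i)
def Q1 : AlgA q t := RingQuot.mkAlgHom ℂ (ARel q t) (gA .Q1)
def Q2 : AlgA q t := RingQuot.mkAlgHom ℂ (ARel q t) (gA .Q2)
def Q2i : AlgA q t := RingQuot.mkAlgHom ℂ (ARel q t) (gA .Q2i)
def R : AlgA q t := RingQuot.mkAlgHom ℂ (ARel q t) (gA .R)

/-- The image of a generator of `𝒜` in `𝒜`. -/
def genA (q t : ℂ) (x : AGen) : AlgA q t := RingQuot.mkAlgHom ℂ (ARel q t) (gA x)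

/-- The generators of the subalgebra `𝒜⁺`: `P₁, P₂, Q₁, Q₂, R`. -/
def plusGen : AGen → Prop
  | .P1 => True | .P2 => True | .Q1 => True | .Q2 => True | .R => True
  | _ => False

/-- First component (the `Q`-degree) of the ℤ²-degree of a generator:
`deg P₁ = (0,1)`, `deg P₂ = (0,2)`, `deg Q₁ = (1,0)`, `deg Q₂ = (2,0)`, `deg R = (1,1)`. -/
def aDeg1 : AGen → ℕ
  | .Q1 => 1 | .Q2 => 2 | .R => 1
  | _ => 0

/-- Second component (the `P`-degree) of the ℤ²-degree of a generator. -/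
def aDeg2 : AGen → ℕ
  | .P1 => 1 | .P2 => 2 | .R => 1
  | _ => 0

/-- The degree-`(M,N)` graded piece of `𝒜⁺`: the ℂ-span of all products of the
generators `P₁, P₂, Q₁, Q₂, R` of total degree `(M,N)`. -/
def aPiece (q t : ℂ) (M N : ℕ) : Submodule ℂ (AlgA q t) :=
  Submodule.span ℂ
    {x | ∃ w : List AGen, (∀ s ∈ w, plusGen s) ∧
      (w.map aDeg1).sum = M ∧ (w.map aDeg2).sum = N ∧ x = (w.map (genA q t)).prod}

/-- The PBW family `Q₁^{a₁}Q₂^{a₂}R^{ε}P₁^{b₁}P₂^{b₂}` of `𝒜⁺`, with all exponents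
in `ℕ₀`. -/
def pbwAplus (q t : ℂ) : ℕ × ℕ × Fin 2 × ℕ × ℕ → AlgA q t :=
  fun x => Q1 q t ^ x.1 * Q2 q t ^ x.2.1 * R q t ^ (x.2.2.1 : ℕ) *
    P1 q t ^ x.2.2.2.1 * P2 q t ^ x.2.2.2.2

set_option linter.all false
set_option linter.unusedSimpArgs false
set_option linter.unusedSectionVars false
namespace PBW8
section ops
variable {K : Type} [Field K] [Algebra ℂ K]

/-- `f • X^i Y^j` -/
def sh (f : ℤ → ℤ → K) (i j : ℤ) : Module.End ℂ (ℤ → ℤ → K) where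
  toFun φ := fun m n => f m n * φ (m + i) (n + j)
  map_add' φ ψ := by funext m n; simp [mul_add]
  map_smul' c φ := by funext m n; simp

@[simp] lemma sh_apply (f : ℤ → ℤ → K) (i j : ℤ) (φ : ℤ → ℤ → K) (m n : ℤ) :
    sh f i j φ m n = f m n * φ (m + i) (n + j) := rfl

def cA (a b : K) (x y : ℤ → K) : ℤ → ℤ → K := fun m n => (a * x m + b * y n) / (x m - y n)
def cB (a b : K) (x y : ℤ → K) : ℤ → ℤ → K := fun m n => (a * y n + b * x m) / (y n - x m)

def oP1 (a b : K) (x y : ℤ → K) : Module.End ℂ (ℤ → ℤ → K) :=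
  sh (cA a b x y) 1 0 + sh (cB a b x y) 0 1
def oR (a b : K) (x y : ℤ → K) : Module.End ℂ (ℤ → ℤ → K) :=
  sh (fun m n => cA a b x y m n * x m) 1 0 + sh (fun m n => cB a b x y m n * y n) 0 1
def oQ1 (x y : ℤ → K) : Module.End ℂ (ℤ → ℤ → K) := sh (fun m n => x m + y n) 0 0
def oQ2 (x y : ℤ → K) : Module.End ℂ (ℤ → ℤ → K) := sh (fun m n => x m * y n) 0 0
def oQ2i (x y : ℤ → K) : Module.End ℂ (ℤ → ℤ → K) := sh (fun m n => (x m * y n)⁻¹) 0 0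
def oP2 : Module.End ℂ (ℤ → ℤ → K) := sh (fun _ _ => 1) 1 1
def oP2i : Module.End ℂ (ℤ → ℤ → K) := sh (fun _ _ => 1) (-1) (-1)

variable {s : ℂ} {a b : K} {x y : ℤ → K}

lemma r_P2P2i : (oP2 * oP2i : Module.End ℂ (ℤ → ℤ → K)) = 1 := by
  ext φ m n; simp [oP2, oP2i]
lemma r_P2iP2 : (oP2i * oP2 : Module.End ℂ (ℤ → ℤ → K)) = 1 := by
  ext φ m n; simp [oP2, oP2i]
lemma r_Q2Q2i (hx : ∀ m, x m ≠ 0) (hy : ∀ m, y m ≠ 0) : oQ2 x y * oQ2i x y = 1 := by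
  ext φ m n
  have := hx m; have := hy n
  simp [oQ2, oQ2i]; field_simp
lemma r_Q2iQ2 (hx : ∀ m, x m ≠ 0) (hy : ∀ m, y m ≠ 0) : oQ2i x y * oQ2 x y = 1 := by
  ext φ m n
  have := hx m; have := hy n
  simp [oQ2, oQ2i]; field_simp
lemma r_Q2Q1 : oQ2 x y * oQ1 x y = oQ1 x y * oQ2 x y := by
  ext φ m n
  simp [oQ2, oQ1]; ring
variable (hx : ∀ m, x (m + 1) = algebraMap ℂ K s * x m)
  (hy : ∀ m, y (m + 1) = algebraMap ℂ K s * y m)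
include hx hy
lemma r_P2Q2 : oP2 * oQ2 x y = (s ^ 2) • (oQ2 x y * oP2) := by
  ext φ m n
  simp [oQ2, oP2, hx, hy]; simp only [Algebra.smul_def, map_pow, map_sub, map_one]; ring
lemma r_P2Q1 : oP2 * oQ1 x y = s • (oQ1 x y * oP2) := by
  ext φ m n
  simp [oQ1, oP2, hx, hy]; simp only [Algebra.smul_def, map_pow, map_sub, map_one]; ring
lemma r_P1Q2 : oP1 a b x y * oQ2 x y = s • (oQ2 x y * oP1 a b x y) := by
  ext φ m n
  simp [oQ2, oP1, hx, hy]; simp only [Algebra.smul_def, map_pow, map_sub, map_one]; ring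
lemma r_RQ2 : oR a b x y * oQ2 x y = s • (oQ2 x y * oR a b x y) := by
  ext φ m n
  simp [oQ2, oR, hx, hy]; simp only [Algebra.smul_def, map_pow, map_sub, map_one]; ring
lemma r_P1Q1 : oP1 a b x y * oQ1 x y = oQ1 x y * oP1 a b x y + (s - 1) • oR a b x y := by
  ext φ m n
  simp [oQ1, oP1, oR, hx, hy]; simp only [Algebra.smul_def, map_pow, map_sub, map_one]; ring
lemma r_RQ1 : oR a b x y * oQ1 x y = s • (oQ1 x y * oR a b x y)
    + (1 - s) • (oQ2 x y * oP1 a b x y) := by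
  ext φ m n
  simp [oQ1, oQ2, oP1, oR, hx, hy]; simp only [Algebra.smul_def, map_pow, map_sub, map_one]; ring
variable (hs : s ≠ 0)
include hs
lemma hAs (m n : ℤ) : cA a b x y (m + 1) (n + 1) = cA a b x y m n := by
  have : algebraMap ℂ K s ≠ 0 := by simpa using hs
  simp only [cA, hx, hy]
  rw [← mul_div_mul_left (a * x m + b * y n) (x m - y n) this]
  congr 1 <;> ring
lemma hBs (m n : ℤ) : cB a b x y (m + 1) (n + 1) = cB a b x y m n := by
  have : algebraMap ℂ K s ≠ 0 := by simpa using hs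
  simp only [cB, hx, hy]
  rw [← mul_div_mul_left (a * y n + b * x m) (y n - x m) this]
  congr 1 <;> ring
lemma r_P2P1 : oP2 * oP1 a b x y = oP1 a b x y * oP2 := by
  ext φ m n
  simp [oP1, oP2, hAs hx hy hs, hBs hx hy hs]
lemma r_P2R : oP2 * oR a b x y = s • (oR a b x y * oP2) := by
  ext φ m n
  simp [oR, oP2, hAs hx hy hs, hBs hx hy hs, hx, hy]; simp only [Algebra.smul_def, map_pow, map_sub, map_one]; ring
variable (hxy : ∀ m n, x m ≠ y n) (hab : a * b = -1)
include hxy hab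
variable {c : ℂ} (hc : algebraMap ℂ K c = a ^ 2 + algebraMap ℂ K s * b ^ 2 + 1 + algebraMap ℂ K s)

omit hx hy hs hxy in
lemma key_gen {X Y S : K} (h1 : X - Y ≠ 0) (h2 : S * X - Y ≠ 0) (h3 : X - S * Y ≠ 0) :
    ((a * X + b * Y) / (X - Y) * ((a * Y + b * (S * X)) / (Y - S * X)) * (Y - S * X)
     + (a * Y + b * X) / (Y - X) * ((a * X + b * (S * Y)) / (X - S * Y)) * (X - S * Y)
     = (1 - S) * (X + Y)) ∧
    ((a * X + b * Y) / (X - Y) * ((a * Y + b * (S * X)) / (Y - S * X)) * (X * (Y - S * X))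
     + (a * Y + b * X) / (Y - X) * ((a * X + b * (S * Y)) / (X - S * Y)) * (Y * (X - S * Y))
     + S * (X + Y) ^ 2 = (a ^ 2 + S * b ^ 2 + 1 + S) * (X * Y)) := by
  have h2' : Y - S * X ≠ 0 := by rw [← neg_sub]; exact neg_ne_zero.2 h2
  have e0 : Y - X = -(X - Y) := by ring
  have f1 : ∀ p N Z D : K, D ≠ 0 → p * (N / D) * (Z * D) = p * N * Z := by
    intro p N Z D hD; field_simp
  have f2 : ∀ p N D : K, D ≠ 0 → p * (N / D) * D = p * N := by
    intro p N D hD; field_simp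
  rw [f1 _ _ _ _ h2', f1 _ _ _ _ h3, f2 _ _ _ h2', f2 _ _ _ h3]
  rw [e0, div_neg]
  constructor
  · rw [← sub_eq_zero]
    field_simp
    linear_combination (S - 1) * (X^2 - Y^2) * hab
  · rw [← sub_eq_zero]
    field_simp
    linear_combination (X - Y) * (S * (X^2 + X * Y + Y^2) - X * Y) * hab

lemma r_P1R : oP1 a b x y * oR a b x y = s • (oR a b x y * oP1 a b x y)
    + (1 - s) • (oQ1 x y * oP2) := by
  ext φ m n
  have h1 := sub_ne_zero.2 (hxy m n)
  have h2 := sub_ne_zero.2 (hxy (m+1) n)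
  have h3 := sub_ne_zero.2 (hxy m (n+1))
  rw [hx] at h2
  rw [hy] at h3
  have key := (key_gen hab h1 h2 h3).1
  rw [← hx, ← hy] at key
  simp [oR, oP1, oQ1, oP2, cA, cB]
  simp only [Algebra.smul_def, map_pow, map_sub, map_one]
  simp only [hx, hy] at key ⊢
  linear_combination (φ (m+1) (n+1)) * key

include hc in
lemma r_RR : oR a b x y * oR a b x y =
    c • (oQ2 x y * oP2) - s • (oQ2 x y * oP1 a b x y * oP1 a b x y)
     - s • (oQ1 x y * oQ1 x y * oP2) + s • (oQ1 x y * oR a b x y * oP1 a b x y) := by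
  ext φ m n
  have h1 := sub_ne_zero.2 (hxy m n)
  have h2 := sub_ne_zero.2 (hxy (m+1) n)
  have h3 := sub_ne_zero.2 (hxy m (n+1))
  rw [hx] at h2
  rw [hy] at h3
  have key := (key_gen hab h1 h2 h3).2
  simp [oR, oP1, oQ1, oQ2, oP2, cA, cB]
  simp only [Algebra.smul_def, map_pow, map_sub, map_one]
  simp only [hx, hy, hc] at key ⊢
  linear_combination (φ (m+1) (n+1)) * key


omit hx hy hs hxy hab in
lemma Q1pow (k : ℕ) (φ : ℤ → ℤ → K) (m n : ℤ) :
    ((oQ1 x y) ^ k) φ m n = (x m + y n) ^ k * φ m n := by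
  induction k generalizing m n with
  | zero => simp
  | succ k ih => rw [pow_succ', Module.End.mul_apply]; simp [oQ1] at ih ⊢; rw [ih]; ring
omit hx hy hs hxy hab in
lemma Q2pow (k : ℕ) (φ : ℤ → ℤ → K) (m n : ℤ) :
    ((oQ2 x y) ^ k) φ m n = (x m * y n) ^ k * φ m n := by
  induction k generalizing m n with
  | zero => simp
  | succ k ih => rw [pow_succ', Module.End.mul_apply]; simp [oQ2] at ih ⊢; rw [ih]; ring
omit hx hy hs hxy hab in
lemma P2pow (k : ℕ) (φ : ℤ → ℤ → K) (m n : ℤ) :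
    (oP2 ^ k) φ m n = φ (m + k) (n + k) := by
  induction k generalizing m n with
  | zero => simp
  | succ k ih =>
    rw [pow_succ', Module.End.mul_apply]; simp [oP2] at ih ⊢; rw [ih]
    congr 1 <;> ring
omit hx hy hs hxy hab in
lemma P1pow (k : ℕ) (φ : ℤ → ℤ → K) (hφ : ∀ m n, 0 < n → φ m n = 0) :
    (∀ m n, 0 < n → ((oP1 a b x y) ^ k) φ m n = 0) ∧
    (∀ m, ((oP1 a b x y) ^ k) φ m 0 =
      (∏ i ∈ Finset.range k, cA a b x y (m + i) 0) * φ (m + k) 0) := by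
  induction k with
  | zero => simpa using hφ
  | succ k ih =>
    rw [pow_succ']
    simp only [Module.End.mul_apply]
    generalize ((oP1 a b x y) ^ k) φ = ψ at ih
    obtain ⟨ih1, ih2⟩ := ih
    constructor
    · intro m n hn
      simp [oP1, ih1 _ _ hn, ih1 _ (n + 1) (by omega)]
    · intro m
      simp [oP1, ih1 _ 1 (by omega)]
      rw [ih2, Finset.prod_range_succ']
      push_cast
      rw [show m + 1 + (k : ℤ) = m + (k + 1) by ring]
      simp only [add_assoc, add_comm (1 : ℤ), Nat.cast_zero, add_zero]
      ring
omit hx hy hs hxy hab in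
lemma RP1pow (e : Fin 2) (k : ℕ) (φ : ℤ → ℤ → K) (hφ : ∀ m n, 0 < n → φ m n = 0) :
    ((oR a b x y) ^ (e : ℕ)) (((oP1 a b x y) ^ k) φ) 0 0 =
      x 0 ^ (e : ℕ) * (∏ i ∈ Finset.range (k + e), cA a b x y i 0) * φ ((k + e : ℕ)) 0 := by
  obtain ⟨h1, h2⟩ := P1pow (a := a) (b := b) (x := x) (y := y) k φ hφ
  fin_cases e
  · simp [h2]
  · simp [oR, h2, h1 _ 1 (by omega), Finset.prod_range_succ', add_comm (1 : ℤ)]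
    ring

end ops

open AGen in
def gens {K : Type} [Field K] [Algebra ℂ K] (a b : K) (x y : ℤ → K) :
    AGen → Module.End ℂ (ℤ → ℤ → K)
  | .P1 => oP1 a b x y | .P2 => oP2 | .P2i => oP2i | .Q1 => oQ1 x y | .Q2 => oQ2 x y
  | .Q2i => oQ2i x y | .R => oR a b x y

theorem exists_rho {K : Type} [Field K] [Algebra ℂ K] (q t : ℂ) (hq : q ≠ 0) (ht : t ≠ 0)
    (x y : ℤ → K)
    (hx : ∀ m, x (m + 1) = algebraMap ℂ K (q⁻¹ ^ 2) * x m)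
    (hy : ∀ m, y (m + 1) = algebraMap ℂ K (q⁻¹ ^ 2) * y m)
    (hx0 : ∀ m, x m ≠ 0) (hy0 : ∀ m, y m ≠ 0) (hxy : ∀ m n, x m ≠ y n) :
    ∃ ρ : AlgA q t →ₐ[ℂ] Module.End ℂ (ℤ → ℤ → K),
      ∀ g, ρ (genA q t g) = gens (algebraMap ℂ K t⁻¹) (algebraMap ℂ K (-t)) x y g := by
  have hs : q⁻¹ ^ 2 ≠ 0 := by simpa using hq
  have hab : algebraMap ℂ K t⁻¹ * algebraMap ℂ K (-t) = -1 := by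
    rw [← map_mul]; simp [ht]
  have hc : algebraMap ℂ K ((1 + t ^ 2) * (q⁻¹ ^ 2 + t⁻¹ ^ 2)) = (algebraMap ℂ K t⁻¹) ^ 2
      + algebraMap ℂ K (q⁻¹ ^ 2) * (algebraMap ℂ K (-t)) ^ 2 + 1 + algebraMap ℂ K (q⁻¹ ^ 2) := by
    rw [← map_pow, ← map_pow, ← map_mul, ← map_one (algebraMap ℂ K), ← map_add, ← map_add,
      ← map_add]
    congr 1
    field_simp
    ring
  have h4 : q⁻¹ ^ 4 = (q⁻¹ ^ 2) ^ 2 := by ring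
  refine ⟨RingQuot.liftAlgHom ℂ
    ⟨FreeAlgebra.lift ℂ (gens (algebraMap ℂ K t⁻¹) (algebraMap ℂ K (-t)) x y), ?_⟩, ?_⟩
  · intro z w h
    cases h <;> simp only [gA, map_mul, map_add, map_sub, map_smul, map_one,
      FreeAlgebra.lift_ι_apply, gens]
    · exact r_P2P2i
    · exact r_P2iP2
    · exact r_Q2Q2i hx0 hy0
    · exact r_Q2iQ2 hx0 hy0
    · exact r_P2P1 hx hy hs
    · exact r_Q2Q1
    · rw [h4]; exact r_P2Q2 hx hy
    · exact r_P2Q1 hx hy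
    · exact r_P1Q2 hx hy
    · exact r_P1Q1 hx hy
    · exact r_P2R hx hy hs
    · exact r_RQ2 hx hy
    · exact r_P1R hx hy hs hxy hab
    · exact r_RQ1 hx hy
    · exact r_RR hx hy hs hxy hab hc
  · intro g
    rw [genA, RingQuot.liftAlgHom_mkAlgHom_apply]
    simp [gA]

theorem linindep {K : Type} [Field K] [Algebra ℂ K] (q t : ℂ) (hq : q ≠ 0) (ht : t ≠ 0)
    (u v : K) (hu : u ≠ 0) (hv : v ≠ 0)
    (hind : ∀ α β : ℂ, algebraMap ℂ K α * u + algebraMap ℂ K β * v = 0 → α = 0)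
    (hE : LinearIndependent ℂ (fun i : ℕ × ℕ × Fin 2 =>
      (u + v) ^ i.1 * (u * v) ^ i.2.1 * u ^ (i.2.2 : ℕ))) :
    LinearIndependent ℂ (pbwAplus q t) := by
  have hs : q⁻¹ ^ 2 ≠ 0 := by simpa using hq
  obtain ⟨s, hsd⟩ : ∃ s, s = q⁻¹ ^ 2 := ⟨_, rfl⟩
  rw [← hsd] at hs
  obtain ⟨x, hxd⟩ : ∃ x : ℤ → K, x = fun m => algebraMap ℂ K (s ^ m) * u := ⟨_, rfl⟩
  obtain ⟨y, hyd⟩ : ∃ y : ℤ → K, y = fun m => algebraMap ℂ K (s ^ m) * v := ⟨_, rfl⟩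
  have hsm : ∀ m : ℤ, s ^ m ≠ 0 := fun m => zpow_ne_zero m hs
  have hx0 : x 0 = u := by simp [hxd]
  have hy0 : y 0 = v := by simp [hyd]
  obtain ⟨ρ, hρ⟩ := exists_rho q t hq ht x y
    (by intro m; rw [← hsd]; simp only [hxd, zpow_add_one₀ hs, map_mul]; ring)
    (by intro m; rw [← hsd]; simp only [hyd, zpow_add_one₀ hs, map_mul]; ring)
    (by intro m; simp only [hxd]; exact mul_ne_zero ((map_ne_zero _).2 (hsm m)) hu)
    (by intro m; simp only [hyd]; exact mul_ne_zero ((map_ne_zero _).2 (hsm m)) hv)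
    (by
      intro m n h
      simp only [hxd, hyd] at h
      refine hsm m (hind (s ^ m) (-s ^ n) ?_)
      rw [h, map_neg]; ring)
  have hA : ∀ m : ℕ, cA (algebraMap ℂ K t⁻¹) (algebraMap ℂ K (-t)) x y m 0 ≠ 0 := by
    intro m
    refine div_ne_zero ?_ ?_
    · intro h
      refine mul_ne_zero (inv_ne_zero ht) (hsm m) (hind _ (-t) ?_)
      rw [← h, hy0]
      simp only [hxd, map_mul]; ring
    · intro h
      refine (hsm m) (hind _ (-1) ?_)
      rw [← h, hy0]
      simp only [hxd, map_neg, map_one]; ring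
  have hL : ∀ (D k : ℕ) (z : ℕ × ℕ × Fin 2 × ℕ × ℕ), D ≤ z.2.2.2.2 →
      ρ (pbwAplus q t z) (fun m n => if m = k + D ∧ n = D then 1 else 0) 0 0 =
      if z.2.2.2.2 = D ∧ z.2.2.2.1 + z.2.2.1 = k then
        (∏ i ∈ Finset.range k, cA (algebraMap ℂ K t⁻¹) (algebraMap ℂ K (-t)) x y i 0) *
        ((u + v) ^ z.1 * (u * v) ^ z.2.1 * u ^ (z.2.2.1 : ℕ)) else 0 := by
    rintro D k ⟨a1, a2, e, b1, b2⟩ hD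
    simp only at hD
    have e1 : ρ (Q1 q t) = oQ1 x y := hρ .Q1
    have e2 : ρ (Q2 q t) = oQ2 x y := hρ .Q2
    have e3 : ρ (P1 q t) = _ := hρ .P1
    have e4 : ρ (P2 q t) = oP2 := hρ .P2
    have e5 : ρ (R q t) = _ := hρ .R
    simp only [pbwAplus, map_mul, map_pow, e1, e2, e3, e4, e5, gens, Module.End.mul_apply]
    rw [Q1pow, Q2pow, RP1pow, P2pow, hx0, hy0]
    · by_cases h : b2 = D ∧ b1 + e = k
      · obtain ⟨rfl, rfl⟩ := h
        simp
        ring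
      · rw [if_neg h, if_neg]
        · simp
        · push_cast; omega
    · intro m n hn
      rw [P2pow, if_neg]
      omega
  rw [linearIndependent_iff']
  intro S g hg
  have hmain : ∀ D : ℕ, ∀ z ∈ S, z.2.2.2.2 = D → g z = 0 := by
    intro D
    induction D using Nat.strong_induction_on with
    | _ D IH =>
    intro z hz hzD
    obtain ⟨k, hk⟩ : ∃ k, z.2.2.2.1 + z.2.2.1 = k := ⟨_, rfl⟩
    set Φ : K := (∏ i ∈ Finset.range k, cA (algebraMap ℂ K t⁻¹) (algebraMap ℂ K (-t)) x y i 0)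
      with hΦ
    have hΦ0 : Φ ≠ 0 := Finset.prod_ne_zero_iff.2 fun i _ => hA i
    let p : (ℕ × ℕ × Fin 2 × ℕ × ℕ) → Prop := fun z => z.2.2.2.2 = D ∧ z.2.2.2.1 + z.2.2.1 = k
    have hI : LinearIndependent ℂ (fun w : {z // p z} =>
        (u + v) ^ w.1.1 * (u * v) ^ w.1.2.1 * u ^ (w.1.2.2.1 : ℕ)) := by
      refine hE.comp (fun w : {z // p z} => (w.1.1, w.1.2.1, w.1.2.2.1)) ?_
      rintro ⟨⟨a1, a2, e, b1, b2⟩, h1, h2⟩ ⟨⟨a1', a2', e', b1', b2'⟩, h1', h2'⟩ h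
      simp only [Prod.mk.injEq] at h
      obtain ⟨rfl, rfl, rfl⟩ := h
      simp only at h1 h2 h1' h2'
      have : b1 = b1' := by omega
      subst this
      subst h1
      subst h1'
      rfl
    classical
    rw [linearIndependent_iff'] at hI
    refine hI (S.subtype p) (fun w => g w.1) ?_ ⟨z, hzD, hk⟩ (by simpa using hz)
    have key := congrArg (fun T => ρ T (fun m n => if m = k + D ∧ n = D then 1 else 0) 0 0) hg
    simp only [map_sum, map_smul, map_zero, LinearMap.sum_apply, LinearMap.smul_apply,
      Finset.sum_apply, Pi.smul_apply, LinearMap.zero_apply, Pi.zero_apply] at key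
    rw [Finset.sum_subtype_eq_sum_filter (f := fun w : ℕ × ℕ × Fin 2 × ℕ × ℕ =>
      g w • ((u + v) ^ w.1 * (u * v) ^ w.2.1 * u ^ (w.2.2.1 : ℕ))), Finset.sum_filter]
    refine (mul_eq_zero.1 (?_ : Φ * _ = 0)).resolve_left hΦ0
    refine Eq.trans ?_ key
    rw [Finset.mul_sum]
    refine Finset.sum_congr rfl fun w hw => ?_
    by_cases hwD : w.2.2.2.2 < D
    · rw [IH _ hwD w hw rfl]; simp
    · rw [hL D k w (by omega)]
      by_cases hp : p w
      · rw [if_pos hp, if_pos hp, mul_smul_comm]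
      · rw [if_neg hp, if_neg hp]; simp
  intro z hz
  exact hmain _ z hz rfl


lemma li_congr {ι M : Type*} [AddCommGroup M] [Module ℂ M] {f g : ι → M}
    (h : LinearIndependent ℂ g) (e : ∀ i, f i = g i) : LinearIndependent ℂ f := by
  rwa [show f = g from funext e]

open MvPolynomial in
lemma e_indep : LinearIndependent ℂ (fun i : ℕ × ℕ =>
    ((X 0 + X 1) ^ i.1 * (X 0 * X 1) ^ i.2 : MvPolynomial (Fin 2) ℂ)) := by
  have hinj : Function.Injective (esymmAlgHom (Fin 2) ℂ 2) :=
    esymmAlgHom_injective ℂ (by simp)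
  have h1 : LinearIndependent ℂ (fun i : ℕ × ℕ =>
      (MvPolynomial.monomial (Finsupp.single (0 : Fin 2) i.1 + Finsupp.single 1 i.2) (1 : ℂ))) := by
    have := (MvPolynomial.basisMonomials (Fin 2) ℂ).linearIndependent
    have h2 := this.comp (fun i : ℕ × ℕ => Finsupp.single (0 : Fin 2) i.1 + Finsupp.single 1 i.2) (by
      rintro ⟨a, b⟩ ⟨c, d⟩ h
      have h0 := DFunLike.congr_fun h 0
      have h1 := DFunLike.congr_fun h 1
      simp at h0 h1
      simp [h0, h1])
    refine li_congr h2 (fun i => ?_)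
    simp
  have h3 := h1.map' ((Subalgebra.val _).comp (esymmAlgHom (Fin 2) ℂ 2)).toLinearMap (by
    rw [LinearMap.ker_eq_bot]
    exact Subtype.val_injective.comp hinj)
  refine li_congr h3 (fun i => ?_)
  have e1 : (esymm (Fin 2) ℂ 1) = X 0 + X 1 := by
    simp [esymm_one, Fin.sum_univ_two]
  have e2 : (esymm (Fin 2) ℂ 2) = X 0 * X 1 := by
    have : Finset.powersetCard 2 (Finset.univ : Finset (Fin 2)) = {Finset.univ} := by decide
    rw [esymm, this]
    simp
  have e3 : (monomial (Finsupp.single (0 : Fin 2) i.1 + Finsupp.single 1 i.2) (1 : ℂ))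
      = X 0 ^ i.1 * X 1 ^ i.2 := by
    rw [X_pow_eq_monomial, X_pow_eq_monomial, monomial_mul, one_mul]
  simp [e3, esymmAlgHom_apply, e1, e2]

open MvPolynomial in
lemma E_indep : LinearIndependent ℂ (fun i : ℕ × ℕ × Fin 2 =>
    ((X 0 + X 1) ^ i.1 * (X 0 * X 1) ^ i.2.1 * X 0 ^ (i.2.2 : ℕ) : MvPolynomial (Fin 2) ℂ)) := by
  classical
  rw [linearIndependent_iff']
  intro S g hg
  have hfix : ∀ e : Fin 2, ∑ i ∈ S with i.2.2 = e, g i • ((X 0 + X 1) ^ i.1 * (X 0 * X 1) ^ i.2.1 : MvPolynomial (Fin 2) ℂ) = 0 →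
      ∀ i ∈ S, i.2.2 = e → g i = 0 := by
    intro e he i hi hie
    have hI := e_indep.comp (fun w : {z : ℕ × ℕ × Fin 2 // z.2.2 = e} => (w.1.1, w.1.2.1)) (by
      rintro ⟨⟨a, b, c⟩, h⟩ ⟨⟨a', b', c'⟩, h'⟩ hh
      simp only at h h' hh
      simp only [Prod.mk.injEq] at hh
      simp [h, h', hh])
    rw [linearIndependent_iff'] at hI
    refine hI (S.subtype _) (fun w => g w.1) ?_ ⟨i, hie⟩ (by simpa using hi)
    rw [← he]
    exact Finset.sum_subtype_eq_sum_filter (f := fun w : ℕ × ℕ × Fin 2 =>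
      g w • ((X 0 + X 1) ^ w.1 * (X 0 * X 1) ^ w.2.1 : MvPolynomial (Fin 2) ℂ))
  have hsplit : ∀ T : MvPolynomial (Fin 2) ℂ,
      ∑ i ∈ S, g i • ((X 0 + X 1) ^ i.1 * (X 0 * X 1) ^ i.2.1 * T ^ (i.2.2 : ℕ) : MvPolynomial (Fin 2) ℂ)
      = ∑ i ∈ S with i.2.2 = 0, g i • ((X 0 + X 1) ^ i.1 * (X 0 * X 1) ^ i.2.1 : MvPolynomial (Fin 2) ℂ)
      + T * ∑ i ∈ S with i.2.2 = 1, g i • ((X 0 + X 1) ^ i.1 * (X 0 * X 1) ^ i.2.1 : MvPolynomial (Fin 2) ℂ) := by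
    intro T
    rw [Finset.sum_filter, Finset.sum_filter, Finset.mul_sum, ← Finset.sum_add_distrib]
    refine Finset.sum_congr rfl ?_
    rintro ⟨a, b, e⟩ -
    fin_cases e
    · simp
    · simp [mul_comm, mul_smul_comm]
  have h0 := hg
  have h1 := congrArg (rename (Equiv.swap (0 : Fin 2) 1)) hg
  simp only [map_sum, map_smul, map_mul, map_pow, map_add, rename_X, map_zero,
    Equiv.swap_apply_left, Equiv.swap_apply_right, add_comm (X 1) (X 0 : MvPolynomial (Fin 2) ℂ),
    mul_comm (X 1) (X 0 : MvPolynomial (Fin 2) ℂ)] at h1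
  rw [hsplit] at h0 h1
  have h2 : (X 0 - X 1 : MvPolynomial (Fin 2) ℂ) ≠ 0 := by
    rw [sub_ne_zero]
    intro h
    exact absurd (X_injective h) (by decide)
  have h3 : ∑ i ∈ S with i.2.2 = 1,
      g i • ((X 0 + X 1) ^ i.1 * (X 0 * X 1) ^ i.2.1 : MvPolynomial (Fin 2) ℂ) = 0 := by
    refine (mul_eq_zero.1 ?_).resolve_left h2
    linear_combination h0 - h1
  rw [h3, mul_zero, add_zero] at h0
  intro i hi
  have : i.2.2 = 0 ∨ i.2.2 = 1 := by omega
  rcases this with h | h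
  · exact hfix 0 h0 i hi h
  · exact hfix 1 h3 i hi h


open MvPolynomial in
theorem linindep_final (q t : ℂ) (hq : q ≠ 0) (ht : t ≠ 0) :
    LinearIndependent ℂ (pbwAplus q t) := by
  have hinj : Function.Injective (algebraMap (MvPolynomial (Fin 2) ℂ)
    (FractionRing (MvPolynomial (Fin 2) ℂ))) := IsFractionRing.injective _ _
  refine linindep (K := FractionRing (MvPolynomial (Fin 2) ℂ)) q t hq ht
    (algebraMap (MvPolynomial (Fin 2) ℂ) _ (X 0)) (algebraMap (MvPolynomial (Fin 2) ℂ) _ (X 1))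
    ?_ ?_ ?_ ?_
  · rw [map_ne_zero_iff _ hinj]; exact X_ne_zero _
  · rw [map_ne_zero_iff _ hinj]; exact X_ne_zero _
  · intro α β h
    rw [IsScalarTower.algebraMap_apply ℂ (MvPolynomial (Fin 2) ℂ) (FractionRing (MvPolynomial (Fin 2) ℂ)),
      IsScalarTower.algebraMap_apply ℂ (MvPolynomial (Fin 2) ℂ) (FractionRing (MvPolynomial (Fin 2) ℂ)),
      ← map_mul, ← map_mul, ← map_add, map_eq_zero_iff _ hinj] at h
    have := congrArg (eval ![1, 0]) h
    simpa [algebraMap_eq] using this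
  · have := E_indep.map' (IsScalarTower.toAlgHom ℂ (MvPolynomial (Fin 2) ℂ)
      (FractionRing (MvPolynomial (Fin 2) ℂ))).toLinearMap (by
        rw [LinearMap.ker_eq_bot]; exact hinj)
    refine li_congr this (fun i => ?_)
    simp


section span
variable (q t : ℂ)

lemma rel {a b : FA} (h : ARel q t a b) :
    RingQuot.mkAlgHom ℂ (ARel q t) a = RingQuot.mkAlgHom ℂ (ARel q t) b :=
  RingQuot.mkAlgHom_rel ℂ h

lemma m_P2P1 : P2 q t * P1 q t = P1 q t * P2 q t := by
  simpa only [P1, P2, Q1, Q2, R, map_mul, map_smul, map_add, map_sub] using rel q t ARel.P2P1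
lemma m_Q2Q1 : Q2 q t * Q1 q t = Q1 q t * Q2 q t := by
  simpa only [P1, P2, Q1, Q2, R, map_mul, map_smul, map_add, map_sub] using rel q t ARel.Q2Q1
lemma m_P2Q2 : P2 q t * Q2 q t = (q⁻¹ ^ 4) • (Q2 q t * P2 q t) := by
  simpa only [P1, P2, Q1, Q2, R, map_mul, map_smul, map_add, map_sub] using rel q t ARel.P2Q2
lemma m_P2Q1 : P2 q t * Q1 q t = (q⁻¹ ^ 2) • (Q1 q t * P2 q t) := by
  simpa only [P1, P2, Q1, Q2, R, map_mul, map_smul, map_add, map_sub] using rel q t ARel.P2Q1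
lemma m_P1Q2 : P1 q t * Q2 q t = (q⁻¹ ^ 2) • (Q2 q t * P1 q t) := by
  simpa only [P1, P2, Q1, Q2, R, map_mul, map_smul, map_add, map_sub] using rel q t ARel.P1Q2
lemma m_P1Q1 : P1 q t * Q1 q t = Q1 q t * P1 q t + (q⁻¹ ^ 2 - 1) • R q t := by
  simpa only [P1, P2, Q1, Q2, R, map_mul, map_smul, map_add, map_sub] using rel q t ARel.P1Q1
lemma m_P2R : P2 q t * R q t = (q⁻¹ ^ 2) • (R q t * P2 q t) := by
  simpa only [P1, P2, Q1, Q2, R, map_mul, map_smul, map_add, map_sub] using rel q t ARel.P2R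
lemma m_RQ2 : R q t * Q2 q t = (q⁻¹ ^ 2) • (Q2 q t * R q t) := by
  simpa only [P1, P2, Q1, Q2, R, map_mul, map_smul, map_add, map_sub] using rel q t ARel.RQ2
lemma m_P1R : P1 q t * R q t
    = (q⁻¹ ^ 2) • (R q t * P1 q t) + (1 - q⁻¹ ^ 2) • (Q1 q t * P2 q t) := by
  simpa only [P1, P2, Q1, Q2, R, map_mul, map_smul, map_add, map_sub] using rel q t ARel.P1R
lemma m_RQ1 : R q t * Q1 q t
    = (q⁻¹ ^ 2) • (Q1 q t * R q t) + (1 - q⁻¹ ^ 2) • (Q2 q t * P1 q t) := by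
  simpa only [P1, P2, Q1, Q2, R, map_mul, map_smul, map_add, map_sub] using rel q t ARel.RQ1
lemma m_RR : R q t * R q t = ((1 + t ^ 2) * (q⁻¹ ^ 2 + t⁻¹ ^ 2)) • (Q2 q t * P2 q t)
        - (q⁻¹ ^ 2) • (Q2 q t * P1 q t * P1 q t)
        - (q⁻¹ ^ 2) • (Q1 q t * Q1 q t * P2 q t)
        + (q⁻¹ ^ 2) • (Q1 q t * R q t * P1 q t) := by
  simpa only [P1, P2, Q1, Q2, R, map_mul, map_smul, map_add, map_sub] using rel q t ARel.RR

/-- index set of a degree -/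
def idx (M N : ℕ) : Set (ℕ × ℕ × Fin 2 × ℕ × ℕ) :=
  {x | x.1 + 2 * x.2.1 + (x.2.2.1 : ℕ) = M ∧ x.2.2.2.1 + 2 * x.2.2.2.2 + (x.2.2.1 : ℕ) = N}

def W (M N : ℕ) : Submodule ℂ (AlgA q t) := Submodule.span ℂ (pbwAplus q t '' idx M N)

variable {q t}

lemma memW {M N : ℕ} (a1 a2 : ℕ) (e : Fin 2) (b1 b2 : ℕ)
    (hM : a1 + 2 * a2 + (e : ℕ) = M) (hN : b1 + 2 * b2 + (e : ℕ) = N) :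
    Q1 q t ^ a1 * Q2 q t ^ a2 * R q t ^ (e : ℕ) * P1 q t ^ b1 * P2 q t ^ b2 ∈ W q t M N :=
  Submodule.subset_span ⟨(a1, a2, e, b1, b2), ⟨hM, hN⟩, rfl⟩

lemma mem_of_gen {g : AlgA q t} {M N M' N' : ℕ}
    (h : ∀ a1 a2 : ℕ, ∀ e : Fin 2, ∀ b1 b2 : ℕ,
      a1 + 2 * a2 + (e : ℕ) = M → b1 + 2 * b2 + (e : ℕ) = N →
      g * (Q1 q t ^ a1 * Q2 q t ^ a2 * R q t ^ (e : ℕ) * P1 q t ^ b1 * P2 q t ^ b2) ∈ W q t M' N')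
    {z : AlgA q t} (hz : z ∈ W q t M N) : g * z ∈ W q t M' N' := by
  have : W q t M N ≤ (W q t M' N').comap (LinearMap.mulLeft ℂ g) := by
    refine Submodule.span_le.2 ?_
    rintro _ ⟨⟨a1, a2, e, b1, b2⟩, ⟨hM, hN⟩, rfl⟩
    exact h a1 a2 e b1 b2 hM hN
  exact this hz

lemma c_Q1 {M N : ℕ} {z : AlgA q t} (hz : z ∈ W q t M N) : Q1 q t * z ∈ W q t (M + 1) N := by
  refine mem_of_gen (fun a1 a2 e b1 b2 hM hN => ?_) hz
  have := memW (q := q) (t := t) (a1 + 1) a2 e b1 b2 (M := M + 1) (N := N) (by omega) hN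
  simpa only [pow_succ', mul_assoc] using this

lemma c_Q2 {M N : ℕ} {z : AlgA q t} (hz : z ∈ W q t M N) : Q2 q t * z ∈ W q t (M + 2) N := by
  refine mem_of_gen (fun a1 a2 e b1 b2 hM hN => ?_) hz
  have := memW (q := q) (t := t) a1 (a2 + 1) e b1 b2 (M := M + 2) (N := N) (by omega) hN
  have hc : Q2 q t * Q1 q t ^ a1 = Q1 q t ^ a1 * Q2 q t :=
    (show Commute (Q2 q t) (Q1 q t) from m_Q2Q1 q t).pow_right a1
  simp only [pow_succ', mul_assoc] at this ⊢
  rw [← mul_assoc, hc, mul_assoc]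
  exact this

/-- tails -/
lemma tail_P1 (b1 b2 : ℕ) : P1 q t * (P1 q t ^ b1 * P2 q t ^ b2)
    = P1 q t ^ (b1 + 1) * P2 q t ^ b2 := by
  rw [pow_succ', mul_assoc]
lemma tail_P2 (b1 b2 : ℕ) : P2 q t * (P1 q t ^ b1 * P2 q t ^ b2)
    = P1 q t ^ b1 * P2 q t ^ (b2 + 1) := by
  have hc : P2 q t * P1 q t ^ b1 = P1 q t ^ b1 * P2 q t :=
    (show Commute (P2 q t) (P1 q t) from m_P2P1 q t).pow_right b1
  rw [pow_succ', ← mul_assoc, hc, mul_assoc]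

lemma memT {M N : ℕ} (b1 b2 : ℕ) (hM : 0 = M) (hN : b1 + 2 * b2 = N) :
    P1 q t ^ b1 * P2 q t ^ b2 ∈ W q t M N := by
  simpa using memW (q := q) (t := t) 0 0 0 b1 b2 (M := M) (N := N) (by simpa using hM)
    (by simpa using hN)
lemma memRT {M N : ℕ} (b1 b2 : ℕ) (hM : 1 = M) (hN : b1 + 2 * b2 + 1 = N) :
    R q t * (P1 q t ^ b1 * P2 q t ^ b2) ∈ W q t M N := by
  simpa [mul_assoc] using memW (q := q) (t := t) 0 0 1 b1 b2 (M := M) (N := N) (by simpa using hM)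
    (by simpa using hN)

lemma g_P2 (a1 a2 : ℕ) (e : Fin 2) (b1 b2 M N : ℕ)
      (hM : a1 + 2 * a2 + (e : ℕ) = M) (hN : b1 + 2 * b2 + (e : ℕ) + 2 = N) :
      P2 q t * (Q1 q t ^ a1 * (Q2 q t ^ a2 * (R q t ^ (e : ℕ) * (P1 q t ^ b1 * P2 q t ^ b2))))
        ∈ W q t M N := by
  induction a1 generalizing M with
  | succ a1 ih =>
    obtain ⟨M, rfl⟩ : ∃ M', M = M' + 1 := ⟨M - 1, by omega⟩
    rw [pow_succ', mul_assoc (Q1 q t), ← mul_assoc, m_P2Q1, smul_mul_assoc, mul_assoc]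
    exact Submodule.smul_mem _ _ (c_Q1 (ih M (by omega)))
  | zero =>
    rw [pow_zero, one_mul]
    induction a2 generalizing M with
    | succ a2 ih =>
      obtain ⟨M, rfl⟩ : ∃ M', M = M' + 2 := ⟨M - 2, by omega⟩
      rw [pow_succ', mul_assoc (Q2 q t), ← mul_assoc, m_P2Q2, smul_mul_assoc, mul_assoc]
      exact Submodule.smul_mem _ _ (c_Q2 (ih M (by omega)))
    | zero =>
      rw [pow_zero, one_mul]
      fin_cases e
      · simp only [Fin.zero_eta, Fin.val_zero, pow_zero, one_mul, Fin.isValue] at hM hN ⊢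
        rw [tail_P2]
        exact memT _ _ (by omega) (by omega)
      · simp only [Fin.mk_one, Fin.val_one, pow_one, Fin.isValue] at hM hN ⊢
        rw [← mul_assoc, m_P2R, smul_mul_assoc, mul_assoc, tail_P2]
        exact Submodule.smul_mem _ _ (memRT _ _ (by omega) (by omega))

lemma g_P1R (a1 a2 : ℕ) (e : Fin 2) (b1 b2 M N : ℕ)
      (hM : a1 + 2 * a2 + (e : ℕ) = M) (hN : b1 + 2 * b2 + (e : ℕ) + 1 = N) :
      P1 q t * (Q1 q t ^ a1 * (Q2 q t ^ a2 * (R q t ^ (e : ℕ) * (P1 q t ^ b1 * P2 q t ^ b2))))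
        ∈ W q t M N ∧
      R q t * (Q1 q t ^ a1 * (Q2 q t ^ a2 * (R q t ^ (e : ℕ) * (P1 q t ^ b1 * P2 q t ^ b2))))
        ∈ W q t (M + 1) N := by
  induction a1 generalizing M with
  | succ a1 ih =>
    obtain ⟨M, rfl⟩ : ∃ M', M = M' + 1 := ⟨M - 1, by omega⟩
    obtain ⟨i1, i2⟩ := ih M (by omega)
    rw [pow_succ', mul_assoc (Q1 q t)]
    generalize Q1 q t ^ a1 * (Q2 q t ^ a2 * (R q t ^ (e : ℕ) * (P1 q t ^ b1 * P2 q t ^ b2))) = z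
      at i1 i2
    constructor
    · rw [← mul_assoc, m_P1Q1, add_mul, smul_mul_assoc, mul_assoc]
      exact add_mem (c_Q1 i1) (Submodule.smul_mem _ _ i2)
    · rw [← mul_assoc, m_RQ1, add_mul, smul_mul_assoc, smul_mul_assoc, mul_assoc, mul_assoc]
      exact add_mem (Submodule.smul_mem _ _ (c_Q1 i2)) (Submodule.smul_mem _ _ (c_Q2 i1))
  | zero =>
    rw [pow_zero, one_mul]
    induction a2 generalizing M with
    | succ a2 ih =>
      obtain ⟨M, rfl⟩ : ∃ M', M = M' + 2 := ⟨M - 2, by omega⟩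
      obtain ⟨i1, i2⟩ := ih M (by omega)
      rw [pow_succ', mul_assoc (Q2 q t)]
      generalize Q2 q t ^ a2 * (R q t ^ (e : ℕ) * (P1 q t ^ b1 * P2 q t ^ b2)) = z
        at i1 i2
      constructor
      · rw [← mul_assoc, m_P1Q2, smul_mul_assoc, mul_assoc]
        exact Submodule.smul_mem _ _ (c_Q2 i1)
      · rw [← mul_assoc, m_RQ2, smul_mul_assoc, mul_assoc]
        exact Submodule.smul_mem _ _ (c_Q2 i2)
    | zero =>
      rw [pow_zero, one_mul]
      fin_cases e
      · simp only [Fin.zero_eta, Fin.val_zero, pow_zero, one_mul, Fin.isValue] at hM hN ⊢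
        constructor
        · rw [tail_P1]
          exact memT _ _ (by omega) (by omega)
        · exact memRT _ _ (by omega) (by omega)
      · simp only [Fin.mk_one, Fin.val_one, pow_one, Fin.isValue] at hM hN ⊢
        obtain rfl : M = 1 := by omega
        constructor
        · rw [← mul_assoc, m_P1R, add_mul, smul_mul_assoc, smul_mul_assoc, mul_assoc, mul_assoc,
            tail_P2, tail_P1]
          refine add_mem (Submodule.smul_mem _ _ (memRT _ _ (by omega) (by omega)))
            (Submodule.smul_mem _ _ (c_Q1 (memT _ _ rfl (by omega))))
        · rw [← mul_assoc, m_RR]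
          simp only [add_mul, sub_mul, smul_mul_assoc, mul_assoc, tail_P1, tail_P2]
          refine add_mem (sub_mem (sub_mem ?_ ?_) ?_) ?_ <;> refine Submodule.smul_mem _ _ ?_
          · exact c_Q2 (memT _ _ rfl (by omega))
          · exact c_Q2 (memT _ _ rfl (by omega))
          · exact c_Q1 (c_Q1 (memT _ _ rfl (by omega)))
          · exact c_Q1 (memRT _ _ rfl (by omega))

lemma c_gen (g : AGen) (hg : plusGen g) {M N : ℕ} {z : AlgA q t} (hz : z ∈ W q t M N) :
    genA q t g * z ∈ W q t (aDeg1 g + M) (aDeg2 g + N) := by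
  cases g with
  | P1 =>
    change P1 q t * z ∈ W q t (aDeg1 .P1 + M) (aDeg2 .P1 + N)
    refine mem_of_gen (fun a1 a2 e b1 b2 hM hN => ?_) hz
    have := (g_P1R (q := q) (t := t) a1 a2 e b1 b2 _ _ hM rfl).1
    simp only [mul_assoc]
    convert this using 1
    congr 1 <;> simp [aDeg1, aDeg2] <;> omega
  | P2 =>
    change P2 q t * z ∈ W q t (aDeg1 .P2 + M) (aDeg2 .P2 + N)
    refine mem_of_gen (fun a1 a2 e b1 b2 hM hN => ?_) hz
    have := (g_P2 (q := q) (t := t) a1 a2 e b1 b2 _ _ hM rfl)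
    simp only [mul_assoc]
    convert this using 1
    congr 1 <;> simp [aDeg1, aDeg2] <;> omega
  | P2i => exact hg.elim
  | Q1 =>
    change Q1 q t * z ∈ W q t (aDeg1 .Q1 + M) (aDeg2 .Q1 + N)
    simpa only [aDeg1, aDeg2, zero_add, add_comm 1 M] using c_Q1 hz
  | Q2 =>
    change Q2 q t * z ∈ W q t (aDeg1 .Q2 + M) (aDeg2 .Q2 + N)
    simpa only [aDeg1, aDeg2, zero_add, add_comm 2 M] using c_Q2 hz
  | Q2i => exact hg.elim
  | R =>
    change R q t * z ∈ W q t (aDeg1 .R + M) (aDeg2 .R + N)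
    refine mem_of_gen (fun a1 a2 e b1 b2 hM hN => ?_) hz
    have := (g_P1R (q := q) (t := t) a1 a2 e b1 b2 _ _ hM rfl).2
    simp only [mul_assoc]
    convert this using 1
    congr 1 <;> simp [aDeg1, aDeg2] <;> omega

lemma word_mem (w : List AGen) (hw : ∀ s ∈ w, plusGen s) :
    (w.map (genA q t)).prod ∈ W q t (w.map aDeg1).sum (w.map aDeg2).sum := by
  induction w with
  | nil => simpa using memT (q := q) (t := t) 0 0 (M := 0) (N := 0) rfl rfl
  | cons g w ih =>
    simp only [List.map_cons, List.prod_cons, List.sum_cons]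
    exact c_gen g (hw g (by simp)) (ih fun s hs => hw s (by simp [hs]))

lemma aPiece_eq (M N : ℕ) : aPiece q t M N = W q t M N := by
  apply le_antisymm
  · refine Submodule.span_le.2 ?_
    rintro _ ⟨w, hw, rfl, rfl, rfl⟩
    exact word_mem w hw
  · refine Submodule.span_mono ?_
    rintro _ ⟨⟨a1, a2, e, b1, b2⟩, ⟨hM, hN⟩, rfl⟩
    simp only at hM hN
    refine ⟨List.replicate a1 .Q1 ++ List.replicate a2 .Q2 ++ List.replicate e .R ++
      List.replicate b1 .P1 ++ List.replicate b2 .P2, ?_, ?_, ?_, ?_⟩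
    · intro s hs
      simp only [List.mem_append, List.mem_replicate] at hs
      rcases hs with (((⟨-, rfl⟩ | ⟨-, rfl⟩) | ⟨-, rfl⟩) | ⟨-, rfl⟩) | ⟨-, rfl⟩ <;> trivial
    · simp [aDeg1]; omega
    · simp [aDeg2]; omega
    · simp [pbwAplus, mul_assoc]; rfl

lemma span_eq : Submodule.span ℂ (Set.range (pbwAplus q t))
        = Subalgebra.toSubmodule
            (Algebra.adjoin ℂ {P1 q t, P2 q t, Q1 q t, Q2 q t, R q t}) := by
  apply le_antisymm
  · refine Submodule.span_le.2 ?_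
    rintro _ ⟨⟨a1, a2, e, b1, b2⟩, rfl⟩
    have h : ∀ z ∈ ({P1 q t, P2 q t, Q1 q t, Q2 q t, R q t} : Set (AlgA q t)),
      z ∈ Algebra.adjoin ℂ {P1 q t, P2 q t, Q1 q t, Q2 q t, R q t} :=
      fun z hz => Algebra.subset_adjoin hz
    simp only [SetLike.mem_coe, Subalgebra.mem_toSubmodule, pbwAplus]
    refine mul_mem (mul_mem (mul_mem (mul_mem ?_ ?_) ?_) ?_) ?_ <;>
      refine pow_mem (h _ ?_) _ <;> simp
  · rw [Algebra.adjoin_eq_span]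
    refine Submodule.span_le.2 ?_
    intro z hz
    have : ∃ w : List AGen, (∀ s ∈ w, plusGen s) ∧ z = (w.map (genA q t)).prod := by
      induction hz using Submonoid.closure_induction with
      | mem z hz =>
        simp only [Set.mem_insert_iff, Set.mem_singleton_iff] at hz
        rcases hz with rfl | rfl | rfl | rfl | rfl
        · exact ⟨[.P1], by simp [plusGen], by simp [genA, P1]⟩
        · exact ⟨[.P2], by simp [plusGen], by simp [genA, P2]⟩
        · exact ⟨[.Q1], by simp [plusGen], by simp [genA, Q1]⟩
        · exact ⟨[.Q2], by simp [plusGen], by simp [genA, Q2]⟩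
        · exact ⟨[.R], by simp [plusGen], by simp [genA, R]⟩
      | one => exact ⟨[], by simp, by simp⟩
      | mul z z' _ _ h h' =>
        obtain ⟨w, hw, rfl⟩ := h
        obtain ⟨w', hw', rfl⟩ := h'
        refine ⟨w ++ w', ?_, by simp⟩
        intro s hs
        rcases List.mem_append.1 hs with hs | hs
        exacts [hw s hs, hw' s hs]
    obtain ⟨w, hw, rfl⟩ := this
    exact Submodule.span_mono (Set.image_subset_range _ _) (word_mem w hw)

lemma rank_eq (hli : LinearIndependent ℂ (pbwAplus q t)) (M N : ℕ) :
      Module.rank ℂ (aPiece q t M N)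
        = Nat.card {x : ℕ × ℕ × ℕ × ℕ × Fin 2 //
            x.1 + 2 * x.2.1 + (x.2.2.2.2 : ℕ) = M ∧
            x.2.2.1 + 2 * x.2.2.2.1 + (x.2.2.2.2 : ℕ) = N} := by
  have hfin : Finite {x : ℕ × ℕ × ℕ × ℕ × Fin 2 //
            x.1 + 2 * x.2.1 + (x.2.2.2.2 : ℕ) = M ∧
            x.2.2.1 + 2 * x.2.2.2.1 + (x.2.2.2.2 : ℕ) = N} := by
    refine Finite.of_injective (β := Fin (M + 1) × Fin (M + 1) × Fin (N + 1) × Fin (N + 1) × Fin 2)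
      (fun x => (⟨x.1.1, by have := x.2; omega⟩, ⟨x.1.2.1, by have := x.2; omega⟩,
        ⟨x.1.2.2.1, by have := x.2; omega⟩, ⟨x.1.2.2.2.1, by have := x.2; omega⟩,
        x.1.2.2.2.2)) ?_
    rintro ⟨⟨a, b, c, d, e⟩, h⟩ ⟨⟨a', b', c', d', e'⟩, h'⟩ hh
    simpa using hh
  have e : idx M N ≃ {x : ℕ × ℕ × ℕ × ℕ × Fin 2 //
            x.1 + 2 * x.2.1 + (x.2.2.2.2 : ℕ) = M ∧
            x.2.2.1 + 2 * x.2.2.2.1 + (x.2.2.2.2 : ℕ) = N} :=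
    { toFun := fun x => ⟨(x.1.1, x.1.2.1, x.1.2.2.2.1, x.1.2.2.2.2, x.1.2.2.1), x.2⟩
      invFun := fun x => ⟨(x.1.1, x.1.2.1, x.1.2.2.2.2, x.1.2.2.1, x.1.2.2.2.1), x.2⟩
      left_inv := fun x => rfl
      right_inv := fun x => rfl }
  have h1 : LinearIndependent ℂ (fun i : idx M N => pbwAplus q t i.1) :=
    hli.comp _ Subtype.val_injective
  rw [aPiece_eq, W, Set.image_eq_range, rank_span h1, Cardinal.mk_range_eq _ h1.injective,
    Nat.cast_card]
  exact Cardinal.mk_congr e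
end span

end PBW8

/-- Let `𝒜⁺` be the subalgebra of `𝒜` generated by `P₁, P₂, Q₁, Q₂, R`.
The monomials `Q₁^{a₁}Q₂^{a₂}R^{ε}P₁^{b₁}P₂^{b₂}` with `ε ∈ {0,1}`,
`a₁, a₂, b₁, b₂ ∈ ℕ₀` form a ℂ-basis of `𝒜⁺`; consequently, the dimension of the
degree-`(M,N)` graded piece of `𝒜⁺` equals the number of tuples
`(a₁, a₂, b₁, b₂, ε) ∈ ℕ₀⁴ × {0,1}` with `a₁ + 2a₂ + ε = M` and `b₁ + 2b₂ + ε = N`. -/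
theorem stmt8 (q t : ℂ) (hq : q ≠ 0) (ht : t ≠ 0) :
    (LinearIndependent ℂ (pbwAplus q t) ∧
      Submodule.span ℂ (Set.range (pbwAplus q t))
        = Subalgebra.toSubmodule
            (Algebra.adjoin ℂ {P1 q t, P2 q t, Q1 q t, Q2 q t, R q t})) ∧
    ∀ M N : ℕ,
      Module.rank ℂ (aPiece q t M N)
        = Nat.card {x : ℕ × ℕ × ℕ × ℕ × Fin 2 //
            x.1 + 2 * x.2.1 + (x.2.2.2.2 : ℕ) = M ∧
            x.2.2.1 + 2 * x.2.2.2.1 + (x.2.2.2.2 : ℕ) = N} := by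
  exact ⟨⟨PBW8.linindep_final q t hq ht, PBW8.span_eq⟩,
    PBW8.rank_eq (PBW8.linindep_final q t hq ht)⟩
end
end

section
/- Let H⁺_{t,q} be the subalgebra of H_{t,q} generated by T, T⁻¹, X₁, X₂, Y₁, Y₂, with the ℤ²-grading determined by deg X₁ = deg X₂ = (0,1), deg Y₁ = deg Y₂ = (1,0), deg T = (0,0). For every (M,N) ∈ ℕ₀², the ℂ-dimension of the degree-(M,N) graded piece of eH⁺_{t,q}e equals the number of tuples (a₁, a₂, b₁, b₂, ε) ∈ ℕ₀⁴ × {0,1} with a₁ + 2a₂ + ε = M and b₁ + 2b₂ + ε = N. -/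
noncomputable section

variable (q t : ℂ)

/-- The image of a generator of the DAHA in `H_{t,q}`. -/
def genD (q t : ℂ) (x : DGen) : DAHA q t := RingQuot.mkAlgHom ℂ (DRel q t) (gD x)

/-- The generators of the subalgebra `H⁺_{t,q}`: `T, T⁻¹, X₁, X₂, Y₁, Y₂`. -/
def hPlusGen : DGen → Prop
  | .T => True | .Ti => True | .X1 => True | .X2 => True | .Y1 => True | .Y2 => True
  | _ => False

/-- The `Y`-degree of a generator: `deg Y₁ = deg Y₂ = (1,0)`, `deg X₁ = deg X₂ = (0,1)`,
`deg T = deg T⁻¹ = (0,0)`. -/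
def hDeg1 : DGen → ℕ
  | .Y1 => 1 | .Y2 => 1
  | _ => 0

/-- The `X`-degree of a generator. -/
def hDeg2 : DGen → ℕ
  | .X1 => 1 | .X2 => 1
  | _ => 0

/-- The degree-`(M,N)` graded piece of `H⁺_{t,q}`: the ℂ-span of all products of the
generators `T, T⁻¹, X₁, X₂, Y₁, Y₂` of total degree `(M,N)`. -/
def hPiece (q t : ℂ) (M N : ℕ) : Submodule ℂ (DAHA q t) :=
  Submodule.span ℂ
    {x | ∃ w : List DGen, (∀ s ∈ w, hPlusGen s) ∧
      (w.map hDeg1).sum = M ∧ (w.map hDeg2).sum = N ∧ x = (w.map (genD q t)).prod}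

/-- Points at which the difference-reflection operators are defined. -/
structure Om (q : ℂ) : Type where
  x1 : ℂ
  x2 : ℂ
  y1 : ℂ
  y2 : ℂ
  hx1 : x1 ≠ 0
  hx2 : x2 ≠ 0
  hy1 : y1 ≠ 0
  hy2 : y2 ≠ 0
  hx : ∀ k : ℤ, x1 ≠ (q ^ 2) ^ k * x2
  hy : y1 ≠ y2

namespace Om

theorem ext' {q : ℂ} {p r : Om q} (h1 : p.x1 = r.x1) (h2 : p.x2 = r.x2) (h3 : p.y1 = r.y1)
    (h4 : p.y2 = r.y2) : p = r := by
  cases p; cases r; simp_all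

theorem hx12 {q : ℂ} (p : Om q) : p.x1 - p.x2 ≠ 0 := by
  have := p.hx 0
  simp at this
  exact sub_ne_zero.mpr this
theorem hx21 {q : ℂ} (p : Om q) : p.x2 - p.x1 ≠ 0 := by
  have := p.hx12
  rw [← neg_sub]; exact neg_ne_zero.mpr this
theorem hy12 {q : ℂ} (p : Om q) : p.y1 - p.y2 ≠ 0 := sub_ne_zero.mpr p.hy
theorem hy21 {q : ℂ} (p : Om q) : p.y2 - p.y1 ≠ 0 := sub_ne_zero.mpr p.hy.symm

def sx {q : ℂ} (hq : q ≠ 0) (p : Om q) : Om q where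
  x1 := p.x2
  x2 := p.x1
  y1 := p.y1
  y2 := p.y2
  hx1 := p.hx2
  hx2 := p.hx1
  hy1 := p.hy1
  hy2 := p.hy2
  hx := by
    intro k h
    apply p.hx (-k)
    rw [h, ← mul_assoc, ← zpow_add₀ (pow_ne_zero 2 hq)]
    simp
  hy := p.hy

def sy {q : ℂ} (p : Om q) : Om q where
  x1 := p.x1
  x2 := p.x2
  y1 := p.y2
  y2 := p.y1
  hx1 := p.hx1
  hx2 := p.hx2
  hy1 := p.hy2
  hy2 := p.hy1
  hx := p.hx
  hy := p.hy.symm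

/-- `(x1, x2) ↦ (q² x2, x1)` -/
def r {q : ℂ} (hq : q ≠ 0) (p : Om q) : Om q where
  x1 := q ^ 2 * p.x2
  x2 := p.x1
  y1 := p.y1
  y2 := p.y2
  hx1 := mul_ne_zero (pow_ne_zero 2 hq) p.hx2
  hx2 := p.hx1
  hy1 := p.hy1
  hy2 := p.hy2
  hx := by
    intro k h
    apply p.hx (1 - k)
    have h0 := pow_ne_zero 2 hq
    rw [sub_eq_add_neg, zpow_add₀ h0, zpow_one, mul_right_comm, h, mul_right_comm,
      ← zpow_add₀ h0]
    simp
  hy := p.hy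

/-- inverse of `r`: `(x1, x2) ↦ (x2, q⁻² x1)` -/
def ri {q : ℂ} (hq : q ≠ 0) (p : Om q) : Om q where
  x1 := p.x2
  x2 := (q ^ 2)⁻¹ * p.x1
  y1 := p.y1
  y2 := p.y2
  hx1 := p.hx2
  hx2 := mul_ne_zero (inv_ne_zero (pow_ne_zero 2 hq)) p.hx1
  hy1 := p.hy1
  hy2 := p.hy2
  hx := by
    intro k h
    apply p.hx (1 - k)
    have h0 := pow_ne_zero 2 hq
    rw [sub_eq_add_neg, zpow_add₀ h0, zpow_one, h]
    have : (q^2)^k ≠ 0 := zpow_ne_zero _ h0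
    rw [zpow_neg]
    field_simp
  hy := p.hy

variable {q : ℂ} (hq : q ≠ 0) (p : Om q)
@[simp] theorem sx_x1 : (sx hq p).x1 = p.x2 := rfl
@[simp] theorem sx_x2 : (sx hq p).x2 = p.x1 := rfl
@[simp] theorem sx_y1 : (sx hq p).y1 = p.y1 := rfl
@[simp] theorem sx_y2 : (sx hq p).y2 = p.y2 := rfl
@[simp] theorem sy_x1 : (sy p).x1 = p.x1 := rfl
@[simp] theorem sy_x2 : (sy p).x2 = p.x2 := rfl
@[simp] theorem sy_y1 : (sy p).y1 = p.y2 := rfl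
@[simp] theorem sy_y2 : (sy p).y2 = p.y1 := rfl
@[simp] theorem r_x1 : (r hq p).x1 = q ^ 2 * p.x2 := rfl
@[simp] theorem r_x2 : (r hq p).x2 = p.x1 := rfl
@[simp] theorem r_y1 : (r hq p).y1 = p.y1 := rfl
@[simp] theorem r_y2 : (r hq p).y2 = p.y2 := rfl
@[simp] theorem ri_x1 : (ri hq p).x1 = p.x2 := rfl
@[simp] theorem ri_x2 : (ri hq p).x2 = (q ^ 2)⁻¹ * p.x1 := rfl
@[simp] theorem ri_y1 : (ri hq p).y1 = p.y1 := rfl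
@[simp] theorem ri_y2 : (ri hq p).y2 = p.y2 := rfl
@[simp] theorem sxsx : sx hq (sx hq p) = p := ext' rfl rfl rfl rfl
@[simp] theorem sysy : sy (sy p) = p := ext' rfl rfl rfl rfl
@[simp] theorem sysx : sy (sx hq p) = sx hq (sy p) := ext' rfl rfl rfl rfl
@[simp] theorem syr : sy (r hq p) = r hq (sy p) := ext' rfl rfl rfl rfl
@[simp] theorem syri : sy (ri hq p) = ri hq (sy p) := ext' rfl rfl rfl rfl
@[simp] theorem rri : r hq (ri hq p) = p := ext' (by simp [hq]) rfl rfl rfl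
@[simp] theorem rir : ri hq (r hq p) = p := ext' rfl (by simp [hq]) rfl rfl
@[simp] theorem sxrr : sx hq (r hq (r hq p)) = r hq (r hq (sx hq p)) := ext' rfl rfl rfl rfl

end Om

/-- multiplication operator -/
def opM {q : ℂ} (g : Om q → ℂ) : Module.End ℂ (Om q → ℂ) where
  toFun f := fun p => g p * f p
  map_add' f h := by ext p; simp [mul_add]
  map_smul' c f := by ext p; simp; ring

/-- Hecke operator in the `y` variables -/
def opTy {q : ℂ} (t : ℂ) : Module.End ℂ (Om q → ℂ) where
  toFun f := fun p => t * f p.sy + (t - t⁻¹) * p.y1 * (f p - f p.sy) / (p.y1 - p.y2)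
  map_add' f h := by ext p; simp; ring
  map_smul' c f := by ext p; simp; ring

def opT {q : ℂ} (hq : q ≠ 0) (t : ℂ) : Module.End ℂ (Om q → ℂ) where
  toFun f := fun p => opTy t f (p.sx hq) +
    (t - t⁻¹) * p.x2 * (f (p.sx hq) - f p) / (p.x1 - p.x2)
  map_add' f h := by ext p; simp; ring
  map_smul' c f := by ext p; simp; ring

def opR {q : ℂ} (hq : q ≠ 0) : Module.End ℂ (Om q → ℂ) where
  toFun f := fun p => f (p.r hq)
  map_add' f h := by ext p; simp
  map_smul' c f := by ext p; simp

def opRi {q : ℂ} (hq : q ≠ 0) : Module.End ℂ (Om q → ℂ) where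
  toFun f := fun p => f (p.ri hq)
  map_add' f h := by ext p; simp
  map_smul' c f := by ext p; simp

section rep
variable {q : ℂ} (hq : q ≠ 0) {t : ℂ} (ht : t ≠ 0)

def opTi (hq : q ≠ 0) (t : ℂ) : Module.End ℂ (Om q → ℂ) := opT hq t - (t - t⁻¹) • 1
def opTyi (t : ℂ) : Module.End ℂ (Om q → ℂ) := opTy t - (t - t⁻¹) • 1
def opPi (hq : q ≠ 0) (t : ℂ) : Module.End ℂ (Om q → ℂ) := opR hq * opM (fun p => p.y2) * opTy t
def opPii (hq : q ≠ 0) (t : ℂ) : Module.End ℂ (Om q → ℂ) :=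
  opTyi t * opM (fun p => p.y2⁻¹) * opRi hq

theorem opM_apply (g f : Om q → ℂ) (p : Om q) : opM g f p = g p * f p := rfl
theorem opTy_apply (f : Om q → ℂ) (p : Om q) : opTy t f p =
  t * f p.sy + (t - t⁻¹) * p.y1 * (f p - f p.sy) / (p.y1 - p.y2) := rfl
theorem opT_apply (f : Om q → ℂ) (p : Om q) : opT hq t f p = opTy t f (p.sx hq) +
    (t - t⁻¹) * p.x2 * (f (p.sx hq) - f p) / (p.x1 - p.x2) := rfl
theorem opR_apply (f : Om q → ℂ) (p : Om q) : opR hq f p = f (p.r hq) := rfl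
theorem opRi_apply (f : Om q → ℂ) (p : Om q) : opRi hq f p = f (p.ri hq) := rfl

include ht in
theorem opTy_sq : opTy (q := q) t * opTy t = 1 + (t - t⁻¹) • opTy t := by
  ext f p
  have h1 := p.hy12
  have h2 := p.hy21
  simp [opTy_apply]
  field_simp
  ring

include ht in
theorem opT_sq : opT hq t * opT hq t = 1 + (t - t⁻¹) • opT hq t := by
  ext f p
  have h1 := p.hy12
  have h2 := p.hy21
  have h3 := p.hx12
  have h4 := p.hx21
  simp [opTy_apply, opT_apply]
  field_simp
  ring

include ht in
theorem opT_opTi : opT hq t * opTi hq t = 1 := by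
  rw [opTi, mul_sub, opT_sq hq ht]; simp
include ht in
theorem opTi_opT : opTi hq t * opT hq t = 1 := by
  rw [opTi, sub_mul, opT_sq hq ht]; simp
include ht in
theorem opTy_opTyi : opTy (q := q) t * opTyi t = 1 := by
  rw [opTyi, mul_sub, opTy_sq ht]; simp
include ht in
theorem opTyi_opTy : opTyi (q := q) t * opTy t = 1 := by
  rw [opTyi, sub_mul, opTy_sq ht]; simp

theorem opR_opRi : opR hq * opRi hq = 1 := by ext f p; simp [opR_apply, opRi_apply]
theorem opRi_opR : opRi hq * opR hq = 1 := by ext f p; simp [opR_apply, opRi_apply]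

theorem opM_mul (g h : Om q → ℂ) : opM g * opM h = opM (g * h) := by
  ext f p; simp [opM_apply]; ring
theorem opM_one : opM (1 : Om q → ℂ) = 1 := by
  ext f p; simp [opM_apply]
theorem opM_inv (g h : Om q → ℂ) (H : ∀ p, g p * h p = 1) : opM g * opM h = 1 := by
  rw [opM_mul, ← opM_one]; congr; ext p; exact H p

include ht in
theorem opPi_opPii : opPi hq t * opPii hq t = 1 := by
  have := opM_inv (q := q) (fun p => p.y2) (fun p => p.y2⁻¹) (fun p => mul_inv_cancel₀ p.hy2)
  calc _ = opR hq * (opM (fun p => p.y2) * (opTy t * opTyi t) * opM (fun p => p.y2⁻¹)) * opRi hq := by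
        simp only [opPi, opPii, mul_assoc]
    _ = 1 := by rw [opTy_opTyi ht, mul_one, this, mul_one, opR_opRi]
include ht in
theorem opPii_opPi : opPii hq t * opPi hq t = 1 := by
  have := opM_inv (q := q) (fun p => p.y2⁻¹) (fun p => p.y2) (fun p => inv_mul_cancel₀ p.hy2)
  calc _ = opTyi t * (opM (fun p => p.y2⁻¹) * (opRi hq * opR hq) * opM (fun p => p.y2)) * opTy t := by
        simp only [opPi, opPii, mul_assoc]
    _ = 1 := by rw [opRi_opR, mul_one, this, mul_one, opTyi_opTy ht]

theorem opT_X : opT hq t * opM (fun p => p.x1) = opM (fun p => p.x2) * opTi hq t := by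
  ext f p
  have h1 := p.hy12
  have h3 := p.hx12
  simp [opTi, opTy_apply, opT_apply, opM_apply]
  field_simp
  ring

theorem opPi_X1 : opPi hq t * opM (fun p => p.x1) = q ^ 2 • (opM (fun p => p.x2) * opPi hq t) := by
  ext f p
  simp [opPi, opTy_apply, opR_apply, opM_apply]
  ring
theorem opPi_X2 : opPi hq t * opM (fun p => p.x2) = opM (fun p => p.x1) * opPi hq t := by
  ext f p
  simp [opPi, opTy_apply, opR_apply, opM_apply]
  ring
include ht in
theorem opPi_sq : opPi hq t * opPi hq t = opR hq * opR hq * opM (fun p => p.y1 * p.y2) := by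
  ext f p
  have h1 := p.hy12
  have h2 := p.hy21
  simp [opPi, opTy_apply, opR_apply, opM_apply]
  field_simp
  ring
include ht in
theorem opPi_sq_T : opT hq t * (opPi hq t * opPi hq t) = opPi hq t * opPi hq t * opT hq t := by
  rw [opPi_sq hq ht]
  ext f p
  have h1 := p.hy12
  have h3 := p.hx12
  have h5 : q ^ 2 * p.x1 - q ^ 2 * p.x2 ≠ 0 := by
    rw [← mul_sub]; exact mul_ne_zero (pow_ne_zero 2 hq) h3
  simp [opT_apply, opTy_apply, opR_apply, opM_apply]
  field_simp

def repG (hq : q ≠ 0) (t : ℂ) : DGen → Module.End ℂ (Om q → ℂ)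
  | .T => opT hq t
  | .Ti => opTi hq t
  | .X1 => opM (fun p => p.x1)
  | .X1i => opM (fun p => p.x1⁻¹)
  | .X2 => opM (fun p => p.x2)
  | .X2i => opM (fun p => p.x2⁻¹)
  | .Y1 => opT hq t * opPi hq t
  | .Y1i => opPii hq t * opTi hq t
  | .Y2 => opPi hq t * opTi hq t
  | .Y2i => opT hq t * opPii hq t

theorem mul4 {A : Type*} [Monoid A] {a b c d : A} (h : b * c = 1) (h' : a * d = 1) :
    (a * b) * (c * d) = 1 := by
  rw [mul_assoc, ← mul_assoc b, h, one_mul, h']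

include ht in
theorem repG_rel : ∀ ⦃x y : FD⦄, DRel q t x y →
    FreeAlgebra.lift ℂ (repG hq t) x = FreeAlgebra.lift ℂ (repG hq t) y := by
  have TTi := opT_opTi hq ht
  have TiT := opTi_opT hq ht
  have PPi := opPi_opPii hq ht
  have PiP := opPii_opPi hq ht
  have hX1 := opM_inv (q := q) (fun p => p.x1) (fun p => p.x1⁻¹) (fun p => mul_inv_cancel₀ p.hx1)
  have hX1' := opM_inv (q := q) (fun p => p.x1⁻¹) (fun p => p.x1) (fun p => inv_mul_cancel₀ p.hx1)
  have hX2 := opM_inv (q := q) (fun p => p.x2) (fun p => p.x2⁻¹) (fun p => mul_inv_cancel₀ p.hx2)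
  have hX2' := opM_inv (q := q) (fun p => p.x2⁻¹) (fun p => p.x2) (fun p => inv_mul_cancel₀ p.hx2)
  have hTX := opT_X (t := t) hq
  have hP1 := opPi_X1 (t := t) hq
  have hP2 := opPi_X2 (t := t) hq
  have hPT := opPi_sq_T hq ht
  have hS := opT_sq hq ht
  have hXX : opM (fun p : Om q => p.x1) * opM (fun p => p.x2) =
    opM (fun p => p.x2) * opM (fun p => p.x1) := by
    rw [opM_mul, opM_mul, mul_comm]
  have hTd : opTi hq t = opT hq t - (t - t⁻¹) • 1 := rfl
  intro x y h
  cases h <;> simp only [map_mul, map_one, map_smul, map_add, map_sub, map_zero, gD,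
    FreeAlgebra.lift_ι_apply, repG, AlgHom.commutes] <;>
    generalize opT hq t = T at * <;> generalize opTi hq t = Ti at * <;>
    generalize opPi hq t = P at * <;> generalize opPii hq t = Pi at * <;>
    generalize opM (fun p : Om q => p.x1) = x1 at * <;>
    generalize opM (fun p : Om q => p.x2) = x2 at * <;>
    generalize opM (fun p : Om q => p.x1⁻¹) = x1i at * <;>
    generalize opM (fun p : Om q => p.x2⁻¹) = x2i at *
  case TTi => exact TTi
  case TiT => exact TiT
  case X1X1i => exact hX1
  case X1iX1 => exact hX1'
  case X2X2i => exact hX2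
  case X2iX2 => exact hX2'
  case Y1Y1i => exact mul4 PPi TTi
  case Y1iY1 => exact mul4 TiT PiP
  case Y2Y2i => exact mul4 TiT PPi
  case Y2iY2 => exact mul4 PiP TTi
  case TX1T => rw [hTX, mul_assoc, TiT, mul_one]
  case TiY1Ti => rw [← mul_assoc, TiT, one_mul]
  case Xcomm => exact hXX
  case Ycomm =>
    calc _ = T * (P * P) * Ti := by simp only [mul_assoc]
      _ = P * P * (T * Ti) := by rw [hPT]; simp only [mul_assoc]
      _ = P * (Ti * T) * P := by rw [TTi, TiT]; simp
      _ = _ := by simp only [mul_assoc]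
  case YXX =>
    have h2 : T * x2 = x1 * T + (t - t⁻¹) • x2 := by
      have : T * x2 = T * T * x1 * T := by
        rw [mul_assoc T T, hTX, mul_assoc, mul_assoc, TiT, mul_one]
      rw [this, hS, add_mul, add_mul, one_mul, smul_mul_assoc, hTX, smul_mul_assoc, mul_assoc x2,
        TiT, mul_one]
    have h3 : T * (x1 * x2) = x1 * x2 * T := by
      have hx2 : x2 = T * x1 * T := by rw [hTX, mul_assoc, TiT, mul_one]
      have : x2 * x1 * T = x2 * Ti * (T * x1 * T) := by
        calc _ = x2 * (Ti * T) * x1 * T := by rw [TiT, mul_one]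
          _ = _ := by simp only [mul_assoc]
      rw [← mul_assoc, hTX, hXX, this, ← hx2]
    calc T * P * (x1 * x2) = T * (P * x1) * x2 := by simp only [mul_assoc]
      _ = q ^ 2 • (T * x2 * (P * x2)) := by rw [hP1]; simp [mul_assoc]
      _ = q ^ 2 • (T * (x1 * x2) * P) := by rw [hP2, hXX]; simp only [mul_assoc]
      _ = _ := by rw [h3]; simp only [mul_assoc]
  case X1iY2 =>
    have h1 : x1i * P = P * x2i := by
      calc x1i * P = x1i * P * (x2 * x2i) := by rw [hX2, mul_one]
        _ = x1i * (P * x2) * x2i := by simp only [mul_assoc]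
        _ = (x1i * x1) * P * x2i := by rw [hP2]; simp only [mul_assoc]
        _ = _ := by rw [hX1', one_mul]
    have h2 : x2i * T  = Ti * x1i := by
      calc x2i * T = x2i * T * (x1 * x1i) := by rw [hX1, mul_one]
        _ = x2i * (T * x1) * x1i := by simp only [mul_assoc]
        _ = (x2i * x2) * Ti * x1i := by rw [hTX]; simp only [mul_assoc]
        _ = _ := by rw [hX2', one_mul]
    have h3 : x2i = Ti * x1i * Ti := by rw [← h2, mul_assoc, TTi, mul_one]
    rw [← mul_assoc, h1, h3]; simp only [mul_assoc]
  case hecke =>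
    rw [Algebra.algebraMap_eq_smul_one, Algebra.algebraMap_eq_smul_one, add_mul, mul_sub, mul_sub, hS]
    simp only [smul_mul_assoc, mul_smul_comm, one_mul, mul_one, smul_smul, mul_inv_cancel₀ ht]
    module

def rep (hq : q ≠ 0) (ht : t ≠ 0) : DAHA q t →ₐ[ℂ] Module.End ℂ (Om q → ℂ) :=
  RingQuot.liftAlgHom ℂ ⟨FreeAlgebra.lift ℂ (repG hq t), repG_rel hq ht⟩

theorem rep_gen (x : DGen) :
    rep hq ht (RingQuot.mkAlgHom ℂ (DRel q t) (gD x)) = repG hq t x := by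
  rw [rep, RingQuot.liftAlgHom_mkAlgHom_apply, gD, FreeAlgebra.lift_ι_apply]

end rep

/-- The relations among the generators of the positive part. -/
structure PRels {A : Type*} [Ring A] [Algebra ℂ A] (q t : ℂ) (T Ti X1 X2 Y1 Y2 : A) : Prop where
  TTi : T * Ti = 1
  TiT : Ti * T = 1
  Td : Ti = T - (t - t⁻¹) • 1
  TX1 : T * X1 = X2 * Ti
  TX2 : T * X2 = X1 * T + (t - t⁻¹) • X2
  TY1 : T * Y1 = Y2 * T + (t - t⁻¹) • Y1
  TY2 : T * Y2 = Y1 * Ti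
  XX : X1 * X2 = X2 * X1
  YY : Y1 * Y2 = Y2 * Y1
  Y1X1 : Y1 * X1 = q ^ 2 • (T * T * X1 * Y1)
  Y1X2 : Y1 * X2 = T * X1 * Ti * Y1
  Y2X1 : Y2 * X1 = X1 * Y2 - (t - t⁻¹) • (Ti * Y1 * X1)
  Y2X2 : Y2 * X2 = Ti * Y1 * X1 * T

theorem daha_prels (q t : ℂ) (ht : t ≠ 0) :
    PRels q t (T q t) (Ti q t) (X1 q t) (X2 q t) (Y1 q t) (Y2 q t) := by
  have TTi : T q t * Ti q t = 1 := by
    simpa [T, Ti, X1, X1i, X2, X2i, Y1, Y2] using RingQuot.mkAlgHom_rel ℂ (DRel.TTi (q := q) (t := t))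
  have TiT : Ti q t * T q t = 1 := by
    simpa [T, Ti, X1, X1i, X2, X2i, Y1, Y2] using RingQuot.mkAlgHom_rel ℂ (DRel.TiT (q := q) (t := t))
  have X1X1i : X1 q t * X1i q t = 1 := by
    simpa [T, Ti, X1, X1i, X2, X2i, Y1, Y2] using RingQuot.mkAlgHom_rel ℂ (DRel.X1X1i (q := q) (t := t))
  have X1iX1 : X1i q t * X1 q t = 1 := by
    simpa [T, Ti, X1, X1i, X2, X2i, Y1, Y2] using RingQuot.mkAlgHom_rel ℂ (DRel.X1iX1 (q := q) (t := t))
  have X2X2i : X2 q t * X2i q t = 1 := by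
    simpa [T, Ti, X1, X1i, X2, X2i, Y1, Y2] using RingQuot.mkAlgHom_rel ℂ (DRel.X2X2i (q := q) (t := t))
  have hTXT : T q t * X1 q t * T q t = X2 q t := by
    simpa [T, Ti, X1, X1i, X2, X2i, Y1, Y2] using RingQuot.mkAlgHom_rel ℂ (DRel.TX1T (q := q) (t := t))
  have hTYT : Ti q t * Y1 q t * Ti q t = Y2 q t := by
    simpa [T, Ti, X1, X1i, X2, X2i, Y1, Y2] using RingQuot.mkAlgHom_rel ℂ (DRel.TiY1Ti (q := q) (t := t))
  have XX : X1 q t * X2 q t = X2 q t * X1 q t := by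
    simpa [T, Ti, X1, X1i, X2, X2i, Y1, Y2] using RingQuot.mkAlgHom_rel ℂ (DRel.Xcomm (q := q) (t := t))
  have YY : Y1 q t * Y2 q t = Y2 q t * Y1 q t := by
    simpa [T, Ti, X1, X1i, X2, X2i, Y1, Y2] using RingQuot.mkAlgHom_rel ℂ (DRel.Ycomm (q := q) (t := t))
  have YXX : Y1 q t * (X1 q t * X2 q t) = q ^ 2 • (X1 q t * X2 q t * Y1 q t) := by
    simpa [T, Ti, X1, X1i, X2, X2i, Y1, Y2] using RingQuot.mkAlgHom_rel ℂ (DRel.YXX (q := q) (t := t))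
  have XiY : X1i q t * Y2 q t = Y2 q t * X1i q t * Ti q t * Ti q t := by
    simpa [T, Ti, X1, X1i, X2, X2i, Y1, Y2] using RingQuot.mkAlgHom_rel ℂ (DRel.X1iY2 (q := q) (t := t))
  have hecke : (T q t + algebraMap ℂ _ t⁻¹) * (T q t - algebraMap ℂ _ t) = 0 := by
    have := RingQuot.mkAlgHom_rel ℂ (DRel.hecke (q := q) (t := t))
    simp only [map_mul, map_add, map_sub, map_zero, AlgHom.commutes] at this
    exact this
  generalize T q t = T at *
  generalize Ti q t = Ti at *
  generalize X1 q t = X1 at *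
  generalize X2 q t = X2 at *
  generalize X1i q t = X1i at *
  generalize X2i q t = X2i at *
  generalize Y1 q t = Y1 at *
  generalize Y2 q t = Y2 at *
  have hS : T * T = 1 + (t - t⁻¹) • T := by
    rw [Algebra.algebraMap_eq_smul_one, Algebra.algebraMap_eq_smul_one, add_mul, mul_sub,
      mul_sub] at hecke
    simp only [smul_mul_assoc, mul_smul_comm, one_mul, mul_one, smul_smul,
      mul_inv_cancel₀ ht] at hecke
    rw [← sub_eq_zero, ← hecke]
    module
  have Td : Ti = T - (t - t⁻¹) • 1 := by
    calc Ti = Ti * (T * T - (t - t⁻¹) • T) := by rw [hS]; simp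
      _ = _ := by rw [mul_sub, ← mul_assoc, TiT, mul_smul_comm, TiT, one_mul]
  have TX1 : T * X1 = X2 * Ti := by rw [← hTXT, mul_assoc _ T, TTi, mul_one]
  have TX2 : T * X2 = X1 * T + (t - t⁻¹) • X2 := by
    calc T * X2 = T * T * X1 * T := by rw [← hTXT]; simp only [mul_assoc]
      _ = X1 * T + (t - t⁻¹) • (T * X1 * T) := by rw [hS]; simp [add_mul]
      _ = _ := by rw [hTXT]
  have TY2 : T * Y2 = Y1 * Ti := by rw [← hTYT, ← mul_assoc, ← mul_assoc, TTi, one_mul]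
  have hY1 : Y1 = T * Y2 * T := by rw [TY2, mul_assoc, TiT, mul_one]
  have TY1 : T * Y1 = Y2 * T + (t - t⁻¹) • Y1 := by
    calc T * Y1 = T * T * Y2 * T := by rw [hY1]; simp only [mul_assoc]
      _ = Y2 * T + (t - t⁻¹) • (T * Y2 * T) := by rw [hS]; simp [add_mul]
      _ = _ := by rw [← hY1]
  -- X1 Y2 = Y2 T T X1
  have XY : X1 * Y2 = Y2 * T * T * X1 := by
    calc X1 * Y2 = X1 * (Y2 * X1i * (Ti * (Ti * T) * T)) * X1 := by
          rw [TiT, mul_one, TiT, mul_one, mul_assoc, mul_assoc, X1iX1, mul_one]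
      _ = X1 * (Y2 * X1i * Ti * Ti) * T * T * X1 := by simp only [mul_assoc]
      _ = (X1 * X1i) * Y2 * T * T * X1 := by rw [← XiY]; simp only [mul_assoc]
      _ = _ := by rw [X1X1i, one_mul]
  have Y2T : Y2 * T = Ti * Y1 := by rw [← hTYT, mul_assoc, TiT, mul_one]
  have Y1X2 : Y1 * X2 = T * X1 * Ti * Y1 := by
    calc Y1 * X2 = T * (Y2 * T * T * X1) * T := by rw [hY1, ← hTXT]; simp only [mul_assoc]
      _ = T * X1 * (Y2 * T) := by rw [← XY]; simp only [mul_assoc]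
      _ = _ := by rw [Y2T]; simp only [mul_assoc]
  have X2T : X2 * T = X1 * 0 + T * X1 + (t - t⁻¹) • X2 := by
    rw [TX1, Td]; simp [mul_sub]
  have Y1X1 : Y1 * X1 = q ^ 2 • (T * T * X1 * Y1) := by
    have h : Y1 * X1 * X2 = q ^ 2 • (T * T * X1 * Y1) * X2 := by
      have h1 : T * T * X1 * (T * X1 * Ti) = X1 * X2 := by
        calc T * T * X1 * (T * X1 * Ti) = T * (T * X1 * T) * X1 * Ti := by simp only [mul_assoc]
          _ = T * (X1 * X2) * Ti := by rw [hTXT, XX]; simp only [mul_assoc]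
          _ = T * X1 * X2 * Ti := by simp only [mul_assoc]
          _ = X2 * Ti * X2 * Ti := by rw [TX1]
          _ = X2 * Ti * (T * X1) := by rw [TX1]; simp only [mul_assoc]
          _ = X2 * (Ti * T) * X1 := by simp only [mul_assoc]
          _ = _ := by rw [TiT, mul_one, XX]
      rw [mul_assoc, YXX, ← h1, smul_mul_assoc, mul_assoc _ Y1, Y1X2]
      simp only [mul_assoc]
    calc Y1 * X1 = Y1 * X1 * X2 * X2i := by rw [mul_assoc _ X2, X2X2i, mul_one]
      _ = _ := by rw [h, mul_assoc _ X2, X2X2i, mul_one]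
  refine ⟨TTi, TiT, Td, TX1, TX2, TY1, TY2, XX, YY, Y1X1, Y1X2, ?_, ?_⟩
  · rw [XY, mul_assoc Y2, hS, ← Y2T]
    simp [mul_add, add_mul, mul_assoc]
  · rw [← hTYT, ← hTXT]
    calc _ = Ti * Y1 * (Ti * T) * X1 * T := by simp only [mul_assoc]
      _ = _ := by rw [TiT, mul_one]

namespace PRels
section
variable {A : Type*} [Ring A] [Algebra ℂ A] {q t : ℂ} {T Ti X1 X2 Y1 Y2 : A}

def E (t : ℂ) (T : A) : A := ((1 + t ^ 2)⁻¹ : ℂ) • (1 + t • T)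

variable (R : PRels q t T Ti X1 X2 Y1 Y2) (ht : t ≠ 0) (ht2 : 1 + t ^ 2 ≠ 0)
include R

theorem sq : T * T = 1 + (t - t⁻¹) • T := by
  have := R.TTi
  rw [R.Td, mul_sub, sub_eq_iff_eq_add] at this
  simpa using this

include ht ht2 

theorem TE : T * E t T = t • E t T := by
  simp only [E, mul_smul_comm, mul_add, R.sq, mul_one, smul_smul]
  match_scalars <;> field_simp
  ring

theorem ET : E t T * T = t • E t T := by
  simp only [E, smul_mul_assoc, add_mul, R.sq, one_mul, smul_smul]
  match_scalars <;> field_simp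
  ring

theorem TiE : Ti * E t T = t⁻¹ • E t T := by
  rw [R.Td, sub_mul, R.TE ht ht2]; simp; module

theorem EE : E t T * E t T = E t T := by
  nth_rewrite 1 [E]
  rw [smul_mul_assoc, add_mul, one_mul, smul_mul_assoc, R.TE ht ht2]
  match_scalars; field_simp

theorem EX1E : E t T * X1 * E t T = (1 + t ^ 2)⁻¹ • ((X1 + X2) * E t T) := by
  nth_rewrite 1 [E]
  rw [smul_mul_assoc, smul_mul_assoc, add_mul, smul_mul_assoc, R.TX1, add_mul, smul_mul_assoc,
    mul_assoc X2, R.TiE ht ht2, add_mul]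
  simp [smul_smul, ht]

theorem EY1E : E t T * Y1 * E t T = (t ^ 2 * (1 + t ^ 2)⁻¹) • (E t T * (Y1 + Y2)) := by
  nth_rewrite 2 [E]
  have h : Y1 * T = T * Y2 + (t - t⁻¹) • Y1 := by
    rw [R.TY2, R.Td, mul_sub]; simp
  have h' : E t T * (T * Y2) = t • (E t T * Y2) := by
    rw [← mul_assoc, R.ET ht ht2, smul_mul_assoc]
  rw [mul_smul_comm, mul_assoc, mul_add, mul_one, mul_smul_comm, h, mul_add, mul_smul_comm, mul_add,
    h', mul_add, mul_smul_comm]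
  match_scalars <;> field_simp
  ring

omit R ht ht2 in
theorem commE {a : A} (h : Commute T a) : Commute (E t T) a := by
  unfold E
  exact ((Commute.one_left a).add_left (h.smul_left t)).smul_left _

omit ht ht2 in
theorem commP1 : Commute T (X1 + X2) := by
  unfold Commute SemiconjBy
  rw [mul_add, R.TX1, R.TX2, R.Td]
  simp [mul_sub, add_mul, add_comm]
omit ht ht2 in
theorem commP2 : Commute T (X1 * X2) := by
  unfold Commute SemiconjBy
  calc T * (X1 * X2) = T * X1 * X2 := by rw [mul_assoc]
    _ = X2 * (T - (t - t⁻¹) • 1) * X2 := by rw [R.TX1, R.Td]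
    _ = X2 * (T * X2 - (t - t⁻¹) • X2) := by simp [mul_sub, sub_mul, mul_assoc]
    _ = _ := by rw [R.TX2, R.XX]; simp [mul_assoc]
omit ht ht2 in
theorem commR1 : Commute T (Y1 + Y2) := by
  unfold Commute SemiconjBy
  rw [mul_add, R.TY1, R.TY2, R.Td]
  simp [mul_sub, add_mul, add_comm]
omit ht ht2 in
theorem commR2 : Commute T (Y1 * Y2) := by
  unfold Commute SemiconjBy
  calc T * (Y1 * Y2) = T * Y2 * Y1 := by rw [R.YY, mul_assoc]
    _ = Y1 * (T - (t - t⁻¹) • 1) * Y1 := by rw [R.TY2, R.Td]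
    _ = Y1 * (T * Y1 - (t - t⁻¹) • Y1) := by simp [mul_sub, sub_mul, mul_assoc]
    _ = _ := by rw [R.TY1]; simp [mul_assoc]
end
end PRels

namespace PRels
section
open Submodule
variable {A : Type*} [Ring A] [Algebra ℂ A] {q t : ℂ} {T Ti X1 X2 Y1 Y2 : A}

/-- the standard spanning set of the degree `N` part of `ℂ[X1,X2]` -/
def stdSet (X1 X2 : A) (N : ℕ) : Set A :=
  {z | ∃ b1 b2 ε : ℕ, ε ≤ 1 ∧ b1 + 2 * b2 + ε = N ∧ z = (X1 + X2) ^ b1 * (X1 * X2) ^ b2 * X1 ^ ε}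

theorem pow_le_std (h : X1 * X2 = X2 * X1) (N : ℕ) :
    (span ℂ {X1, X2} : Submodule ℂ A) ^ N ≤ span ℂ (stdSet X1 X2 N) := by
  have hc : Commute X1 X2 := h
  have c1 : Commute X1 (X1 + X2) := (Commute.refl X1).add_right hc
  have c2 : Commute X1 (X1 * X2) := (Commute.refl X1).mul_right hc
  have c3 : Commute (X1 + X2) (X1 * X2) :=
    (c2.add_left ((hc.symm).mul_right (Commute.refl X2)))
  have hX1sq : X1 * X1 = (X1 + X2) * X1 - X1 * X2 := by rw [add_mul, h]; simp
  induction N with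
  | zero =>
    rw [pow_zero, Submodule.one_eq_span, span_le]
    rintro _ rfl
    exact subset_span ⟨0, 0, 0, by simp, by simp, by simp⟩
  | succ N ih =>
    rw [pow_succ']
    refine (mul_le_mul' le_rfl ih).trans ?_
    rw [span_mul_span, span_le]
    rintro _ ⟨a, ha, _, ⟨b1, b2, ε, hε, hN, rfl⟩, rfl⟩
    have hp1 : (X1 + X2) * ((X1 + X2) ^ b1 * (X1 * X2) ^ b2 * X1 ^ ε) ∈
        span ℂ (stdSet X1 X2 (N + 1)) := by
      refine subset_span ⟨b1 + 1, b2, ε, hε, by omega, ?_⟩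
      rw [pow_succ']; simp only [mul_assoc]
    have hx1 : X1 * ((X1 + X2) ^ b1 * (X1 * X2) ^ b2 * X1 ^ ε) ∈
        span ℂ (stdSet X1 X2 (N + 1)) := by
      have e1 : X1 * ((X1 + X2) ^ b1 * (X1 * X2) ^ b2 * X1 ^ ε) =
          (X1 + X2) ^ b1 * (X1 * X2) ^ b2 * X1 ^ (ε + 1) := by
        rw [← mul_assoc, ((c1.pow_right b1).mul_right (c2.pow_right b2)).eq, mul_assoc, ← pow_succ']
      rw [e1]
      interval_cases ε
      · exact subset_span ⟨b1, b2, 1, le_rfl, by omega, by simp⟩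
      · have e2 : (X1 + X2) ^ b1 * (X1 * X2) ^ b2 * X1 ^ (1 + 1) =
          (X1 + X2) ^ (b1 + 1) * (X1 * X2) ^ b2 * X1 ^ 1 -
            (X1 + X2) ^ b1 * (X1 * X2) ^ (b2 + 1) * X1 ^ 0 := by
          rw [pow_one, pow_zero, mul_one, pow_succ X1, pow_one, hX1sq, mul_sub, pow_succ _ b1,
            pow_succ _ b2, mul_assoc (_ ^ b1) (X1 + X2), (c3.pow_right b2).eq]
          simp only [mul_assoc]
        rw [e2]
        exact sub_mem (subset_span ⟨b1 + 1, b2, 1, by omega, by omega, rfl⟩)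
          (subset_span ⟨b1, b2 + 1, 0, by omega, by omega, rfl⟩)
    simp only [Set.mem_insert_iff, Set.mem_singleton_iff] at ha
    rcases ha with rfl | rfl
    · exact hx1
    · have : a * ((X1 + a) ^ b1 * (X1 * a) ^ b2 * X1 ^ ε) =
        (X1 + a) * ((X1 + a) ^ b1 * (X1 * a) ^ b2 * X1 ^ ε) -
          X1 * ((X1 + a) ^ b1 * (X1 * a) ^ b2 * X1 ^ ε) := by
        rw [← sub_mul]; simp
      show a * _ ∈ _
      rw [this]
      exact sub_mem hp1 hx1

variable (R : PRels q t T Ti X1 X2 Y1 Y2) (ht : t ≠ 0) (ht2 : 1 + t ^ 2 ≠ 0)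
include R

theorem T_mem : T ∈ span ℂ ({1, T} : Set A) := subset_span (by simp)
theorem one_mem' : (1 : A) ∈ span ℂ ({1, T} : Set A) := subset_span (by simp)
theorem Ti_mem : Ti ∈ span ℂ ({1, T} : Set A) := by
  rw [R.Td]
  exact sub_mem R.T_mem (smul_mem _ _ R.one_mem')

theorem HH : span ℂ ({1, T} : Set A) * span ℂ {1, T} ≤ span ℂ {1, T} := by
  rw [span_mul_span, span_le]
  rintro _ ⟨a, ha, b, hb, rfl⟩
  have h1 := R.one_mem'
  have h2 := R.T_mem
  rcases ha with rfl | rfl <;> rcases hb with rfl | rfl <;> simp only [one_mul, mul_one, SetLike.mem_coe]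
  · exact h1
  · exact h2
  · exact h2
  · rw [R.sq]; exact add_mem h1 (smul_mem _ _ h2)

theorem HP : span ℂ ({1, T} : Set A) * span ℂ {X1, X2} ≤ span ℂ {X1, X2} * span ℂ {1, T} := by
  rw [span_mul_span ℂ {1, T}, span_le]
  rintro _ ⟨a, ha, b, hb, rfl⟩
  have h1 := R.one_mem'
  have h2 := R.T_mem
  have h3 := R.Ti_mem
  have hx1 : X1 ∈ span ℂ ({X1, X2} : Set A) := subset_span (by simp)
  have hx2 : X2 ∈ span ℂ ({X1, X2} : Set A) := subset_span (by simp)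
  have hx1' := mul_mem_mul hx1 h1
  have hx2' := mul_mem_mul hx2 h1
  rw [mul_one] at hx1' hx2'
  rcases ha with rfl | rfl <;> rcases hb with rfl | rfl <;> simp only [one_mul, SetLike.mem_coe]
  · exact hx1'
  · exact hx2'
  · rw [R.TX1]; exact mul_mem_mul hx2 h3
  · rw [R.TX2]; exact add_mem (mul_mem_mul hx1 h2) (smul_mem _ _ hx2')

theorem QH : span ℂ {Y1, Y2} * span ℂ ({1, T} : Set A) ≤ span ℂ {1, T} * span ℂ {Y1, Y2} := by
  rw [span_mul_span ℂ {Y1, Y2}, span_le]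
  rintro _ ⟨b, hb, a, ha, rfl⟩
  have h1 := R.one_mem'
  have h2 := R.T_mem
  have h3 := R.Ti_mem
  have hx1 : Y1 ∈ span ℂ ({Y1, Y2} : Set A) := subset_span (by simp)
  have hx2 : Y2 ∈ span ℂ ({Y1, Y2} : Set A) := subset_span (by simp)
  have hx1' := mul_mem_mul h1 hx1
  have hx2' := mul_mem_mul h1 hx2
  rw [one_mul] at hx1' hx2'
  rcases ha with rfl | rfl <;> rcases hb with rfl | rfl <;> simp only [mul_one, SetLike.mem_coe]
  · exact hx1'
  · exact hx2'
  · have : b * a = a * Y2 + (t - t⁻¹) • b := by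
      rw [R.TY2, R.Td, mul_sub]; simp
    rw [this]; exact add_mem (mul_mem_mul h2 hx2) (smul_mem _ _ hx1')
  · have : b * a = a * Y1 - (t - t⁻¹) • Y1 := by rw [R.TY1]; simp
    rw [this]; exact sub_mem (mul_mem_mul h2 hx1) (smul_mem _ _ hx1')

theorem QP : span ℂ {Y1, Y2} * span ℂ ({X1, X2} : Set A) ≤
    span ℂ {X1, X2} * span ℂ {1, T} * span ℂ {Y1, Y2} := by
  have hHP := R.HP
  have hHH := R.HH
  have hQH := R.QH
  have h1 := R.one_mem'
  have h2 := R.T_mem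
  have h3 := R.Ti_mem
  have hx1 : X1 ∈ span ℂ ({X1, X2} : Set A) := subset_span (by simp)
  have hy1 : Y1 ∈ span ℂ ({Y1, Y2} : Set A) := subset_span (by simp)
  have hy2 : Y2 ∈ span ℂ ({Y1, Y2} : Set A) := subset_span (by simp)
  rw [span_mul_span ℂ {Y1, Y2}, span_le]
  rintro _ ⟨b, hb, a, ha, rfl⟩
  generalize hH : span ℂ ({1, T} : Set A) = H at *
  generalize hP : span ℂ ({X1, X2} : Set A) = P at *
  generalize hQ : span ℂ ({Y1, Y2} : Set A) = Q at *
  -- general closure facts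
  have k1 : H * (P * H * Q) ≤ P * H * Q := by
    calc H * (P * H * Q) = (H * P) * H * Q := by simp only [mul_assoc]
      _ ≤ (P * H) * H * Q := by gcongr
      _ = P * (H * H) * Q := by simp only [mul_assoc]
      _ ≤ P * H * Q := by gcongr
  have k2 : (P * H * Q) * H ≤ P * H * Q := by
    calc (P * H * Q) * H = P * H * (Q * H) := by simp only [mul_assoc]
      _ ≤ P * H * (H * Q) := by gcongr
      _ = P * (H * H) * Q := by simp only [mul_assoc]
      _ ≤ P * H * Q := by gcongr
  have m1 : X1 * Y1 ∈ P * H * Q := by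
    have := mul_mem_mul (mul_mem_mul hx1 h1) hy1
    rwa [mul_one] at this
  have m2 : X1 * Y2 ∈ P * H * Q := by
    have := mul_mem_mul (mul_mem_mul hx1 h1) hy2
    rwa [mul_one] at this
  have m3 : Y1 * X1 ∈ P * H * Q := by
    rw [R.Y1X1]
    refine smul_mem _ _ ?_
    rw [mul_assoc (T * T), mul_assoc T T]
    exact k1 (mul_mem_mul h2 (k1 (mul_mem_mul h2 m1)))
  have m4 : Ti * Y1 * X1 ∈ P * H * Q := by
    rw [mul_assoc Ti]; exact k1 (mul_mem_mul h3 m3)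
  rcases ha with rfl | rfl <;> rcases hb with rfl | rfl <;> simp only [SetLike.mem_coe]
  · exact m3
  · rw [R.Y2X1]; exact sub_mem m2 (smul_mem _ _ m4)
  · rw [R.Y1X2, mul_assoc T X1, mul_assoc T]
    refine k1 (mul_mem_mul h2 ?_)
    exact mul_mem_mul (mul_mem_mul hx1 h3) hy1
  · rw [R.Y2X2]; exact k2 (mul_mem_mul m4 h2)

theorem HPn (N : ℕ) : span ℂ ({1, T} : Set A) * span ℂ {X1, X2} ^ N ≤
    span ℂ {X1, X2} ^ N * span ℂ {1, T} := by
  induction N with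
  | zero => simp
  | succ N ih =>
    rw [pow_succ, ← mul_assoc]
    refine (mul_le_mul' ih le_rfl).trans ?_
    rw [mul_assoc, mul_assoc]
    exact mul_le_mul' le_rfl R.HP

theorem QPn (N : ℕ) : span ℂ {Y1, Y2} * span ℂ ({X1, X2} : Set A) ^ N ≤
    span ℂ {X1, X2} ^ N * span ℂ {1, T} * span ℂ {Y1, Y2} := by
  have hHPn := R.HPn
  have hHP := R.HP
  have hHH := R.HH
  have hQP := R.QP
  have h1 := R.one_mem'
  generalize hH : span ℂ ({1, T} : Set A) = H at *
  generalize hP : span ℂ ({X1, X2} : Set A) = P at *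
  generalize hQ : span ℂ ({Y1, Y2} : Set A) = Q at *
  induction N with
  | zero =>
    rw [pow_zero, mul_one, one_mul]
    intro y hy
    have := mul_mem_mul h1 hy
    rwa [one_mul] at this
  | succ N ih =>
    calc Q * P ^ (N + 1) = (Q * P ^ N) * P := by rw [pow_succ, mul_assoc]
      _ ≤ (P ^ N * H * Q) * P := by gcongr
      _ = P ^ N * H * (Q * P) := by simp only [mul_assoc]
      _ ≤ P ^ N * H * (P * H * Q) := by gcongr
      _ = P ^ N * (H * P) * H * Q := by simp only [mul_assoc]
      _ ≤ P ^ N * (P * H) * H * Q := by gcongr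
      _ = P ^ (N + 1) * (H * H) * Q := by rw [pow_succ]; simp only [mul_assoc]
      _ ≤ _ := by gcongr

theorem H_tri (M N : ℕ) : span ℂ ({1, T} : Set A) *
    (span ℂ {X1, X2} ^ N * span ℂ {1, T} * span ℂ {Y1, Y2} ^ M) ≤
    span ℂ {X1, X2} ^ N * span ℂ {1, T} * span ℂ {Y1, Y2} ^ M := by
  have hHPn := R.HPn N
  have hHH := R.HH
  generalize hH : span ℂ ({1, T} : Set A) = H at *
  generalize hP : span ℂ ({X1, X2} : Set A) = P at *
  generalize hQ : span ℂ ({Y1, Y2} : Set A) = Q at *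
  calc H * (P ^ N * H * Q ^ M) = (H * P ^ N) * H * Q ^ M := by simp only [mul_assoc]
      _ ≤ (P ^ N * H) * H * Q ^ M := by gcongr ?_ * H * Q ^ M
      _ = P ^ N * (H * H) * Q ^ M := by simp only [mul_assoc]
      _ ≤ P ^ N * H * Q ^ M := by gcongr

theorem P_tri (M N : ℕ) : span ℂ {X1, X2} *
    (span ℂ {X1, X2} ^ N * span ℂ ({1, T} : Set A) * span ℂ {Y1, Y2} ^ M) ≤
    span ℂ {X1, X2} ^ (N + 1) * span ℂ {1, T} * span ℂ {Y1, Y2} ^ M := by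
  rw [pow_succ']; simp only [mul_assoc]; exact le_rfl

theorem Q_tri (M N : ℕ) : span ℂ {Y1, Y2} *
    (span ℂ {X1, X2} ^ N * span ℂ ({1, T} : Set A) * span ℂ {Y1, Y2} ^ M) ≤
    span ℂ {X1, X2} ^ N * span ℂ {1, T} * span ℂ {Y1, Y2} ^ (M + 1) := by
  have hQPn := R.QPn N
  have hHH := R.HH
  have hQH := R.QH
  generalize hH : span ℂ ({1, T} : Set A) = H at *
  generalize hP : span ℂ ({X1, X2} : Set A) = P at *
  generalize hQ : span ℂ ({Y1, Y2} : Set A) = Q at *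
  calc Q * (P ^ N * H * Q ^ M) = (Q * P ^ N) * H * Q ^ M := by simp only [mul_assoc]
      _ ≤ (P ^ N * H * Q) * H * Q ^ M := by gcongr ?_ * H * Q ^ M
      _ = P ^ N * H * (Q * H) * Q ^ M := by simp only [mul_assoc]
      _ ≤ P ^ N * H * (H * Q) * Q ^ M := by gcongr
      _ = P ^ N * (H * H) * Q ^ (M + 1) := by rw [pow_succ']; simp only [mul_assoc]
      _ ≤ _ := by gcongr

/-- the basis elements -/
def bas (t : ℂ) (T X1 X2 Y1 Y2 : A) (a1 a2 b1 b2 ε : ℕ) : A :=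
  (X1 + X2) ^ b1 * (X1 * X2) ^ b2 * (E t T * X1 ^ ε * Y1 ^ ε * E t T) *
    ((Y1 + Y2) ^ a1 * (Y1 * Y2) ^ a2)

def basSet (t : ℂ) (T X1 X2 Y1 Y2 : A) (M N : ℕ) : Set A :=
  {z | ∃ a1 a2 b1 b2 ε : ℕ, ε ≤ 1 ∧ a1 + 2 * a2 + ε = M ∧ b1 + 2 * b2 + ε = N ∧
    z = bas t T X1 X2 Y1 Y2 a1 a2 b1 b2 ε}

include ht ht2 in
theorem H_le : span ℂ ({1, T} : Set A) ≤ span ℂ {1, E t T} := by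
  rw [span_le]
  have h1 : (1 : A) ∈ span ℂ ({1, E t T} : Set A) := subset_span (by simp)
  have h2 : E t T ∈ span ℂ ({1, E t T} : Set A) := subset_span (by simp)
  rintro x (hx | hx)
  · rw [hx]; exact h1
  · have : T = t⁻¹ • ((1 + t ^ 2) • E t T - 1) := by
      rw [E, smul_smul, mul_inv_cancel₀ ht2, one_smul, add_sub_cancel_left, smul_smul,
        inv_mul_cancel₀ ht, one_smul]
    have h3 := smul_mem _ t⁻¹ (sub_mem (smul_mem _ (1 + t ^ 2) h2) h1)
    rw [← this] at h3
    rw [hx]; exact h3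

theorem sandwich (b1 b2 ε a1 a2 ε' : ℕ) (h : A) :
    E t T * (((X1 + X2) ^ b1 * (X1 * X2) ^ b2 * X1 ^ ε * h *
      ((Y1 + Y2) ^ a1 * (Y1 * Y2) ^ a2 * Y1 ^ ε')) * E t T) =
    (X1 + X2) ^ b1 * (X1 * X2) ^ b2 * (E t T * X1 ^ ε * h * Y1 ^ ε' * E t T) *
      ((Y1 + Y2) ^ a1 * (Y1 * Y2) ^ a2) := by
  have cX : Commute (E t T) ((X1 + X2) ^ b1 * (X1 * X2) ^ b2) :=
    ((commE R.commP1).pow_right _).mul_right ((commE R.commP2).pow_right _)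
  have cY : Commute (E t T) ((Y1 + Y2) ^ a1 * (Y1 * Y2) ^ a2) :=
    ((commE R.commR1).pow_right _).mul_right ((commE R.commR2).pow_right _)
  have cyy : Commute Y1 Y2 := R.YY
  have cY1 : Commute (Y1 ^ ε') ((Y1 + Y2) ^ a1 * (Y1 * Y2) ^ a2) :=
    ((((Commute.refl Y1).add_right cyy).pow_right _).mul_right
      (((Commute.refl Y1).mul_right cyy).pow_right _)).pow_left _
  generalize (X1 + X2) ^ b1 * (X1 * X2) ^ b2 = p at *
  generalize (Y1 + Y2) ^ a1 * (Y1 * Y2) ^ a2 = r at *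
  calc _ = (E t T * p) * X1 ^ ε * h * (r * Y1 ^ ε') * E t T := by simp only [mul_assoc]
    _ = p * E t T * X1 ^ ε * h * (Y1 ^ ε' * (r * E t T)) := by
      rw [cX.eq, ← cY1.eq]; simp only [mul_assoc]
    _ = _ := by rw [← cY.eq]; simp only [mul_assoc]

include ht ht2 in
theorem image_core (M N b1 b2 ε a1 a2 ε' : ℕ) (h : A) (hh : h = 1 ∨ h = E t T)
    (hε : ε ≤ 1) (hε' : ε' ≤ 1) (hN : b1 + 2 * b2 + ε = N) (hM : a1 + 2 * a2 + ε' = M) :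
    E t T * (((X1 + X2) ^ b1 * (X1 * X2) ^ b2 * X1 ^ ε * h *
      ((Y1 + Y2) ^ a1 * (Y1 * Y2) ^ a2 * Y1 ^ ε')) * E t T) ∈
      span ℂ (basSet t T X1 X2 Y1 Y2 M N) := by
  rw [R.sandwich b1 b2 ε a1 a2 ε' h]
  have EE := R.EE ht ht2
  have EX := R.EX1E ht ht2
  have EY := R.EY1E ht ht2
  have cP1 : Commute (X1 + X2) ((X1 * X2) ^ b2) := by
    have hc : Commute X1 X2 := R.XX
    have c2 : Commute X1 (X1 * X2) := (Commute.refl X1).mul_right hc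
    exact (c2.add_left ((hc.symm).mul_right (Commute.refl X2))).pow_right _
  have key : ∀ i j : ℕ, i + b1 + 2 * b2 = N → j + a1 + 2 * a2 = M →
      (X1 + X2) ^ b1 * (X1 * X2) ^ b2 * ((X1 + X2) ^ i * E t T * (Y1 + Y2) ^ j) *
      ((Y1 + Y2) ^ a1 * (Y1 * Y2) ^ a2) ∈ span ℂ (basSet t T X1 X2 Y1 Y2 M N) := by
    intro i j hi hj
    refine subset_span ⟨j + a1, a2, b1 + i, b2, 0, by omega, by omega, by omega, ?_⟩
    rw [bas, pow_zero, pow_zero, mul_one, mul_one, EE, pow_add, pow_add, mul_assoc (_ ^ b1) (_ ^ i),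
      (cP1.pow_left i).eq]
    simp only [mul_assoc]
  interval_cases ε <;> interval_cases ε'
  · have : E t T * X1 ^ 0 * h * Y1 ^ 0 * E t T = (X1 + X2) ^ 0 * E t T * (Y1 + Y2) ^ 0 := by
      rcases hh with rfl | rfl <;> simp [EE]
    rw [this]; exact key 0 0 (by omega) (by omega)
  · have : E t T * X1 ^ 0 * h * Y1 ^ 1 * E t T =
        (t ^ 2 * (1 + t ^ 2)⁻¹) • ((X1 + X2) ^ 0 * E t T * (Y1 + Y2) ^ 1) := by
      rcases hh with rfl | rfl <;> simp [EE, EY]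
    rw [this, mul_smul_comm, smul_mul_assoc]; exact smul_mem _ _ (key 0 1 (by omega) (by omega))
  · have : E t T * X1 ^ 1 * h * Y1 ^ 0 * E t T =
        (1 + t ^ 2)⁻¹ • ((X1 + X2) ^ 1 * E t T * (Y1 + Y2) ^ 0) := by
      rcases hh with rfl | rfl
      · simp [EX]
      · simp only [pow_zero, pow_one, mul_one, mul_assoc, EE]; rw [← mul_assoc, EX]
    rw [this, mul_smul_comm, smul_mul_assoc]; exact smul_mem _ _ (key 1 0 (by omega) (by omega))
  · rcases hh with rfl | rfl
    · refine subset_span ⟨a1, a2, b1, b2, 1, le_rfl, by omega, by omega, ?_⟩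
      rw [bas, mul_one]
    · have : E t T * X1 ^ 1 * E t T * Y1 ^ 1 * E t T =
        ((1 + t ^ 2)⁻¹ * (t ^ 2 * (1 + t ^ 2)⁻¹)) • ((X1 + X2) ^ 1 * E t T * (Y1 + Y2) ^ 1) := by
        simp only [pow_one]
        rw [EX, smul_mul_assoc, smul_mul_assoc, mul_assoc, mul_assoc, ← mul_assoc (E t T), EY,
          mul_smul_comm, smul_smul, mul_assoc]
      rw [this, mul_smul_comm, smul_mul_assoc]; exact smul_mem _ _ (key 1 1 (by omega) (by omega))

include ht ht2 in
theorem image_le (M N : ℕ) (z : A)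
    (hz : z ∈ span ℂ {X1, X2} ^ N * span ℂ ({1, T} : Set A) * span ℂ {Y1, Y2} ^ M) :
    E t T * (z * E t T) ∈ span ℂ (basSet t T X1 X2 Y1 Y2 M N) := by
  have h1 : span ℂ {X1, X2} ^ N * span ℂ ({1, T} : Set A) * span ℂ {Y1, Y2} ^ M ≤
      span ℂ (stdSet X1 X2 N) * span ℂ {1, E t T} * span ℂ (stdSet Y1 Y2 M) :=
    mul_le_mul' (mul_le_mul' (pow_le_std R.XX N) (R.H_le ht ht2)) (pow_le_std R.YY M)
  replace hz := h1 hz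
  rw [span_mul_span, span_mul_span] at hz
  induction hz using Submodule.span_induction with
  | mem x hx =>
    obtain ⟨u, hu, v, hv, rfl⟩ := Set.mem_mul.mp hx
    obtain ⟨a, ha, h, hh, rfl⟩ := Set.mem_mul.mp hu
    obtain ⟨b1, b2, ε, hε, hN, rfl⟩ := ha
    obtain ⟨a1, a2, ε', hε', hM, rfl⟩ := hv
    exact R.image_core ht ht2 M N b1 b2 ε a1 a2 ε' h hh hε hε' hN hM
  | zero => simp
  | add x y _ _ hx hy => rw [add_mul, mul_add]; exact add_mem hx hy
  | smul c x _ hx => rw [smul_mul_assoc, mul_smul_comm]; exact smul_mem _ _ hx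

end
end PRels

theorem word_mem {q t : ℂ} (R : PRels q t (T q t) (Ti q t) (X1 q t) (X2 q t) (Y1 q t) (Y2 q t))
    (w : List DGen) (hw : ∀ s ∈ w, hPlusGen s) :
    (w.map (genD q t)).prod ∈ Submodule.span ℂ {X1 q t, X2 q t} ^ (w.map hDeg2).sum *
      Submodule.span ℂ {1, T q t} * Submodule.span ℂ {Y1 q t, Y2 q t} ^ (w.map hDeg1).sum := by
  induction w with
  | nil =>
    simp only [List.map_nil, List.prod_nil, List.sum_nil, pow_zero, one_mul, mul_one]
    exact R.one_mem'
  | cons s w ih =>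
    have ih' := ih (fun s hs => hw s (List.mem_cons_of_mem _ hs))
    have hs := hw s List.mem_cons_self
    simp only [List.map_cons, List.prod_cons, List.sum_cons]
    have hx1 : X1 q t ∈ Submodule.span ℂ {X1 q t, X2 q t} := Submodule.subset_span (by simp)
    have hx2 : X2 q t ∈ Submodule.span ℂ {X1 q t, X2 q t} := Submodule.subset_span (by simp)
    have hy1 : Y1 q t ∈ Submodule.span ℂ {Y1 q t, Y2 q t} := Submodule.subset_span (by simp)
    have hy2 : Y2 q t ∈ Submodule.span ℂ {Y1 q t, Y2 q t} := Submodule.subset_span (by simp)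
    cases s <;> simp only [hPlusGen] at hs <;>
      simp only [hDeg1, hDeg2, zero_add, add_comm 1]
    · exact R.H_tri _ _ (Submodule.mul_mem_mul R.T_mem ih')
    · exact R.H_tri _ _ (Submodule.mul_mem_mul R.Ti_mem ih')
    · exact R.P_tri _ _ (Submodule.mul_mem_mul hx1 ih')
    · exact R.P_tri _ _ (Submodule.mul_mem_mul hx2 ih')
    · exact R.Q_tri _ _ (Submodule.mul_mem_mul hy1 ih')
    · exact R.Q_tri _ _ (Submodule.mul_mem_mul hy2 ih')

theorem hPiece_mul {q t : ℂ} {M N M' N' : ℕ} {a b : DAHA q t} (ha : a ∈ hPiece q t M N)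
    (hb : b ∈ hPiece q t M' N') : a * b ∈ hPiece q t (M + M') (N + N') := by
  have : hPiece q t M N * hPiece q t M' N' ≤ hPiece q t (M + M') (N + N') := by
    rw [hPiece, hPiece, Submodule.span_mul_span, Submodule.span_le]
    rintro _ ⟨_, ⟨w, h1, h2, h3, rfl⟩, _, ⟨w', h1', h2', h3', rfl⟩, rfl⟩
    refine Submodule.subset_span ⟨w ++ w', ?_, ?_, ?_, ?_⟩
    · intro s hs
      rcases List.mem_append.mp hs with h | h
      exacts [h1 s h, h1' s h]
    · simp [h2, h2']
    · simp [h3, h3']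
    · simp
  exact this (Submodule.mul_mem_mul ha hb)

theorem hPiece_one {q t : ℂ} : (1 : DAHA q t) ∈ hPiece q t 0 0 :=
  Submodule.subset_span ⟨[], by simp, by simp, by simp, by simp⟩

theorem hPiece_pow {q t : ℂ} {M N : ℕ} {a : DAHA q t} (ha : a ∈ hPiece q t M N) (n : ℕ) :
    a ^ n ∈ hPiece q t (n * M) (n * N) := by
  induction n with
  | zero => simpa using hPiece_one
  | succ n ih =>
    have := hPiece_mul ih ha
    rw [← pow_succ] at this
    rwa [add_mul, add_mul, one_mul, one_mul]

theorem hPiece_gen {q t : ℂ} (s : DGen) (hs : hPlusGen s) :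
    genD q t s ∈ hPiece q t (hDeg1 s) (hDeg2 s) :=
  Submodule.subset_span ⟨[s], by simpa using hs, by simp, by simp, by simp⟩

theorem piece_image (q t : ℂ) (ht : t ≠ 0) (ht2 : 1 + t ^ 2 ≠ 0) (M N : ℕ) :
    Submodule.map
          ((LinearMap.mulLeft ℂ (eSym q t)).comp (LinearMap.mulRight ℂ (eSym q t)))
          (hPiece q t M N) =
    Submodule.span ℂ (PRels.basSet t (T q t) (X1 q t) (X2 q t) (Y1 q t) (Y2 q t) M N) := by
  have R := daha_prels q t ht
  apply le_antisymm
  · rw [Submodule.map_le_iff_le_comap, hPiece, Submodule.span_le]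
    rintro _ ⟨w, hw, rfl, rfl, rfl⟩
    exact R.image_le ht ht2 _ _ _ (word_mem R w hw)
  · rw [Submodule.span_le]
    rintro _ ⟨a1, a2, b1, b2, ε, hε, hM, hN, rfl⟩
    refine ⟨(X1 q t + X2 q t) ^ b1 * (X1 q t * X2 q t) ^ b2 * X1 q t ^ ε * 1 *
      ((Y1 q t + Y2 q t) ^ a1 * (Y1 q t * Y2 q t) ^ a2 * Y1 q t ^ ε), ?_, ?_⟩
    · have hx1 : X1 q t ∈ hPiece q t 0 1 := hPiece_gen .X1 trivial
      have hx2 : X2 q t ∈ hPiece q t 0 1 := hPiece_gen .X2 trivial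
      have hy1 : Y1 q t ∈ hPiece q t 1 0 := hPiece_gen .Y1 trivial
      have hy2 : Y2 q t ∈ hPiece q t 1 0 := hPiece_gen .Y2 trivial
      have := hPiece_mul (hPiece_mul (hPiece_mul (hPiece_mul (hPiece_pow (add_mem hx1 hx2) b1)
        (hPiece_pow (hPiece_mul hx1 hx2) b2)) (hPiece_pow hx1 ε)) hPiece_one)
        (hPiece_mul (hPiece_mul (hPiece_pow (add_mem hy1 hy2) a1)
        (hPiece_pow (hPiece_mul hy1 hy2) a2)) (hPiece_pow hy1 ε))
      show _ ∈ hPiece q t M N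
      convert this using 2 <;> omega
    · have := R.sandwich b1 b2 ε a1 a2 ε 1
      rw [PRels.bas]
      rw [mul_one (PRels.E t (T q t) * X1 q t ^ ε)] at this
      exact this

section indep

variable {q : ℂ} (hq : q ≠ 0) {t : ℂ} (ht : t ≠ 0) (ht2 : 1 + t ^ 2 ≠ 0)

include ht in
theorem opTy_y2 (g : ℂ → ℂ → ℂ) : opT hq t (opPi hq t (fun p => g p.y1 p.y2)) =
    fun p => p.y1 * g p.y1 p.y2 := by
  ext p
  have h1 := p.hy12
  have h2 := p.hy21
  have h3 := p.hx12
  simp [opPi, opT_apply, opTy_apply, opR_apply, opM_apply]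
  field_simp
  ring

include ht in
theorem opPi_Ti (g : ℂ → ℂ → ℂ) : opPi hq t (opTi hq t (fun p => g p.y1 p.y2)) =
    fun p => p.y2 * g p.y1 p.y2 := by
  ext p
  have h1 := p.hy12
  have h2 := p.hy21
  have h3 := p.hx12
  simp [opPi, opTi, opT_apply, opTy_apply, opR_apply, opM_apply]
  field_simp
  ring

include ht in
theorem rep_r1 (g : ℂ → ℂ → ℂ) : rep hq ht (Y1 q t + Y2 q t) (fun p => g p.y1 p.y2) =
    fun p => (p.y1 + p.y2) * g p.y1 p.y2 := by
  rw [map_add, Y1, Y2, rep_gen, rep_gen]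
  simp only [repG, LinearMap.add_apply, Module.End.mul_apply]
  rw [opTy_y2 hq ht, opPi_Ti hq ht]
  ext p; simp [add_mul]

include ht in
theorem rep_r2 (g : ℂ → ℂ → ℂ) : rep hq ht (Y1 q t * Y2 q t) (fun p => g p.y1 p.y2) =
    fun p => (p.y1 * p.y2) * g p.y1 p.y2 := by
  rw [map_mul, Y1, Y2, rep_gen, rep_gen]
  simp only [repG, Module.End.mul_apply]
  rw [opPi_Ti hq ht, opTy_y2 hq ht (fun a b => b * g a b)]
  ext p; simp [mul_assoc]

theorem rep_r1_pow (n : ℕ) (g : ℂ → ℂ → ℂ) :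
    rep hq ht ((Y1 q t + Y2 q t) ^ n) (fun p => g p.y1 p.y2) =
    fun p => (p.y1 + p.y2) ^ n * g p.y1 p.y2 := by
  induction n generalizing g with
  | zero => simp
  | succ n ih =>
    rw [pow_succ, map_mul, Module.End.mul_apply, rep_r1, ih (fun a b => (a + b) * g a b)]
    ext p; ring

theorem rep_r2_pow (n : ℕ) (g : ℂ → ℂ → ℂ) :
    rep hq ht ((Y1 q t * Y2 q t) ^ n) (fun p => g p.y1 p.y2) =
    fun p => (p.y1 * p.y2) ^ n * g p.y1 p.y2 := by
  induction n generalizing g with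
  | zero => simp
  | succ n ih =>
    rw [pow_succ, map_mul, Module.End.mul_apply, rep_r2, ih (fun a b => (a * b) * g a b)]
    ext p; ring

theorem rep_p1 : rep hq ht (X1 q t + X2 q t) = opM (fun p => p.x1 + p.x2) := by
  rw [map_add, X1, X2, rep_gen, rep_gen]
  ext f p; simp [repG, opM_apply, add_mul]

theorem rep_p2 : rep hq ht (X1 q t * X2 q t) = opM (fun p => p.x1 * p.x2) := by
  rw [map_mul, X1, X2, rep_gen, rep_gen]
  simp only [repG]; rw [opM_mul]; rfl

theorem opM_pow (g : Om q → ℂ) (n : ℕ) : opM g ^ n = opM (g ^ n) := by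
  induction n with
  | zero => rw [pow_zero, pow_zero, opM_one]
  | succ n ih => rw [pow_succ, pow_succ, ih, opM_mul]

theorem rep_E (f : Om q → ℂ) : rep hq ht (PRels.E t (T q t)) f =
    fun p => (1 + t ^ 2)⁻¹ * (f p + t * opT hq t f p) := by
  rw [PRels.E, T, map_smul, map_add, map_smul, map_one, rep_gen]
  ext p; simp [repG]; ring

include ht2 in
theorem rep_E_sym (g : ℂ → ℂ → ℂ) (hg : ∀ a b, g a b = g b a) :
    rep hq ht (PRels.E t (T q t)) (fun p => g p.y1 p.y2) = fun p => g p.y1 p.y2 := by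
  rw [rep_E]
  ext p
  simp [opT_apply, opTy_apply, hg p.y2 p.y1]
  field_simp

include ht2 in
theorem rep_E_xy (g : ℂ → ℂ → ℂ) (hg : ∀ a b, g a b = g b a) :
    rep hq ht (PRels.E t (T q t)) (fun p => p.x1 * (p.y1 * g p.y1 p.y2)) =
    fun p => (1 + t ^ 2)⁻¹ * (p.x1 * p.y1 + t ^ 2 * (p.x2 * p.y2)) * g p.y1 p.y2 := by
  rw [rep_E]
  ext p
  have h1 := p.hy12
  have h2 := p.hy21
  have h3 := p.hx12
  simp [opT_apply, opTy_apply, hg p.y2 p.y1]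
  field_simp
  ring

/-- symmetric part of the basis functions -/
def symF (a1 a2 b1 b2 : ℕ) (p : Om q) : ℂ :=
  (p.x1 + p.x2) ^ b1 * (p.x1 * p.x2) ^ b2 * ((p.y1 + p.y2) ^ a1 * (p.y1 * p.y2) ^ a2)

def GF (t : ℂ) (ε : ℕ) (p : Om q) : ℂ :=
  if ε = 0 then 1 else (1 + t ^ 2)⁻¹ * (p.x1 * p.y1 + t ^ 2 * (p.x2 * p.y2))

include ht2 in
theorem rep_bas (a1 a2 b1 b2 ε : ℕ) (hε : ε ≤ 1) :
    rep hq ht (PRels.bas t (T q t) (X1 q t) (X2 q t) (Y1 q t) (Y2 q t) a1 a2 b1 b2 ε) (fun _ => 1)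
    = fun p => symF a1 a2 b1 b2 p * GF t ε p := by
  let g : ℂ → ℂ → ℂ := fun a b => (a + b) ^ a1 * (a * b) ^ a2
  have hg : ∀ a b, g a b = g b a := fun a b => by simp only [g]; ring
  have e1 : rep hq ht ((Y1 q t + Y2 q t) ^ a1 * (Y1 q t * Y2 q t) ^ a2) (fun _ => 1) =
      fun p => g p.y1 p.y2 := by
    rw [map_mul, Module.End.mul_apply, rep_r2_pow hq ht a2 (fun _ _ => 1),
      rep_r1_pow hq ht a1 (fun a b => (a * b) ^ a2 * 1)]
    ext p; simp [g]
  have e2 : rep hq ht (PRels.E t (T q t) * X1 q t ^ ε * Y1 q t ^ ε * PRels.E t (T q t))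
      (fun p => g p.y1 p.y2) = fun p => GF t ε p * g p.y1 p.y2 := by
    rw [map_mul, map_mul, map_mul, Module.End.mul_apply, Module.End.mul_apply, Module.End.mul_apply,
      rep_E_sym hq ht ht2 g hg]
    interval_cases ε
    · simp only [pow_zero, map_one, Module.End.one_apply]
      rw [rep_E_sym hq ht ht2 g hg]; ext p; simp [GF]
    · simp only [pow_one]
      rw [X1, Y1, rep_gen, rep_gen]
      simp only [repG, Module.End.mul_apply]
      rw [opTy_y2 hq ht]
      have : opM (fun p : Om q => p.x1) (fun p => p.y1 * g p.y1 p.y2) =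
        fun p => p.x1 * (p.y1 * g p.y1 p.y2) := rfl
      rw [this, rep_E_xy hq ht ht2 g hg]
      ext p; simp [GF]
  rw [PRels.bas, map_mul, Module.End.mul_apply, e1, map_mul, Module.End.mul_apply, e2, map_mul,
    map_pow, map_pow, rep_p1, rep_p2, opM_pow, opM_pow, opM_mul]
  ext p
  simp [opM_apply, symF, g]
  ring

end indep

theorem coeff_zero {I : Type*} [Fintype I] (c : I → ℂ) (n : I → ℕ) (Z : Set ℂ) (hZ : Z.Infinite)
    (h : ∀ z ∈ Z, ∑ i, c i * z ^ n i = 0) (β : ℕ) : ∑ i, (if n i = β then c i else 0) = 0 := by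
  classical
  let P : Polynomial ℂ := ∑ i, Polynomial.monomial (n i) (c i)
  have hP : P = 0 := by
    apply Polynomial.eq_zero_of_infinite_isRoot
    refine hZ.mono ?_
    intro z hz
    simp only [Set.mem_setOf_eq, Polynomial.IsRoot, P, Polynomial.eval_finset_sum,
      Polynomial.eval_monomial]
    exact h z hz
  have := congrArg (fun p => Polynomial.coeff p β) hP
  simpa [P, Polynomial.finset_sum_coeff, Polynomial.coeff_monomial] using this

def okSet (q : ℂ) : Set ℂ := {u | u ≠ 0 ∧ u ≠ 1 ∧ ∀ k : ℤ, u ≠ (q ^ 2) ^ k * (1 - u)}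

theorem okSet_infinite (q : ℂ) : ((fun u : ℂ => u * (1 - u)) '' okSet q).Infinite := by
  intro hfin
  have h1 : ((fun u : ℂ => u * (1 - u)) ⁻¹' ((fun u : ℂ => u * (1 - u)) '' okSet q)).Finite := by
    refine hfin.preimage' ?_
    rintro _ ⟨u, _, rfl⟩
    refine (Set.toFinite {u, 1 - u}).subset ?_
    intro v hv
    simp only [Set.mem_preimage, Set.mem_singleton_iff] at hv
    have : (v - u) * (v - (1 - u)) = 0 := by linear_combination -hv
    rcases mul_eq_zero.mp this with h | h
    · left; exact sub_eq_zero.mp h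
    · right; exact sub_eq_zero.mp h
  have h2 : (okSet q).Countable := (h1.subset (Set.subset_preimage_image _ _)).countable
  have h3 : ((okSet q)ᶜ).Countable := by
    have : (okSet q)ᶜ ⊆ {0, 1} ∪ ⋃ k : ℤ, {u : ℂ | u = (q ^ 2) ^ k * (1 - u)} := by
      intro u hu
      simp only [okSet, Set.mem_compl_iff, Set.mem_setOf_eq] at hu
      simp only [Set.mem_union, Set.mem_insert_iff, Set.mem_singleton_iff, Set.mem_iUnion,
        Set.mem_setOf_eq]
      by_contra hc
      push Not at hc
      exact hu ⟨hc.1.1, hc.1.2, hc.2⟩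
    refine Set.Countable.mono this ?_
    refine ((Set.toFinite _).countable).union (Set.countable_iUnion fun k => ?_)
    refine Set.Subsingleton.countable ?_
    intro u hu v hv
    simp only [Set.mem_setOf_eq] at hu hv
    generalize (q ^ 2) ^ k = c at *
    have h : (u - v) * (1 + c) = 0 := by linear_combination hu - hv
    rcases mul_eq_zero.mp h with h | h
    · exact sub_eq_zero.mp h
    · exfalso
      have hc : c = -1 := by linear_combination h
      rw [hc] at hu
      have : (1 : ℂ) = 0 := by linear_combination hu
      exact one_ne_zero this
  have h4 := h2.union h3
  rw [Set.union_compl_self] at h4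
  exact not_countable_complex h4

def mkPt {q : ℂ} (u w : ℂ) (hu : u ∈ okSet q) (hw : w ∈ okSet q) : Om q where
  x1 := u
  x2 := 1 - u
  y1 := w
  y2 := 1 - w
  hx1 := hu.1
  hx2 := sub_ne_zero.mpr hu.2.1.symm
  hy1 := hw.1
  hy2 := sub_ne_zero.mpr hw.2.1.symm
  hx := hu.2.2
  hy := by simpa using hw.2.2 0

theorem sym_indep {q : ℂ} {I : Type*} [Fintype I] (a1 a2 b1 b2 : I → ℕ) (c : I → ℂ)
    (h : ∀ p : Om q, ∑ i, c i * symF (a1 i) (a2 i) (b1 i) (b2 i) p = 0) (α β : ℕ) :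
    ∑ i, (if a2 i = α ∧ b2 i = β then c i else 0) = 0 := by
  have h1 : ∀ w ∈ (fun u : ℂ => u * (1 - u)) '' okSet q,
      ∑ i, (if b2 i = β then c i else 0) * w ^ a2 i = 0 := by
    rintro _ ⟨w, hw, rfl⟩
    have := coeff_zero (fun i => c i * (w * (1 - w)) ^ a2 i) b2 _ (okSet_infinite q) (by
      rintro _ ⟨u, hu, rfl⟩
      have := h (mkPt u w hu hw)
      simp only [symF, mkPt, add_sub_cancel, one_pow, one_mul] at this
      refine Eq.trans (Finset.sum_congr rfl fun i _ => ?_) this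
      ring) β
    refine Eq.trans (Finset.sum_congr rfl fun i _ => ?_) this
    split_ifs <;> simp
  have h2 := coeff_zero _ a2 _ (okSet_infinite q) h1 α
  refine Eq.trans (Finset.sum_congr rfl fun i _ => ?_) h2
  rw [ite_and]

theorem alt_GF {q t : ℂ} (hq : q ≠ 0) (ht2 : 1 + t ^ 2 ≠ 0) (ε : ℕ) (p : Om q) :
    GF t ε p - GF t ε (p.sx hq) - GF t ε p.sy + GF t ε (p.sy.sx hq) =
      if ε = 0 then 0 else (p.x1 - p.x2) * (p.y1 - p.y2) := by
  simp only [GF]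
  split_ifs
  · ring
  · simp
    field_simp
    ring

theorem symF_sx {q : ℂ} (hq : q ≠ 0) (a1 a2 b1 b2 : ℕ) (p : Om q) :
    symF a1 a2 b1 b2 (p.sx hq) = symF a1 a2 b1 b2 p := by
  simp only [symF, Om.sx_x1, Om.sx_x2, Om.sx_y1, Om.sx_y2]; ring
theorem symF_sy {q : ℂ} (a1 a2 b1 b2 : ℕ) (p : Om q) :
    symF a1 a2 b1 b2 (p.sy) = symF a1 a2 b1 b2 p := by
  simp only [symF, Om.sy_x1, Om.sy_x2, Om.sy_y1, Om.sy_y2]; ring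

theorem fun_indep {q t : ℂ} (hq : q ≠ 0) (ht2 : 1 + t ^ 2 ≠ 0)
    {I : Type*} [Fintype I] (a1 a2 b1 b2 ε : I → ℕ) (hε : ∀ i, ε i ≤ 1)
    (inj : ∀ i j, a2 i = a2 j → b2 i = b2 j → ε i = ε j → i = j) :
    LinearIndependent ℂ (fun i => (fun p : Om q => symF (a1 i) (a2 i) (b1 i) (b2 i) p * GF t (ε i) p)) := by
  rw [Fintype.linearIndependent_iff]
  intro c hc
  have h0 : ∀ p : Om q, ∑ i, c i * (symF (a1 i) (a2 i) (b1 i) (b2 i) p * GF t (ε i) p) = 0 := by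
    intro p
    have := congrFun hc p
    simpa [Finset.sum_apply] using this
  have h1 : ∀ p : Om q, ∑ i, (if ε i = 0 then 0 else c i) * symF (a1 i) (a2 i) (b1 i) (b2 i) p = 0 := by
    intro p
    have hne : (p.x1 - p.x2) * (p.y1 - p.y2) ≠ 0 := mul_ne_zero p.hx12 p.hy12
    have e : ∑ i, (if ε i = 0 then 0 else c i) * symF (a1 i) (a2 i) (b1 i) (b2 i) p *
        ((p.x1 - p.x2) * (p.y1 - p.y2)) = 0 := by
      have : (∑ i, c i * (symF (a1 i) (a2 i) (b1 i) (b2 i) p * GF t (ε i) p))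
        - (∑ i, c i * (symF (a1 i) (a2 i) (b1 i) (b2 i) (p.sx hq) * GF t (ε i) (p.sx hq)))
        - (∑ i, c i * (symF (a1 i) (a2 i) (b1 i) (b2 i) p.sy * GF t (ε i) p.sy))
        + (∑ i, c i * (symF (a1 i) (a2 i) (b1 i) (b2 i) (p.sy.sx hq) * GF t (ε i) (p.sy.sx hq)))
        = 0 := by simp only [h0]; simp
      rw [← Finset.sum_sub_distrib, ← Finset.sum_sub_distrib, ← Finset.sum_add_distrib] at this
      refine Eq.trans (Finset.sum_congr rfl fun i _ => ?_) this
      rw [symF_sx, symF_sx, symF_sy]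
      have hG := alt_GF hq ht2 (ε i) p
      split_ifs at hG ⊢
      · linear_combination -(c i * symF (a1 i) (a2 i) (b1 i) (b2 i) p) * hG
      · linear_combination -(c i * symF (a1 i) (a2 i) (b1 i) (b2 i) p) * hG
    rw [← Finset.sum_mul] at e
    exact (mul_eq_zero.mp e).resolve_right hne
  have h2 : ∀ p : Om q, ∑ i, (if ε i = 0 then c i else 0) * symF (a1 i) (a2 i) (b1 i) (b2 i) p = 0 := by
    intro p
    have e : (∑ i, c i * (symF (a1 i) (a2 i) (b1 i) (b2 i) p * GF t (ε i) p)) =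
      ∑ i, (if ε i = 0 then c i else 0) * symF (a1 i) (a2 i) (b1 i) (b2 i) p +
      (∑ i, (if ε i = 0 then 0 else c i) * symF (a1 i) (a2 i) (b1 i) (b2 i) p) * GF t 1 p := by
      rw [Finset.sum_mul, ← Finset.sum_add_distrib]
      refine Finset.sum_congr rfl fun i _ => ?_
      rcases Nat.le_one_iff_eq_zero_or_eq_one.mp (hε i) with h | h
      · simp [h, GF]
      · simp [h]; ring
    rw [h0, h1, zero_mul, add_zero] at e
    exact e.symm
  intro i
  by_cases hi : ε i = 0
  · have := sym_indep a1 a2 b1 b2 _ h2 (a2 i) (b2 i)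
    rw [Finset.sum_eq_single i] at this
    · simpa [hi] using this
    · intro j _ hj
      by_cases hj2 : a2 j = a2 i ∧ b2 j = b2 i
      · rw [if_pos hj2, if_neg]
        intro hj3
        exact hj (inj j i hj2.1 hj2.2 (by rw [hj3, hi]))
      · rw [if_neg hj2]
    · simp
  · have := sym_indep a1 a2 b1 b2 _ h1 (a2 i) (b2 i)
    rw [Finset.sum_eq_single i] at this
    · simpa [hi] using this
    · intro j _ hj
      by_cases hj2 : a2 j = a2 i ∧ b2 j = b2 i
      · rw [if_pos hj2, if_pos]
        by_contra hj3
        have := hε i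
        have := hε j
        exact hj (inj j i hj2.1 hj2.2 (by omega))
      · rw [if_neg hj2]
    · simp


/-- For every `(M,N) ∈ ℕ₀²`, the ℂ-dimension of the degree-`(M,N)`
graded piece of `eH⁺_{t,q}e` (the image under `x ↦ e·x·e` of the degree-`(M,N)`
graded piece of `H⁺_{t,q}`) equals the number of tuples
`(a₁, a₂, b₁, b₂, ε) ∈ ℕ₀⁴ × {0,1}` with `a₁ + 2a₂ + ε = M` and `b₁ + 2b₂ + ε = N`. -/
theorem stmt9 (q t : ℂ) (hq : q ≠ 0) (ht : t ≠ 0) (ht2 : t ^ 2 ≠ -1) :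
    ∀ M N : ℕ,
      Module.rank ℂ
        (Submodule.map
          ((LinearMap.mulLeft ℂ (eSym q t)).comp (LinearMap.mulRight ℂ (eSym q t)))
          (hPiece q t M N))
        = Nat.card {x : ℕ × ℕ × ℕ × ℕ × Fin 2 //
            x.1 + 2 * x.2.1 + (x.2.2.2.2 : ℕ) = M ∧
            x.2.2.1 + 2 * x.2.2.2.1 + (x.2.2.2.2 : ℕ) = N} := by
  intro M N
  have ht2' : 1 + t ^ 2 ≠ 0 := fun h => ht2 (by linear_combination h)
  rw [piece_image q t ht ht2' M N]
  set I := {x : ℕ × ℕ × ℕ × ℕ × Fin 2 //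
            x.1 + 2 * x.2.1 + (x.2.2.2.2 : ℕ) = M ∧
            x.2.2.1 + 2 * x.2.2.2.1 + (x.2.2.2.2 : ℕ) = N} with hI
  have hfin : Finite I := by
    let f : I → Fin (M + 1) × Fin (N + 1) × Fin 2 := fun x =>
      (⟨x.1.2.1, by have := x.2.1; omega⟩, ⟨x.1.2.2.2.1, by have := x.2.2; omega⟩, x.1.2.2.2.2)
    refine Finite.of_injective f ?_
    rintro ⟨⟨a1, a2, b1, b2, e⟩, h1, h2⟩ ⟨⟨a1', a2', b1', b2', e'⟩, h1', h2'⟩ h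
    simp only [f, Prod.mk.injEq, Fin.mk.injEq] at h
    obtain ⟨rfl, rfl, rfl⟩ := h
    apply Subtype.ext
    simp only [Prod.mk.injEq, and_true, true_and]
    dsimp only at h1 h2 h1' h2'
    omega
  have := Fintype.ofFinite I
  let v : I → DAHA q t := fun x =>
    PRels.bas t (T q t) (X1 q t) (X2 q t) (Y1 q t) (Y2 q t) x.1.1 x.1.2.1 x.1.2.2.1 x.1.2.2.2.1
      (x.1.2.2.2.2 : ℕ)
  have hv : LinearIndependent ℂ v := by
    let L : DAHA q t →ₗ[ℂ] (Om q → ℂ) :=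
      (LinearMap.applyₗ (fun _ => (1 : ℂ))).comp (rep hq ht).toLinearMap
    apply LinearIndependent.of_comp L
    have hLv : L ∘ v = fun x : I => (fun p : Om q =>
        symF x.1.1 x.1.2.1 x.1.2.2.1 x.1.2.2.2.1 p * GF t (x.1.2.2.2.2 : ℕ) p) := by
      funext x
      exact rep_bas hq ht ht2' _ _ _ _ _ (by omega)
    rw [hLv]
    refine fun_indep hq ht2' (fun x : I => x.1.1) (fun x => x.1.2.1) (fun x => x.1.2.2.1)
      (fun x => x.1.2.2.2.1) (fun x => (x.1.2.2.2.2 : ℕ)) (fun i => by omega) ?_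
    rintro ⟨⟨a1, a2, b1, b2, e⟩, h1, h2⟩ ⟨⟨a1', a2', b1', b2', e'⟩, h1', h2'⟩ h3 h4 h5
    dsimp only at h1 h2 h1' h2' h3 h4 h5
    apply Subtype.ext
    simp only [Prod.mk.injEq, Fin.ext_iff]
    omega
  have hr : PRels.basSet t (T q t) (X1 q t) (X2 q t) (Y1 q t) (Y2 q t) M N = Set.range v := by
    ext z
    constructor
    · rintro ⟨a1, a2, b1, b2, ε, hε, hM, hN, rfl⟩
      exact ⟨⟨(a1, a2, b1, b2, ⟨ε, by omega⟩), hM, hN⟩, rfl⟩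
    · rintro ⟨⟨⟨a1, a2, b1, b2, e⟩, h1, h2⟩, rfl⟩
      exact ⟨a1, a2, b1, b2, e, by omega, h1, h2, rfl⟩
  rw [hr, rank_span hv, Cardinal.mk_range_eq v hv.injective, Nat.cast_card]
end
end
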